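/- For all positive constants μ, κ, R, c_v and all M, m > 0 and K ≥ 1 there exists a constant C > 0, depending only on μ, κ, R, c_v, M, m, K, such that: whenever (v,u,θ) is a classical solution of the one-dimensional compressible Navier–Stokes system on ℝ whose initial data are (M,m)-bounded and which is K-volume-bounded, then for every T > 0: sup_{0 ≤ t ≤ T} ∫_ℝ θ_x(x,t)² dx + ∫₀^T ∫_ℝ θ_{xx}(x,t)² dx dt ≤ C + C · ( sup_{(x,t) ∈ ℝ × [0,T]} θ(x,t) )³. -/

import Mathlib

/-!
A chain of energy estimates bounds `θ_x` and `θ_xx`. All constants depend only on the parameters,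
and `Θ ≥ 1` denotes an upper bound of `θ` on `ℝ × [0, T]`.

* Relative entropy: `u²`, `θ - log θ - 1` are bounded in `L^∞(L¹)`, and `(θ_x/θ)²`, `u_x²/θ` in
  `L¹(L¹)` (`exists_energy_const`).
* High temperatures are measured by `cut θ = max (θ - 2) 0` and `rr θ = cut θ / θ`. The entropy
  bounds give `∫ cut θ ≤ C` and `∫∫ (θ rr²)² ≤ C` (`exists_aux_const`). Testing the energy equation
  with functions of `θ` that vanish for `θ ≤ 2` then yields `∫∫ u_x² ≤ C` (`exists_ux_const`) and
  `∫∫ θ_x² ≤ C Θ` (`exists_θx_const`).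
* The effective momentum `μ (log v)_x - u` has time derivative `R (θ/v)_x`; its `L²` balance yields
  `∫ v_x² ≤ C Θ` and `∫∫ θ v_x² ≤ C Θ` (`NSFlow.exists_vx_const`).
* Testing the momentum equation with `u_xx` gives `∫ u_x² + ∫∫ u_xx² ≤ C Θ²`
  (`NSFlow.exists_uxx_const`). The critical term `∫∫ (u_x v_x)²` is treated with the Agmon
  inequality `‖f‖_∞² ≤ ε⁻¹ ‖f‖² + ε ‖f_x‖²` with `ε` of order `Θ⁻¹` (`product_bound`).
* Testing the energy equation with `θ_xx` gives `∫ θ_x² + ∫∫ θ_xx² ≤ C Θ³`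
  (`NSFlow.exists_θxx_const`), the critical terms being `∫∫ (θ_x v_x)²` and `∫∫ u_x⁴`.

A classical solution is not assumed to have mixed derivatives such as `u_xt`, so the identities for
`∫ u_x²`, `∫ θ_x²` and `∫ (μ (log v)_x - u)²` are proved for difference quotients in `x` and passed
to the limit (`gradient_identity`, `effective_identity`). The positive lower bound of `θ` on
`ℝ × [0, T]` needed to justify the entropy computation is qualitative and never enters a constant
(`PreFlow.exists_low`).
-/

open MeasureTheory Filter Set

noncomputable section

/-- Partial derivative in the spatial variable. -/
def pdx (f : ℝ → ℝ → ℝ) (x t : ℝ) : ℝ := deriv (fun y => f y t) x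

/-- Partial derivative in the time variable. -/
def pdt (f : ℝ → ℝ → ℝ) (x t : ℝ) : ℝ := deriv (fun s => f x s) t

/-- The `L²(ℝ)` norm, valued in `ℝ≥0∞`. -/
def L2 (f : ℝ → ℝ) : ENNReal := eLpNorm f 2 volume

/-- The `H¹(ℝ)` norm, valued in `ℝ≥0∞`. -/
def H1 (f : ℝ → ℝ) : ENNReal := L2 f + L2 (deriv f)

/-- The `H²(ℝ)` norm, valued in `ℝ≥0∞`. -/
def H2 (f : ℝ → ℝ) : ENNReal := L2 f + L2 (deriv f) + L2 (deriv (deriv f))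

/-- A classical solution of the 1-D compressible Navier–Stokes system in Lagrangian
coordinates on `ℝ`, together with the regularity and far-field conditions. -/
structure IsClassicalSolution (μ κ R cv : ℝ) (v u θ : ℝ → ℝ → ℝ) : Prop where
  v_pos : ∀ x t : ℝ, 0 ≤ t → 0 < v x t
  θ_pos : ∀ x t : ℝ, 0 ≤ t → 0 < θ x t
  smooth_x_v : ∀ t : ℝ, 0 ≤ t → ContDiff ℝ 2 (fun x => v x t)
  smooth_x_u : ∀ t : ℝ, 0 ≤ t → ContDiff ℝ 2 (fun x => u x t)
  smooth_x_θ : ∀ t : ℝ, 0 ≤ t → ContDiff ℝ 2 (fun x => θ x t)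
  smooth_t_v : ∀ x t : ℝ, 0 ≤ t → DifferentiableAt ℝ (fun s => v x s) t
  smooth_t_u : ∀ x t : ℝ, 0 ≤ t → DifferentiableAt ℝ (fun s => u x s) t
  smooth_t_θ : ∀ x t : ℝ, 0 ≤ t → DifferentiableAt ℝ (fun s => θ x s) t
  eq_mass : ∀ x t : ℝ, 0 ≤ t → pdt v x t = pdx u x t
  eq_momentum : ∀ x t : ℝ, 0 ≤ t →
    pdt u x t + pdx (fun y s => R * θ y s / v y s) x t
      = μ * pdx (fun y s => pdx u y s / v y s) x t
  eq_energy : ∀ x t : ℝ, 0 ≤ t →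
    cv * pdt θ x t + (R * θ x t / v x t) * pdx u x t
      = κ * pdx (fun y s => pdx θ y s / v y s) x t + μ * (pdx u x t) ^ 2 / v x t
  reg_H1 : ∀ T : ℝ, 0 ≤ T → ∃ B : ℝ, ∀ t ∈ Icc (0 : ℝ) T,
    H1 (fun x => v x t - 1) + H1 (fun x => u x t) + H1 (fun x => θ x t - 1)
      ≤ ENNReal.ofReal B
  reg_H2 : ∀ T : ℝ, 0 < T →
    (∫⁻ t in Icc (0 : ℝ) T,
      (H2 (fun x => u x t) ^ 2 + H2 (fun x => θ x t - 1) ^ 2)) < ⊤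
  farfield_v : ∀ t : ℝ, 0 ≤ t → Tendsto (fun x => v x t) (cocompact ℝ) (nhds 1)
  farfield_u : ∀ t : ℝ, 0 ≤ t → Tendsto (fun x => u x t) (cocompact ℝ) (nhds 0)
  farfield_θ : ∀ t : ℝ, 0 ≤ t → Tendsto (fun x => θ x t) (cocompact ℝ) (nhds 1)

/-- The initial data of `(v, u, θ)` are `(M, m)`-bounded. -/
def InitBounded (M m : ℝ) (v u θ : ℝ → ℝ → ℝ) : Prop :=
  H1 (fun x => v x 0 - 1) + H1 (fun x => u x 0) + H1 (fun x => θ x 0 - 1)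
      ≤ ENNReal.ofReal M
    ∧ (∀ x : ℝ, m ≤ v x 0) ∧ (∀ x : ℝ, m ≤ θ x 0)

/-- The solution is `K`-volume-bounded. -/
def VolBounded (K : ℝ) (v : ℝ → ℝ → ℝ) : Prop :=
  ∀ x t : ℝ, 0 ≤ t → K⁻¹ ≤ v x t ∧ v x t ≤ K

end

/-! ### Square-integrable functions -/

section Generic

variable {α : Type*} [MeasurableSpace α] {ν : Measure α}

lemma int_mul {f g : α → ℝ} (hf : MemLp f 2 ν) (hg : MemLp g 2 ν) :
    Integrable (fun p => f p * g p) ν :=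
  MemLp.integrable_mul hf hg

lemma int_sq {f : α → ℝ} (hf : MemLp f 2 ν) : Integrable (fun p => f p ^ 2) ν :=
  hf.integrable_sq

lemma memLp_of_bound {f g : α → ℝ} (c : ℝ) (hg : MemLp g 2 ν) (hf : AEStronglyMeasurable f ν)
    (h : ∀ p, |f p| ≤ c * |g p|) : MemLp f 2 ν :=
  hg.of_le_mul hf (Eventually.of_forall fun p => by simpa [Real.norm_eq_abs] using h p)

lemma memLp_two_of_lintegral_le {f : α → ℝ} {c : ℝ} (hf : AEStronglyMeasurable f ν) (hc : 0 ≤ c)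
    (h : ∫⁻ p, ENNReal.ofReal (f p ^ 2) ∂ν ≤ ENNReal.ofReal c) :
    MemLp f 2 ν ∧ ∫ p, f p ^ 2 ∂ν ≤ c := by
  have hm : AEStronglyMeasurable (fun p => f p ^ 2) ν := hf.pow 2
  have hi : Integrable (fun p => f p ^ 2) ν := by
    refine ⟨hm, ?_⟩
    rw [hasFiniteIntegral_iff_ofReal (Eventually.of_forall fun p => sq_nonneg _)]
    exact lt_of_le_of_lt h ENNReal.ofReal_lt_top
  refine ⟨(memLp_two_iff_integrable_sq hf).2 hi, ?_⟩
  rw [← ENNReal.ofReal_le_ofReal_iff hc,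
    ofReal_integral_eq_lintegral_ofReal hi (Eventually.of_forall fun p => sq_nonneg _)]
  exact h

lemma int_comb {f₁ f₂ f₃ f₄ : α → ℝ} (c₁ c₂ c₃ c₄ : ℝ)
    (h₁ : Integrable f₁ ν) (h₂ : Integrable f₂ ν) (h₃ : Integrable f₃ ν) (h₄ : Integrable f₄ ν) :
    Integrable (fun p => c₁ * f₁ p + c₂ * f₂ p + c₃ * f₃ p + c₄ * f₄ p) ν :=
  (((h₁.const_mul _).add (h₂.const_mul _)).add (h₃.const_mul _)).add (h₄.const_mul _)

lemma integral_eq_comb {F f₁ f₂ f₃ f₄ : α → ℝ} (c₁ c₂ c₃ c₄ : ℝ)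
    (h₁ : Integrable f₁ ν) (h₂ : Integrable f₂ ν) (h₃ : Integrable f₃ ν) (h₄ : Integrable f₄ ν)
    (h : ∀ p, F p = c₁ * f₁ p + c₂ * f₂ p + c₃ * f₃ p + c₄ * f₄ p) :
    ∫ p, F p ∂ν = c₁ * ∫ p, f₁ p ∂ν + c₂ * ∫ p, f₂ p ∂ν + c₃ * ∫ p, f₃ p ∂ν
      + c₄ * ∫ p, f₄ p ∂ν := by
  have e : F = fun p => c₁ * f₁ p + c₂ * f₂ p + c₃ * f₃ p + c₄ * f₄ p := funext h
  have i₂ : Integrable (fun p => c₁ * f₁ p + c₂ * f₂ p) ν := (h₁.const_mul _).add (h₂.const_mul _)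
  have i₃ : Integrable (fun p => c₁ * f₁ p + c₂ * f₂ p + c₃ * f₃ p) ν := i₂.add (h₃.const_mul _)
  rw [e, integral_add i₃ (h₄.const_mul _), integral_add i₂ (h₃.const_mul _),
    integral_add (h₁.const_mul _) (h₂.const_mul _), integral_const_mul, integral_const_mul,
    integral_const_mul, integral_const_mul]

lemma integral_le_comb {F f₁ f₂ f₃ f₄ : α → ℝ} (c₁ c₂ c₃ c₄ : ℝ) (hF : Integrable F ν)
    (h₁ : Integrable f₁ ν) (h₂ : Integrable f₂ ν) (h₃ : Integrable f₃ ν) (h₄ : Integrable f₄ ν)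
    (h : ∀ p, F p ≤ c₁ * f₁ p + c₂ * f₂ p + c₃ * f₃ p + c₄ * f₄ p) :
    ∫ p, F p ∂ν ≤ c₁ * ∫ p, f₁ p ∂ν + c₂ * ∫ p, f₂ p ∂ν + c₃ * ∫ p, f₃ p ∂ν
      + c₄ * ∫ p, f₄ p ∂ν := by
  rw [← integral_eq_comb c₁ c₂ c₃ c₄ h₁ h₂ h₃ h₄ fun p => rfl]
  exact integral_mono hF (int_comb c₁ c₂ c₃ c₄ h₁ h₂ h₃ h₄) h

/-- Cauchy–Schwarz. -/
lemma sq_integral_mul_le {f g : α → ℝ} (hf : MemLp f 2 ν) (hg : MemLp g 2 ν) :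
    (∫ p, f p * g p ∂ν) ^ 2 ≤ (∫ p, f p ^ 2 ∂ν) * ∫ p, g p ^ 2 ∂ν := by
  have key : ∀ x : ℝ, 0 ≤ (∫ p, g p ^ 2 ∂ν) * (x * x) + (2 * ∫ p, f p * g p ∂ν) * x
      + ∫ p, f p ^ 2 ∂ν := by
    intro x
    have h0 : 0 ≤ ∫ p, (f p + x * g p) ^ 2 ∂ν := integral_nonneg fun p => sq_nonneg _
    rw [integral_eq_comb (x * x) (2 * x) 1 0 (int_sq hg) (int_mul hf hg) (int_sq hf) (int_sq hf)
      fun p => by ring] at h0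
    linarith
  have := discrim_le_zero key
  unfold discrim at this
  nlinarith

/-- Pointwise convergence without gain of norm is strong convergence: by Fatou's lemma
`4 ∫ a² ≤ lim inf ∫ (aₙ + a)²`, and the parallelogram identity bounds `∫ (aₙ - a)²`. -/
lemma strong_of_pointwise {a : ℕ → α → ℝ} {b : α → ℝ} (ha : ∀ n, MemLp (a n) 2 ν)
    (hb : MemLp b 2 ν) (hlim : ∀ p, Tendsto (fun n => a n p) atTop (nhds (b p)))
    (hma : ∀ n, Measurable (a n)) (hmb : Measurable b)
    (hle : ∀ n, ∫ p, a n p ^ 2 ∂ν ≤ ∫ p, b p ^ 2 ∂ν) :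
    Tendsto (fun n => ∫ p, (a n p - b p) ^ 2 ∂ν) atTop (nhds 0) := by
  have hadd : ∀ n, MemLp (fun p => a n p + b p) 2 ν := fun n => (ha n).add hb
  have hsub : ∀ n, MemLp (fun p => a n p - b p) 2 ν := fun n => (ha n).sub hb
  have hpar : ∀ n, ∫ p, (a n p - b p) ^ 2 ∂ν
      ≤ 4 * (∫ p, b p ^ 2 ∂ν) - ∫ p, (a n p + b p) ^ 2 ∂ν := by
    intro n
    have e := integral_le_comb (F := fun p => (a n p - b p) ^ 2) 2 2 (-1) 0 (int_sq (hsub n))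
      (int_sq (ha n)) (int_sq hb) (int_sq (hadd n)) (int_sq hb) (fun p => by ring_nf; rfl)
    have := hle n
    linarith
  have hfat : ENNReal.ofReal (4 * ∫ p, b p ^ 2 ∂ν)
      ≤ liminf (fun n => ENNReal.ofReal (∫ p, (a n p + b p) ^ 2 ∂ν)) atTop := by
    have e1 : ENNReal.ofReal (4 * ∫ p, b p ^ 2 ∂ν)
        = ∫⁻ p, liminf (fun n => ENNReal.ofReal ((a n p + b p) ^ 2)) atTop ∂ν := by
      rw [← integral_const_mul, ofReal_integral_eq_lintegral_ofReal ((int_sq hb).const_mul _)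
        (Eventually.of_forall fun p => by positivity)]
      refine lintegral_congr fun p => ?_
      have : Tendsto (fun n => ENNReal.ofReal ((a n p + b p) ^ 2)) atTop
          (nhds (ENNReal.ofReal ((b p + b p) ^ 2))) :=
        ENNReal.tendsto_ofReal (((hlim p).add_const _).pow 2)
      rw [this.liminf_eq]
      congr 1; ring
    rw [e1]
    refine (lintegral_liminf_le fun n => (((hma n).add hmb).pow_const 2).ennreal_ofReal).trans
      (le_of_eq ?_)
    congr 1
    ext n
    exact (ofReal_integral_eq_lintegral_ofReal (int_sq (hadd n))
      (Eventually.of_forall fun p => sq_nonneg _)).symm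
  rw [Metric.tendsto_atTop']
  intro ε hε
  by_cases h4 : 4 * (∫ p, b p ^ 2 ∂ν) < ε
  · refine ⟨0, fun n _ => ?_⟩
    have h0 : 0 ≤ ∫ p, (a n p - b p) ^ 2 ∂ν := integral_nonneg fun p => sq_nonneg _
    have h1 : 0 ≤ ∫ p, (a n p + b p) ^ 2 ∂ν := integral_nonneg fun p => sq_nonneg _
    rw [Real.dist_eq, sub_zero, abs_of_nonneg h0]
    linarith [hpar n]
  · push Not at h4
    have hlt : ENNReal.ofReal (4 * (∫ p, b p ^ 2 ∂ν) - ε)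
        < liminf (fun n => ENNReal.ofReal (∫ p, (a n p + b p) ^ 2 ∂ν)) atTop :=
      lt_of_lt_of_le ((ENNReal.ofReal_lt_ofReal_iff (by linarith)).2 (by linarith)) hfat
    obtain ⟨N, hN⟩ := eventually_atTop.1 (eventually_lt_of_lt_liminf hlt)
    refine ⟨N, fun n hn => ?_⟩
    have h0 : 0 ≤ ∫ p, (a n p - b p) ^ 2 ∂ν := integral_nonneg fun p => sq_nonneg _
    have h1 := (ENNReal.ofReal_lt_ofReal_iff_of_nonneg (by linarith)).1 (hN n hn.le)
    rw [Real.dist_eq, sub_zero, abs_of_nonneg h0]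
    linarith [hpar n]

lemma tendsto_integral_mul {a b : ℕ → α → ℝ} {a' b' : α → ℝ} (ha : ∀ n, MemLp (a n) 2 ν)
    (ha' : MemLp a' 2 ν) (hb : ∀ n, MemLp (b n) 2 ν) (hb' : MemLp b' 2 ν)
    (sa : Tendsto (fun n => ∫ p, (a n p - a' p) ^ 2 ∂ν) atTop (nhds 0))
    (sb : Tendsto (fun n => ∫ p, (b n p - b' p) ^ 2 ∂ν) atTop (nhds 0)) :
    Tendsto (fun n => ∫ p, a n p * b n p ∂ν) atTop (nhds (∫ p, a' p * b' p ∂ν)) := by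
  have hsa : ∀ n, MemLp (fun p => a n p - a' p) 2 ν := fun n => (ha n).sub ha'
  have hsb : ∀ n, MemLp (fun p => b n p - b' p) 2 ν := fun n => (hb n).sub hb'
  have of_sq : ∀ c : ℕ → ℝ, Tendsto (fun n => c n ^ 2) atTop (nhds 0) →
      Tendsto c atTop (nhds 0) := fun c hc => by
    have h2 := hc.sqrt
    simp only [Real.sqrt_sq_eq_abs, Real.sqrt_zero] at h2
    exact (tendsto_zero_iff_abs_tendsto_zero _).2 h2
  have z1 : Tendsto (fun n => ∫ p, (a n p - a' p) * b' p ∂ν) atTop (nhds 0) :=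
    of_sq _ <| squeeze_zero (fun n => sq_nonneg _) (fun n => sq_integral_mul_le (hsa n) hb')
      (by simpa using sa.mul_const (∫ p, b' p ^ 2 ∂ν))
  have z2 : Tendsto (fun n => ∫ p, a' p * (b n p - b' p) ∂ν) atTop (nhds 0) :=
    of_sq _ <| squeeze_zero (fun n => sq_nonneg _) (fun n => sq_integral_mul_le ha' (hsb n))
      (by simpa using sb.const_mul (∫ p, a' p ^ 2 ∂ν))
  have z3 : Tendsto (fun n => ∫ p, (a n p - a' p) * (b n p - b' p) ∂ν) atTop (nhds 0) :=
    of_sq _ <| squeeze_zero (fun n => sq_nonneg _) (fun n => sq_integral_mul_le (hsa n) (hsb n))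
      (by simpa using sa.mul sb)
  have h := ((z1.add z2).add z3).add_const (∫ p, a' p * b' p ∂ν)
  simp only [add_zero, zero_add] at h
  refine h.congr fun n => ?_
  rw [integral_eq_comb (F := fun p => a n p * b n p) 1 1 1 1 (int_mul (hsa n) hb')
    (int_mul ha' (hsb n)) (int_mul (hsa n) (hsb n)) (int_mul ha' hb') fun p => by ring]
  ring

end Generic

/-! ### One space variable -/

lemma abs_le_integral_abs_deriv {f f' : ℝ → ℝ} (hd : ∀ x, HasDerivAt f (f' x) x)
    (hf : Integrable f) (hf' : Integrable f') (x : ℝ) : |f x| ≤ ∫ y, |f' y| := by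
  have h0 : Tendsto f atBot (nhds 0) :=
    tendsto_zero_of_hasDerivAt_of_integrableOn_Iic (a := x) (fun y _ => hd y)
      hf'.integrableOn hf.integrableOn
  have h1 := integral_Iic_of_hasDerivAt_of_tendsto (hd x).continuousAt.continuousWithinAt
    (fun y _ => hd y) hf'.integrableOn h0
  rw [sub_zero] at h1
  rw [← h1]
  exact (abs_integral_le_integral_abs).trans
    (setIntegral_le_integral hf'.abs (Eventually.of_forall fun y => abs_nonneg _))

/-- The one-dimensional Sobolev (Agmon) inequality, with a weight `ε` to be optimised. -/
lemma agmon {f f' : ℝ → ℝ} (hd : ∀ x, HasDerivAt f (f' x) x) (hf : MemLp f 2 volume)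
    (hf' : MemLp f' 2 volume) {ε : ℝ} (hε : 0 < ε) (x : ℝ) :
    f x ^ 2 ≤ ε⁻¹ * (∫ y, f y ^ 2) + ε * ∫ y, f' y ^ 2 := by
  have hi : Integrable (fun y => 2 * (f y * f' y)) := (int_mul hf hf').const_mul 2
  have h := abs_le_integral_abs_deriv (f := fun y => f y ^ 2) (f' := fun y => 2 * (f y * f' y))
    (fun y => ((hd y).fun_pow 2).congr_deriv (by push_cast; ring)) (int_sq hf) hi x
  rw [abs_of_nonneg (sq_nonneg _)] at h
  refine h.trans ?_
  have := integral_le_comb (F := fun y => |2 * (f y * f' y)|) ε⁻¹ ε 0 0 hi.abs (int_sq hf)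
    (int_sq hf') (int_sq hf) (int_sq hf) (fun y => ?_)
  · linarith
  · rw [abs_le]
    have e : ε⁻¹ * f y ^ 2 + ε * f' y ^ 2 - 2 * (f y * f' y) = ε⁻¹ * (f y - ε * f' y) ^ 2 := by
      field_simp; ring
    have e' : ε⁻¹ * f y ^ 2 + ε * f' y ^ 2 + 2 * (f y * f' y) = ε⁻¹ * (f y + ε * f' y) ^ 2 := by
      field_simp; ring
    have p1 : 0 ≤ ε⁻¹ * (f y - ε * f' y) ^ 2 := by positivity
    have p2 : 0 ≤ ε⁻¹ * (f y + ε * f' y) ^ 2 := by positivity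
    constructor <;> linarith

/-- A difference quotient is an average of the derivative, so it does not increase the
`L²` norm. -/
lemma lintegral_slope_sq_le {f f' : ℝ → ℝ} (hd : ∀ x, HasDerivAt f (f' x) x)
    (hc : Continuous f') {h : ℝ} (hh : 0 < h) :
    ∫⁻ x, ENNReal.ofReal (((f (x + h) - f x) / h) ^ 2) ≤ ∫⁻ x, ENNReal.ofReal (f' x ^ 2) := by
  have hpt : ∀ x, ENNReal.ofReal (((f (x + h) - f x) / h) ^ 2)
      ≤ ENNReal.ofReal h⁻¹ * ∫⁻ r in Ioc 0 h, ENNReal.ofReal (f' (x + r) ^ 2) := by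
    intro x
    have hcx : Continuous fun r => f' (x + r) := hc.comp (continuous_const.add continuous_id)
    have ftc : ∫ r in (0 : ℝ)..h, f' (x + r) = f (x + h) - f x := by
      have := intervalIntegral.integral_eq_sub_of_hasDerivAt (a := 0) (b := h)
        (f := fun r => f (x + r)) (f' := fun r => f' (x + r))
        (fun r _ => by simpa using (hd (x + r)).comp_const_add x r)
        (hcx.intervalIntegrable _ _)
      simpa using this
    rw [intervalIntegral.integral_of_le hh.le] at ftc
    have hm : MemLp (fun r => f' (x + r)) 2 (volume.restrict (Ioc 0 h)) :=
      (memLp_two_iff_integrable_sq hcx.aestronglyMeasurable).2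
        (((hcx.pow 2).integrableOn_Icc).mono_set Ioc_subset_Icc_self)
    have h1 : MemLp (fun _ : ℝ => (1 : ℝ)) 2 (volume.restrict (Ioc 0 h)) := memLp_const 1
    have cs := sq_integral_mul_le hm h1
    simp only [mul_one, one_pow, integral_const, smul_eq_mul, ftc] at cs
    simp only [measureReal_restrict_apply_univ, Real.volume_real_Ioc_of_le hh.le, sub_zero] at cs
    have hle : ((f (x + h) - f x) / h) ^ 2 ≤ h⁻¹ * ∫ r in Ioc 0 h, f' (x + r) ^ 2 := by
      rw [div_pow, div_le_iff₀ (by positivity)]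
      calc _ ≤ _ := cs
        _ = _ := by field_simp
    refine (ENNReal.ofReal_le_ofReal hle).trans ?_
    rw [ENNReal.ofReal_mul (by positivity), ofReal_integral_eq_lintegral_ofReal (int_sq hm)
      (Eventually.of_forall fun r => sq_nonneg _)]
  refine (lintegral_mono hpt).trans ?_
  have hmeas : Measurable (fun p : ℝ × ℝ => ENNReal.ofReal (f' (p.1 + p.2) ^ 2)) := by
    have := hc.measurable
    fun_prop
  rw [lintegral_const_mul' _ _ ENNReal.ofReal_ne_top,
    lintegral_lintegral_swap (f := fun x r => ENNReal.ofReal (f' (x + r) ^ 2)) hmeas.aemeasurable]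
  have : ∀ r, ∫⁻ x, ENNReal.ofReal (f' (x + r) ^ 2) = ∫⁻ x, ENNReal.ofReal (f' x ^ 2) := fun r =>
    lintegral_add_right_eq_self (fun x => ENNReal.ofReal (f' x ^ 2)) r
  simp only [this, lintegral_const, Measure.restrict_apply MeasurableSet.univ, univ_inter,
    Real.volume_Ioc, sub_zero]
  rw [mul_left_comm, ← ENNReal.ofReal_mul (by positivity), inv_mul_cancel₀ hh.ne']
  simp

lemma exists_slope_eq {f f' : ℝ → ℝ} (hd : ∀ x, HasDerivAt f (f' x) x) (x : ℝ) {h : ℝ}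
    (hh : 0 < h) : ∃ y ∈ Icc x (x + h), (f (x + h) - f x) / h = f' y := by
  obtain ⟨y, hy, e⟩ := exists_hasDerivAt_eq_slope f f' (by linarith : x < x + h)
    (fun z _ => (hd z).continuousAt.continuousWithinAt) (fun z _ => hd z)
  exact ⟨y, Ioo_subset_Icc_self hy, by rw [e]; congr 1; ring⟩

/-- The step of the difference quotients. -/
noncomputable def stp (n : ℕ) : ℝ := 1 / ((n : ℝ) + 1)

lemma stp_pos (n : ℕ) : 0 < stp n := by unfold stp; positivity

lemma stp_tendsto : Tendsto stp atTop (nhds 0) := tendsto_one_div_add_atTop_nhds_zero_nat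

lemma tendsto_of_mem_Icc {g : ℝ → ℝ} {x : ℝ} (hg : ContinuousAt g x) {a : ℕ → ℝ} {c : ℝ}
    (ha : ∀ n, ∃ y ∈ Icc x (x + c * stp n), a n = g y) :
    Tendsto a atTop (nhds (g x)) := by
  choose y hy e using ha
  have hyt : Tendsto y atTop (nhds x) := by
    refine tendsto_of_tendsto_of_tendsto_of_le_of_le tendsto_const_nhds
      (by simpa using (stp_tendsto.const_mul c).const_add x) (fun n => (hy n).1) fun n => (hy n).2
  have := hg.tendsto.comp hyt
  exact this.congr fun n => (e n).symm

lemma tendsto_slope {f f' : ℝ → ℝ} (hd : ∀ x, HasDerivAt f (f' x) x) (hc : Continuous f')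
    (x : ℝ) : Tendsto (fun n => (f (x + stp n) - f x) / stp n) atTop (nhds (f' x)) :=
  tendsto_of_mem_Icc (c := 1) hc.continuousAt fun n => by
    simpa using exists_slope_eq hd x (stp_pos n)

lemma tendsto_slope₂ {f f' f'' : ℝ → ℝ} (hd : ∀ x, HasDerivAt f (f' x) x)
    (hd' : ∀ x, HasDerivAt f' (f'' x) x) (hc : Continuous f'') (x : ℝ) :
    Tendsto (fun n => ((f (x + stp n + stp n) - f (x + stp n)) / stp n
      - (f (x + stp n) - f x) / stp n) / stp n) atTop (nhds (f'' x)) := by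
  refine tendsto_of_mem_Icc (c := 2) hc.continuousAt fun n => ?_
  obtain ⟨y, hy, e⟩ := exists_slope_eq
    (f := fun x => (f (x + stp n) - f x) / stp n) (f' := fun x => (f' (x + stp n) - f' x) / stp n)
    (fun z => (((hd (z + stp n)).comp_add_const z (stp n)).sub (hd z)).div_const _) x (stp_pos n)
  obtain ⟨z, hz, ez⟩ := exists_slope_eq hd' y (stp_pos n)
  refine ⟨z, ⟨hy.1.trans hz.1, hz.2.trans (by linarith [hy.2])⟩, ?_⟩
  rw [e, ez]

/-! ### Space-time -/

/-- Lebesgue measure on `ℝ × [0, T]`, the space variable coming first. -/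
noncomputable def stMeas (T : ℝ) : Measure (ℝ × ℝ) :=
  (volume : Measure ℝ).prod (volume.restrict (Icc 0 T))

/-- Integrating a time derivative over `ℝ × [0, T]`. -/
lemma integral_time_deriv {F G : ℝ → ℝ → ℝ} {T : ℝ} (hT : 0 ≤ T)
    (hc : ∀ x, ContinuousOn (F x) (Icc 0 T)) (hd : ∀ x, ∀ t ∈ Ioo 0 T, HasDerivAt (F x) (G x t) t)
    (hG : Integrable (fun p : ℝ × ℝ => G p.1 p.2) (stMeas T))
    (h0 : Integrable fun x => F x 0) (h1 : Integrable fun x => F x T) :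
    ∫ x, F x T = (∫ x, F x 0) + ∫ p, G p.1 p.2 ∂(stMeas T) := by
  unfold stMeas at *
  rw [integral_prod _ hG]
  have : ∀ᵐ x : ℝ, ∫ t in Icc 0 T, G x t = F x T - F x 0 := by
    filter_upwards [hG.prod_right_ae] with x hx
    have e := intervalIntegral.integral_eq_sub_of_hasDerivAt_of_le hT (hc x) (hd x)
      ((intervalIntegrable_iff_integrableOn_Icc_of_le hT).2 hx)
    rw [← e, intervalIntegral.integral_of_le hT, integral_Icc_eq_integral_Ioc]
  rw [integral_congr_ae this, integral_sub h1 h0]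
  ring

lemma memLp_slice {f : ℝ → ℝ → ℝ} {T : ℝ} (hm : Measurable fun p : ℝ × ℝ => f p.1 p.2)
    (hf : MemLp (fun p : ℝ × ℝ => f p.1 p.2) 2 (stMeas T)) :
    ∀ᵐ t ∂(volume.restrict (Icc 0 T)), MemLp (fun x => f x t) 2 volume := by
  filter_upwards [(int_sq hf).prod_left_ae] with t ht
  exact (memLp_two_iff_integrable_sq
    (hm.comp (measurable_id.prodMk measurable_const)).aestronglyMeasurable).2 ht

/-- Integration by parts in `x`, on `ℝ × [0, T]`. -/
lemma integral_parts {a a' b b' : ℝ → ℝ → ℝ} {T : ℝ}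
    (ha : ∀ x t, HasDerivAt (fun y => a y t) (a' x t) x)
    (hb : ∀ x t, HasDerivAt (fun y => b y t) (b' x t) x)
    (ma : Measurable fun p : ℝ × ℝ => a p.1 p.2) (ma' : Measurable fun p : ℝ × ℝ => a' p.1 p.2)
    (mb : Measurable fun p : ℝ × ℝ => b p.1 p.2) (mb' : Measurable fun p : ℝ × ℝ => b' p.1 p.2)
    (la : MemLp (fun p : ℝ × ℝ => a p.1 p.2) 2 (stMeas T))
    (la' : MemLp (fun p : ℝ × ℝ => a' p.1 p.2) 2 (stMeas T))
    (lb : MemLp (fun p : ℝ × ℝ => b p.1 p.2) 2 (stMeas T))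
    (lb' : MemLp (fun p : ℝ × ℝ => b' p.1 p.2) 2 (stMeas T)) :
    ∫ p, a p.1 p.2 * b' p.1 p.2 ∂(stMeas T) = -∫ p, a' p.1 p.2 * b p.1 p.2 ∂(stMeas T) := by
  have s1 := memLp_slice ma la
  have s2 := memLp_slice ma' la'
  have s3 := memLp_slice mb lb
  have s4 := memLp_slice mb' lb'
  have i1 := int_mul la lb'
  have i2 := int_mul la' lb
  unfold stMeas at *
  rw [integral_prod_symm _ i1, integral_prod_symm _ i2, ← integral_neg]
  refine integral_congr_ae ?_
  filter_upwards [s1, s2, s3, s4] with t h1 h2 h3 h4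
  exact integral_mul_deriv_eq_deriv_mul_of_integrable (fun x _ => ha x t) (fun x _ => hb x t)
    (int_mul h1 h4) (int_mul h2 h3) (int_mul h1 h3)

lemma memLp_of_slices {f : ℝ → ℝ → ℝ} {T B : ℝ}
    (hm : Measurable fun p : ℝ × ℝ => f p.1 p.2) (hB : 0 ≤ B)
    (hs : ∀ t, MemLp (fun x => f x t) 2 volume) (hb : ∀ t, ∫ x, f x t ^ 2 ≤ B) :
    MemLp (fun p : ℝ × ℝ => f p.1 p.2) 2 (stMeas T) := by
  have hme : Measurable fun p : ℝ × ℝ => ENNReal.ofReal (f p.1 p.2 ^ 2) :=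
    (hm.pow_const 2).ennreal_ofReal
  refine (memLp_two_of_lintegral_le (c := B * (volume.restrict (Icc 0 T)).real univ)
    hm.aestronglyMeasurable (by positivity) ?_).1
  unfold stMeas
  rw [lintegral_prod_symm _ hme.aemeasurable]
  calc _ ≤ ∫⁻ t in Icc 0 T, ENNReal.ofReal B := by
        refine lintegral_mono fun t => ?_
        rw [← ofReal_integral_eq_lintegral_ofReal (int_sq (hs t))
          (Eventually.of_forall fun x => sq_nonneg _)]
        exact ENNReal.ofReal_le_ofReal (hb t)
    _ = _ := by
        rw [lintegral_const, ENNReal.ofReal_mul hB, ofReal_measureReal]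

/-- The product of a function in `L²(0, T; H¹)` and a function in `L^∞(0, T; L²)` is in `L²`. -/
lemma product_bound {f f' g : ℝ → ℝ → ℝ} {T A : ℝ} (hA : 0 ≤ A)
    (hd : ∀ x t, HasDerivAt (fun y => f y t) (f' x t) x)
    (mf : Measurable fun p : ℝ × ℝ => f p.1 p.2) (mf' : Measurable fun p : ℝ × ℝ => f' p.1 p.2)
    (mg : Measurable fun p : ℝ × ℝ => g p.1 p.2)
    (lf : MemLp (fun p : ℝ × ℝ => f p.1 p.2) 2 (stMeas T))
    (lf' : MemLp (fun p : ℝ × ℝ => f' p.1 p.2) 2 (stMeas T))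
    (hg : ∀ t ∈ Icc 0 T, MemLp (fun x => g x t) 2 volume)
    (hgA : ∀ t ∈ Icc 0 T, ∫ x, g x t ^ 2 ≤ A)
    {ε : ℝ} (hε : 0 < ε) :
    MemLp (fun p : ℝ × ℝ => f p.1 p.2 * g p.1 p.2) 2 (stMeas T) ∧
    ∫ p, (f p.1 p.2 * g p.1 p.2) ^ 2 ∂(stMeas T) ≤
      A * (ε⁻¹ * (∫ p, f p.1 p.2 ^ 2 ∂(stMeas T)) + ε * ∫ p, f' p.1 p.2 ^ 2 ∂(stMeas T)) := by
  have s1 := memLp_slice mf lf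
  have s2 := memLp_slice mf' lf'
  have i1 := int_sq lf
  have i2 := int_sq lf'
  have n1 : 0 ≤ ∫ p, f p.1 p.2 ^ 2 ∂(stMeas T) := integral_nonneg fun p => sq_nonneg _
  have n2 : 0 ≤ ∫ p, f' p.1 p.2 ^ 2 ∂(stMeas T) := integral_nonneg fun p => sq_nonneg _
  refine memLp_two_of_lintegral_le (mf.mul mg).aestronglyMeasurable (by positivity) ?_
  have hme : Measurable fun p : ℝ × ℝ => ENNReal.ofReal ((f p.1 p.2 * g p.1 p.2) ^ 2) :=
    ((mf.mul mg).pow_const 2).ennreal_ofReal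
  unfold stMeas at *
  have j1 : Integrable (fun t => ∫ x, f x t ^ 2) (volume.restrict (Icc 0 T)) :=
    i1.integral_prod_right
  have j2 : Integrable (fun t => ∫ x, f' x t ^ 2) (volume.restrict (Icc 0 T)) :=
    i2.integral_prod_right
  have e : A * (ε⁻¹ * (∫ p, f p.1 p.2 ^ 2 ∂((volume : Measure ℝ).prod (volume.restrict (Icc 0 T))))
      + ε * ∫ p, f' p.1 p.2 ^ 2 ∂((volume : Measure ℝ).prod (volume.restrict (Icc 0 T))))
      = ∫ t in Icc 0 T, A * ε⁻¹ * (∫ x, f x t ^ 2) + A * ε * (∫ x, f' x t ^ 2) := by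
    rw [integral_prod_symm _ i1, integral_prod_symm _ i2, integral_add (j1.const_mul _)
      (j2.const_mul _), integral_const_mul, integral_const_mul]
    ring
  rw [e, lintegral_prod_symm _ hme.aemeasurable, ofReal_integral_eq_lintegral_ofReal]
  · refine lintegral_mono_ae ?_
    filter_upwards [s1, s2, ae_restrict_mem measurableSet_Icc] with t h1 h2 ht
    have hb : ∀ x, (f x t * g x t) ^ 2
        ≤ (ε⁻¹ * (∫ y, f y t ^ 2) + ε * ∫ y, f' y t ^ 2) * g x t ^ 2 := fun x => by
      rw [mul_pow]
      exact mul_le_mul_of_nonneg_right (agmon (fun y => hd y t) h1 h2 hε x) (sq_nonneg _)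
    refine (lintegral_mono fun x => ENNReal.ofReal_le_ofReal (hb x)).trans ?_
    have m1 : 0 ≤ ∫ y, f y t ^ 2 := integral_nonneg fun p => sq_nonneg _
    have m2 : 0 ≤ ∫ y, f' y t ^ 2 := integral_nonneg fun p => sq_nonneg _
    have hi := (int_sq (hg t ht)).const_mul (ε⁻¹ * (∫ y, f y t ^ 2) + ε * ∫ y, f' y t ^ 2)
    rw [← ofReal_integral_eq_lintegral_ofReal hi
      (Eventually.of_forall fun x => by positivity)]
    refine ENNReal.ofReal_le_ofReal ?_
    rw [integral_const_mul]
    have := mul_le_mul_of_nonneg_left (hgA t ht)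
      (by positivity : 0 ≤ ε⁻¹ * (∫ y, f y t ^ 2) + ε * ∫ y, f' y t ^ 2)
    linarith
  · exact (j1.const_mul _).add (j2.const_mul _)
  · refine Eventually.of_forall fun t => ?_
    have m1 : 0 ≤ ∫ y, f y t ^ 2 := integral_nonneg fun p => sq_nonneg _
    have m2 : 0 ≤ ∫ y, f' y t ^ 2 := integral_nonneg fun p => sq_nonneg _
    show 0 ≤ A * ε⁻¹ * (∫ x, f x t ^ 2) + A * ε * (∫ x, f' x t ^ 2)
    positivity

lemma measurePreserving_shift (T h : ℝ) :
    MeasurePreserving (fun p : ℝ × ℝ => (p.1 + h, p.2)) (stMeas T) (stMeas T) :=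
  (measurePreserving_add_right volume h).prod (MeasurePreserving.id _)

lemma integral_shift {f : ℝ × ℝ → ℝ} (hm : Measurable f) (T h : ℝ) :
    ∫ p, f (p.1 + h, p.2) ∂(stMeas T) = ∫ p, f p ∂(stMeas T) := by
  have := (measurePreserving_shift T h)
  conv_rhs => rw [← this.map_eq]
  rw [integral_map this.measurable.aemeasurable hm.aestronglyMeasurable]

lemma memLp_shift {f : ℝ × ℝ → ℝ} {T : ℝ} (hf : MemLp f 2 (stMeas T)) (h : ℝ) :
    MemLp (fun p : ℝ × ℝ => f (p.1 + h, p.2)) 2 (stMeas T) :=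
  hf.comp_measurePreserving (measurePreserving_shift T h)

lemma slope_slice {f f' : ℝ → ℝ} (hd : ∀ x, HasDerivAt f (f' x) x)
    (hc : Continuous f') (hl : MemLp f' 2 volume) {h : ℝ} (hh : 0 < h) :
    MemLp (fun x => (f (x + h) - f x) / h) 2 volume ∧
    ∫ x, ((f (x + h) - f x) / h) ^ 2 ≤ ∫ x, f' x ^ 2 := by
  have hcf : Continuous f := continuous_iff_continuousAt.2 fun x => (hd x).continuousAt
  refine memLp_two_of_lintegral_le (by fun_prop) (integral_nonneg fun x => sq_nonneg _) ?_
  rw [ofReal_integral_eq_lintegral_ofReal (int_sq hl) (Eventually.of_forall fun x => sq_nonneg _)]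
  exact lintegral_slope_sq_le hd hc hh

lemma slope_st {f f' : ℝ → ℝ → ℝ} {T : ℝ} (hd : ∀ x t, HasDerivAt (fun y => f y t) (f' x t) x)
    (hc : ∀ t, Continuous fun x => f' x t)
    (mf : Measurable fun p : ℝ × ℝ => f p.1 p.2) (mf' : Measurable fun p : ℝ × ℝ => f' p.1 p.2)
    (lf' : MemLp (fun p : ℝ × ℝ => f' p.1 p.2) 2 (stMeas T)) {h : ℝ} (hh : 0 < h) :
    MemLp (fun p : ℝ × ℝ => (f (p.1 + h) p.2 - f p.1 p.2) / h) 2 (stMeas T) ∧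
    ∫ p, ((f (p.1 + h) p.2 - f p.1 p.2) / h) ^ 2 ∂(stMeas T) ≤ ∫ p, f' p.1 p.2 ^ 2 ∂(stMeas T) := by
  have ms : Measurable fun p : ℝ × ℝ => f (p.1 + h) p.2 :=
    mf.comp ((measurable_fst.add_const h).prodMk measurable_snd)
  have md : Measurable fun p : ℝ × ℝ => (f (p.1 + h) p.2 - f p.1 p.2) / h :=
    (ms.sub mf).div_const h
  refine memLp_two_of_lintegral_le md.aestronglyMeasurable
    (integral_nonneg fun x => sq_nonneg _) ?_
  rw [ofReal_integral_eq_lintegral_ofReal (int_sq lf') (Eventually.of_forall fun x => sq_nonneg _)]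
  unfold stMeas
  rw [lintegral_prod_symm _ (md.pow_const 2).ennreal_ofReal.aemeasurable,
    lintegral_prod_symm _ (mf'.pow_const 2).ennreal_ofReal.aemeasurable]
  exact lintegral_mono fun t => lintegral_slope_sq_le (fun x => hd x t) (hc t) hh

/-! ### Energy identities for spatial derivatives -/

/-- For `f_t = g` with `f_xx, g ∈ L²`, the identity `d/dt ∫ f_x² = -2 ∫ g f_xx` in integrated
form. The time derivative of `f_x` need not exist: the identity is the limit of those for the
difference quotients of `f` in `x`. -/
lemma gradient_identity {f f' f'' g : ℝ → ℝ → ℝ} {T : ℝ} (hT : 0 ≤ T)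
    (hd : ∀ x t, HasDerivAt (fun y => f y t) (f' x t) x)
    (hd' : ∀ x t, HasDerivAt (fun y => f' y t) (f'' x t) x)
    (hc'' : ∀ t, Continuous fun x => f'' x t) (hcg : ∀ t, Continuous fun x => g x t)
    (mf : Measurable fun p : ℝ × ℝ => f p.1 p.2) (mf' : Measurable fun p : ℝ × ℝ => f' p.1 p.2)
    (mf'' : Measurable fun p : ℝ × ℝ => f'' p.1 p.2) (mg : Measurable fun p : ℝ × ℝ => g p.1 p.2)
    (ht : ∀ x, Continuous (f x)) (hdt : ∀ x, ∀ t ∈ Ioo 0 T, HasDerivAt (f x) (g x t) t)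
    (ls : ∀ t, MemLp (fun x => f' x t) 2 volume)
    (lf' : MemLp (fun p : ℝ × ℝ => f' p.1 p.2) 2 (stMeas T))
    (lf'' : MemLp (fun p : ℝ × ℝ => f'' p.1 p.2) 2 (stMeas T))
    (lg : MemLp (fun p : ℝ × ℝ => g p.1 p.2) 2 (stMeas T)) :
    ∫ x, f' x T ^ 2 = (∫ x, f' x 0 ^ 2) - 2 * ∫ p, g p.1 p.2 * f'' p.1 p.2 ∂(stMeas T) := by
  have hc' : ∀ t, Continuous fun x => f' x t := fun t =>
    continuous_iff_continuousAt.2 fun x => (hd' x t).continuousAt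
  have hc : ∀ t, Continuous fun x => f x t := fun t =>
    continuous_iff_continuousAt.2 fun x => (hd x t).continuousAt
  have msh : ∀ {k : ℝ → ℝ → ℝ} (h : ℝ), (Measurable fun p : ℝ × ℝ => k p.1 p.2) →
      Measurable fun p : ℝ × ℝ => k (p.1 + h) p.2 := fun h hk =>
    hk.comp ((measurable_fst.add_const h).prodMk measurable_snd)
  have mD : ∀ n, Measurable fun p : ℝ × ℝ => (f (p.1 + stp n) p.2 - f p.1 p.2) / stp n := fun n =>
    ((msh _ mf).sub mf).div_const _
  have mD' : ∀ n, Measurable fun p : ℝ × ℝ => (f' (p.1 + stp n) p.2 - f' p.1 p.2) / stp n :=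
    fun n => ((msh _ mf').sub mf').div_const _
  have mDD : ∀ n, Measurable fun p : ℝ × ℝ => ((f (p.1 + stp n + stp n) p.2
      - f (p.1 + stp n) p.2) / stp n - (f (p.1 + stp n) p.2 - f p.1 p.2) / stp n) / stp n :=
    fun n => ((msh (k := fun x t => (f (x + stp n) t - f x t) / stp n) _ (mD n)).sub
      (mD n)).div_const _
  have D1 : ∀ n t, MemLp (fun x => (f (x + stp n) t - f x t) / stp n) 2 volume ∧
      ∫ x, ((f (x + stp n) t - f x t) / stp n) ^ 2 ≤ ∫ x, f' x t ^ 2 := fun n t =>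
    slope_slice (fun x => hd x t) (hc' t) (ls t) (stp_pos n)
  have D2 := fun n => slope_st (T := T) hd hc' mf mf' lf' (stp_pos n)
  have D3 := fun n => slope_st (T := T) hd' hc'' mf' mf'' lf'' (stp_pos n)
  have D4 := fun n => slope_st (T := T)
    (f := fun x t => (f (x + stp n) t - f x t) / stp n)
    (f' := fun x t => (f' (x + stp n) t - f' x t) / stp n)
    (fun x t => (((hd (x + stp n) t).comp_add_const x (stp n)).sub (hd x t)).div_const _)
    (fun t => by have := hc' t; fun_prop) (mD n) (mD' n) (D3 n).1 (stp_pos n)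
  have lgs : ∀ n, MemLp (fun p : ℝ × ℝ => g (p.1 + stp n) p.2) 2 (stMeas T) := fun n =>
    memLp_shift lg (stp n)
  have lDg : ∀ n, MemLp (fun p : ℝ × ℝ => (g (p.1 + stp n) p.2 - g p.1 p.2) / stp n) 2
      (stMeas T) := fun n => by
    have := ((lgs n).sub lg).const_mul (stp n)⁻¹
    refine this.congr_norm (((msh _ mg).sub mg).div_const _).aestronglyMeasurable
      (Eventually.of_forall fun p => ?_)
    simp [div_eq_inv_mul]
  -- the identity at step `n`, after summation by parts
  have main : ∀ n, ∫ x, ((f (x + stp n) T - f x T) / stp n) ^ 2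
      = (∫ x, ((f (x + stp n) 0 - f x 0) / stp n) ^ 2)
        - 2 * ∫ p, g (p.1 + stp n) p.2 * (((f (p.1 + stp n + stp n) p.2
      - f (p.1 + stp n) p.2) / stp n - (f (p.1 + stp n) p.2 - f p.1 p.2) / stp n) / stp n)
          ∂(stMeas T) := by
    intro n
    have h := integral_time_deriv (F := fun x t => ((f (x + stp n) t - f x t) / stp n) ^ 2)
      (G := fun x t => 2 * (((f (x + stp n) t - f x t) / stp n)
        * ((g (x + stp n) t - g x t) / stp n))) hT
      (fun x => by
        have := ht (x + stp n); have := ht x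
        exact Continuous.continuousOn (by fun_prop))
      (fun x t htt => ((((hdt (x + stp n) t htt).sub (hdt x t htt)).div_const _).fun_pow 2
        ).congr_deriv (by push_cast; simp only [Pi.sub_apply]; ring))
      ((int_mul (D2 n).1 (lDg n)).const_mul 2) (int_sq (D1 n 0).1) (int_sq (D1 n T).1)
    rw [h, sub_eq_add_neg]
    congr 1
    have i1 := int_mul (D2 n).1 (lgs n)
    have i2 := int_mul (D2 n).1 lg
    have lDs : MemLp (fun p : ℝ × ℝ => (f (p.1 + stp n + stp n) p.2
      - f (p.1 + stp n) p.2) / stp n) 2 (stMeas T) := memLp_shift (D2 n).1 (stp n)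
    have i3 := int_mul lDs (lgs n)
    have sh := integral_shift (T := T) (h := stp n) ((mD n).mul mg)
    simp only [Pi.mul_apply] at sh
    have e1 := integral_eq_comb (F := fun p : ℝ × ℝ => 2 * (((f (p.1 + stp n) p.2 - f p.1 p.2)
      / stp n) * ((g (p.1 + stp n) p.2 - g p.1 p.2) / stp n))) (2 / stp n) (-2 / stp n) 0 0
      i1 i2 i1 i1 (fun p => by ring)
    have e2 := integral_eq_comb (F := fun p : ℝ × ℝ => g (p.1 + stp n) p.2 *
      (((f (p.1 + stp n + stp n) p.2 - f (p.1 + stp n) p.2) / stp n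
      - (f (p.1 + stp n) p.2 - f p.1 p.2) / stp n) / stp n)) (1 / stp n) (-1 / stp n) 0 0
      i3 i1 i1 i1 (fun p => by ring)
    rw [e1, e2, sh]
    ring
  have shrink : ∀ n, ∫ p, g (p.1 + stp n) p.2 ^ 2 ∂(stMeas T) = ∫ p, g p.1 p.2 ^ 2 ∂(stMeas T) :=
    fun n => integral_shift (T := T) (h := stp n) (mg.pow_const 2)
  have lim1 := fun t => tendsto_integral_mul (fun n => (D1 n t).1) (ls t) (fun n => (D1 n t).1)
    (ls t) (strong_of_pointwise (fun n => (D1 n t).1) (ls t)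
      (fun x => tendsto_slope (fun y => hd y t) (hc' t) x)
      (fun n => by have := hc t; exact Continuous.measurable (by fun_prop))
      (hc' t).measurable (fun n => (D1 n t).2))
    (strong_of_pointwise (fun n => (D1 n t).1) (ls t)
      (fun x => tendsto_slope (fun y => hd y t) (hc' t) x)
      (fun n => by have := hc t; exact Continuous.measurable (by fun_prop))
      (hc' t).measurable (fun n => (D1 n t).2))
  have lim2 := tendsto_integral_mul lgs lg (fun n => (D4 n).1) lf''
    (strong_of_pointwise lgs lg
      (fun p => by
        have h1 := (hcg p.2).tendsto p.1
        have h2 : Tendsto (fun n => p.1 + stp n) atTop (nhds p.1) := by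
          simpa using stp_tendsto.const_add p.1
        exact h1.comp h2) (fun n => msh _ mg) mg (fun n => (shrink n).le))
    (strong_of_pointwise (fun n => (D4 n).1) lf''
      (fun p => tendsto_slope₂ (fun y => hd y p.2) (fun y => hd' y p.2) (hc'' p.2) p.1) mDD mf''
      (fun n => (D4 n).2.trans (D3 n).2))
  simp only [← pow_two] at lim1
  exact tendsto_nhds_unique (lim1 T)
    (((lim1 0).sub (lim2.const_mul 2)).congr fun n => (main n).symm)

/-- If `ℓ_t = g` and `u_t = w`, then `d/dt ∫ (μ ℓ_x - u)² = 2 ∫ (μ ℓ_x - u)(μ g_x - w)`, in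
integrated form and without assuming that `ℓ_x` is differentiable in time. -/
lemma effective_identity {l l' g g' u w : ℝ → ℝ → ℝ} {T : ℝ} (μ : ℝ) (hT : 0 ≤ T)
    (hl : ∀ x t, HasDerivAt (fun y => l y t) (l' x t) x)
    (hg : ∀ x t, HasDerivAt (fun y => g y t) (g' x t) x)
    (hcl : ∀ t, Continuous fun x => l' x t) (hcg : ∀ t, Continuous fun x => g' x t)
    (ml : Measurable fun p : ℝ × ℝ => l p.1 p.2) (ml' : Measurable fun p : ℝ × ℝ => l' p.1 p.2)
    (mg : Measurable fun p : ℝ × ℝ => g p.1 p.2) (mg' : Measurable fun p : ℝ × ℝ => g' p.1 p.2)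
    (tl : ∀ x, Continuous (l x)) (tu : ∀ x, Continuous (u x))
    (dl : ∀ x, ∀ t ∈ Ioo 0 T, HasDerivAt (l x) (g x t) t)
    (du : ∀ x, ∀ t ∈ Ioo 0 T, HasDerivAt (u x) (w x t) t)
    (sl : ∀ t, MemLp (fun x => l' x t) 2 volume) (su : ∀ t, MemLp (fun x => u x t) 2 volume)
    (ll' : MemLp (fun p : ℝ × ℝ => l' p.1 p.2) 2 (stMeas T))
    (lu : MemLp (fun p : ℝ × ℝ => u p.1 p.2) 2 (stMeas T))
    (lg' : MemLp (fun p : ℝ × ℝ => g' p.1 p.2) 2 (stMeas T))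
    (lw : MemLp (fun p : ℝ × ℝ => w p.1 p.2) 2 (stMeas T)) :
    ∫ x, (μ * l' x T - u x T) ^ 2 = (∫ x, (μ * l' x 0 - u x 0) ^ 2)
      + 2 * ∫ p, (μ * l' p.1 p.2 - u p.1 p.2) * (μ * g' p.1 p.2 - w p.1 p.2) ∂(stMeas T) := by
  have hc : ∀ t, Continuous fun x => l x t := fun t =>
    continuous_iff_continuousAt.2 fun x => (hl x t).continuousAt
  have msh : ∀ {k : ℝ → ℝ → ℝ} (h : ℝ), (Measurable fun p : ℝ × ℝ => k p.1 p.2) →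
      Measurable fun p : ℝ × ℝ => k (p.1 + h) p.2 := fun h hk =>
    hk.comp ((measurable_fst.add_const h).prodMk measurable_snd)
  have D1 : ∀ n t, MemLp (fun x => (l (x + stp n) t - l x t) / stp n) 2 volume ∧
      ∫ x, ((l (x + stp n) t - l x t) / stp n) ^ 2 ≤ ∫ x, l' x t ^ 2 := fun n t =>
    slope_slice (fun x => hl x t) (hcl t) (sl t) (stp_pos n)
  have D2 := fun n => slope_st (T := T) hl hcl ml ml' ll' (stp_pos n)
  have D3 := fun n => slope_st (T := T) hg hcg mg mg' lg' (stp_pos n)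
  have S1 := fun t => strong_of_pointwise (fun n => (D1 n t).1) (sl t)
      (fun x => tendsto_slope (fun y => hl y t) (hcl t) x)
      (fun n => by have := hc t; exact Continuous.measurable (by fun_prop))
      (hcl t).measurable (fun n => (D1 n t).2)
  have S2 := strong_of_pointwise (fun n => (D2 n).1) ll'
      (fun p => tendsto_slope (fun y => hl y p.2) (hcl p.2) p.1)
      (fun n => ((msh _ ml).sub ml).div_const _) ml' (fun n => (D2 n).2)
  have S3 := strong_of_pointwise (fun n => (D3 n).1) lg'
      (fun p => tendsto_slope (fun y => hg y p.2) (hcg p.2) p.1)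
      (fun n => ((msh _ mg).sub mg).div_const _) mg' (fun n => (D3 n).2)
  have scale : ∀ {α : Type} [MeasurableSpace α] {ν : Measure α} {a : ℕ → α → ℝ} {b c : α → ℝ},
      Tendsto (fun n => ∫ p, (a n p - b p) ^ 2 ∂ν) atTop (nhds 0) →
      Tendsto (fun n => ∫ p, ((μ * a n p - c p) - (μ * b p - c p)) ^ 2 ∂ν) atTop (nhds 0) := by
    intro α _ ν a b c h
    have := h.const_mul (μ ^ 2)
    rw [mul_zero] at this
    refine this.congr fun n => ?_
    rw [← integral_const_mul]
    congr 1; ext p; ring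
  have L1 : ∀ n t, MemLp (fun x => μ * ((l (x + stp n) t - l x t) / stp n) - u x t) 2 volume :=
    fun n t => ((D1 n t).1.const_mul μ).sub (su t)
  have L1' : ∀ t, MemLp (fun x => μ * l' x t - u x t) 2 volume :=
    fun t => ((sl t).const_mul μ).sub (su t)
  have L2 : ∀ n, MemLp (fun p : ℝ × ℝ => μ * ((l (p.1 + stp n) p.2 - l p.1 p.2) / stp n)
      - u p.1 p.2) 2 (stMeas T) := fun n => ((D2 n).1.const_mul μ).sub lu
  have L2' : MemLp (fun p : ℝ × ℝ => μ * l' p.1 p.2 - u p.1 p.2) 2 (stMeas T) :=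
    (ll'.const_mul μ).sub lu
  have L3 : ∀ n, MemLp (fun p : ℝ × ℝ => μ * ((g (p.1 + stp n) p.2 - g p.1 p.2) / stp n)
      - w p.1 p.2) 2 (stMeas T) := fun n => ((D3 n).1.const_mul μ).sub lw
  have L3' : MemLp (fun p : ℝ × ℝ => μ * g' p.1 p.2 - w p.1 p.2) 2 (stMeas T) :=
    (lg'.const_mul μ).sub lw
  have lim1 := fun t => tendsto_integral_mul (fun n => L1 n t) (L1' t) (fun n => L1 n t) (L1' t)
    (scale (S1 t)) (scale (S1 t))
  have lim2 := tendsto_integral_mul L2 L2' L3 L3' (scale S2) (scale S3)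
  simp only [← pow_two] at lim1
  refine tendsto_nhds_unique (lim1 T) (((lim1 0).add (lim2.const_mul 2)).congr fun n => ?_)
  have h := integral_time_deriv
    (F := fun x t => (μ * ((l (x + stp n) t - l x t) / stp n) - u x t) ^ 2)
    (G := fun x t => 2 * ((μ * ((l (x + stp n) t - l x t) / stp n) - u x t)
      * (μ * ((g (x + stp n) t - g x t) / stp n) - w x t))) hT
    (fun x => by
      have := tl (x + stp n); have := tl x; have := tu x
      exact Continuous.continuousOn (by fun_prop))
    (fun x t htt => ((((((dl (x + stp n) t htt).sub (dl x t htt)).div_const _).const_mul μ).sub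
      (du x t htt)).fun_pow 2).congr_deriv (by push_cast; simp only [Pi.sub_apply]; ring))
    ((int_mul (L2 n) (L3 n)).const_mul 2) (int_sq (L1 n 0)) (int_sq (L1 n T))
  rw [h, integral_const_mul]

/-! ### Flows on a bounded time interval -/

/-- The positive parameters on which all constants are allowed to depend. -/
structure Par where
  μ : ℝ
  κ : ℝ
  R : ℝ
  cv : ℝ
  M : ℝ
  m : ℝ
  K : ℝ
  hμ : 0 < μ
  hκ : 0 < κ
  hR : 0 < R
  hcv : 0 < cv
  hM : 0 < M
  hm : 0 < m
  hK : 1 ≤ K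

lemma Par.Kpos (P : Par) : 0 < P.K := by linarith [P.hK]

/-- Joint measurability of a function of `(x, t)`. -/
abbrev Meas₂ (f : ℝ → ℝ → ℝ) : Prop := Measurable fun p : ℝ × ℝ => f p.1 p.2

/-- Membership in `L²(ℝ × [0, T])`. -/
abbrev LST (T : ℝ) (f : ℝ → ℝ → ℝ) : Prop := MemLp (fun p : ℝ × ℝ => f p.1 p.2) 2 (stMeas T)

/-- A solution of the system on `[0, T]`, together with its spatial derivatives. The functions are
defined for all real times, and the properties that do not involve time derivatives are required
at every real time; a solution on `[0, T]` provides such functions by freezing it outside `[0, T]`.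
The right-hand sides of the equations are `PreFlow.ut` and `PreFlow.θt` below. -/
structure PreFlow (P : Par) (T : ℝ) where
  v : ℝ → ℝ → ℝ
  u : ℝ → ℝ → ℝ
  θ : ℝ → ℝ → ℝ
  vx : ℝ → ℝ → ℝ
  ux : ℝ → ℝ → ℝ
  θx : ℝ → ℝ → ℝ
  uxx : ℝ → ℝ → ℝ
  θxx : ℝ → ℝ → ℝ
  hT : 0 < T
  dv : ∀ x t, HasDerivAt (fun y => v y t) (vx x t) x
  du : ∀ x t, HasDerivAt (fun y => u y t) (ux x t) x
  dux : ∀ x t, HasDerivAt (fun y => ux y t) (uxx x t) x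
  dθ : ∀ x t, HasDerivAt (fun y => θ y t) (θx x t) x
  dθx : ∀ x t, HasDerivAt (fun y => θx y t) (θxx x t) x
  cvx : ∀ t, Continuous fun x => vx x t
  cuxx : ∀ t, Continuous fun x => uxx x t
  cθxx : ∀ t, Continuous fun x => θxx x t
  mv : Meas₂ v
  mu : Meas₂ u
  mθ : Meas₂ θ
  mvx : Meas₂ vx
  mux : Meas₂ ux
  mθx : Meas₂ θx
  muxx : Meas₂ uxx
  mθxx : Meas₂ θxx
  tv : ∀ x, Continuous (v x)
  tu : ∀ x, Continuous (u x)
  tθ : ∀ x, Continuous (θ x)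
  dtv : ∀ x, ∀ t ∈ Ioo 0 T, HasDerivAt (v x) (ux x t) t
  dtu : ∀ x, ∀ t ∈ Ioo 0 T, HasDerivAt (u x)
    (P.μ * (uxx x t / v x t - ux x t * vx x t / v x t ^ 2)
      - P.R * (θx x t / v x t - θ x t * vx x t / v x t ^ 2)) t
  dtθ : ∀ x, ∀ t ∈ Ioo 0 T, HasDerivAt (θ x)
    ((P.κ * (θxx x t / v x t - θx x t * vx x t / v x t ^ 2) + P.μ * ux x t ^ 2 / v x t
      - P.R * θ x t * ux x t / v x t) / P.cv) t
  v_low : ∀ x t, P.K⁻¹ ≤ v x t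
  v_up : ∀ x t, v x t ≤ P.K
  θ_pos : ∀ x t, 0 < θ x t
  far : ∀ t, Tendsto (fun x => θ x t) (cocompact ℝ) (nhds 1)
  sv : ∀ t, MemLp (fun x => v x t - 1) 2 volume
  su : ∀ t, MemLp (fun x => u x t) 2 volume
  sθ : ∀ t, MemLp (fun x => θ x t - 1) 2 volume
  svx : ∀ t, MemLp (fun x => vx x t) 2 volume
  sux : ∀ t, MemLp (fun x => ux x t) 2 volume
  sθx : ∀ t, MemLp (fun x => θx x t) 2 volume
  B : ℝ
  hB : 0 ≤ B
  bv : ∀ t, ∫ x, (v x t - 1) ^ 2 ≤ B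
  bu : ∀ t, ∫ x, u x t ^ 2 ≤ B
  bθ : ∀ t, ∫ x, (θ x t - 1) ^ 2 ≤ B
  bvx : ∀ t, ∫ x, vx x t ^ 2 ≤ B
  bux : ∀ t, ∫ x, ux x t ^ 2 ≤ B
  bθx : ∀ t, ∫ x, θx x t ^ 2 ≤ B
  luxx : LST T uxx
  lθxx : LST T θxx
  iv : ∫ x, (v x 0 - 1) ^ 2 ≤ P.M ^ 2
  iu : ∫ x, u x 0 ^ 2 ≤ P.M ^ 2
  iθ : ∫ x, (θ x 0 - 1) ^ 2 ≤ P.M ^ 2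
  ivx : ∫ x, vx x 0 ^ 2 ≤ P.M ^ 2
  iux : ∫ x, ux x 0 ^ 2 ≤ P.M ^ 2
  iθx : ∫ x, θx x 0 ^ 2 ≤ P.M ^ 2
  imθ : ∀ x, P.m ≤ θ x 0

namespace PreFlow

variable {P : Par} {T : ℝ} (S : PreFlow P T)

/-- `u_t`, as given by the momentum equation. -/
noncomputable def ut (x t : ℝ) : ℝ :=
  P.μ * (S.uxx x t / S.v x t - S.ux x t * S.vx x t / S.v x t ^ 2)
    - P.R * (S.θx x t / S.v x t - S.θ x t * S.vx x t / S.v x t ^ 2)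

/-- `θ_t`, as given by the energy equation. -/
noncomputable def θt (x t : ℝ) : ℝ :=
  (P.κ * (S.θxx x t / S.v x t - S.θx x t * S.vx x t / S.v x t ^ 2) + P.μ * S.ux x t ^ 2 / S.v x t
      - P.R * S.θ x t * S.ux x t / S.v x t) / P.cv



lemma v_pos (x t : ℝ) : 0 < S.v x t := lt_of_lt_of_le (inv_pos.2 P.Kpos) (S.v_low x t)

lemma inv_v_le (x t : ℝ) : (S.v x t)⁻¹ ≤ P.K := by
  rw [inv_le_comm₀ (S.v_pos x t) P.Kpos]; exact S.v_low x t

lemma inv_v_pos (x t : ℝ) : 0 < (S.v x t)⁻¹ := inv_pos.2 (S.v_pos x t)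

lemma le_inv_v (x t : ℝ) : P.K⁻¹ ≤ (S.v x t)⁻¹ := inv_anti₀ (S.v_pos x t) (S.v_up x t)

lemma meas_ut : Meas₂ S.ut := by
  have := S.mv; have := S.mθ; have := S.mvx; have := S.mux; have := S.mθx; have := S.muxx
  unfold Meas₂ ut; fun_prop

lemma meas_θt : Meas₂ S.θt := by
  have := S.mv; have := S.mθ; have := S.mvx; have := S.mux; have := S.mθx; have := S.mθxx
  unfold Meas₂ θt; fun_prop

lemma cv (t : ℝ) : Continuous fun x => S.v x t :=
  continuous_iff_continuousAt.2 fun x => (S.dv x t).continuousAt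
lemma cu (t : ℝ) : Continuous fun x => S.u x t :=
  continuous_iff_continuousAt.2 fun x => (S.du x t).continuousAt
lemma cθ (t : ℝ) : Continuous fun x => S.θ x t :=
  continuous_iff_continuousAt.2 fun x => (S.dθ x t).continuousAt
lemma cux (t : ℝ) : Continuous fun x => S.ux x t :=
  continuous_iff_continuousAt.2 fun x => (S.dux x t).continuousAt
lemma cθx (t : ℝ) : Continuous fun x => S.θx x t :=
  continuous_iff_continuousAt.2 fun x => (S.dθx x t).continuousAt

lemma cut (t : ℝ) : Continuous fun x => S.ut x t := by
  have := S.cv t; have := S.cθ t; have := S.cvx t; have := S.cux t; have := S.cθx t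
  have := S.cuxx t; have h0 := fun x => (S.v_pos x t).ne'
  have h2 := fun x => (pow_pos (S.v_pos x t) 2).ne'
  unfold ut; fun_prop (disch := assumption)

lemma cθt (t : ℝ) : Continuous fun x => S.θt x t := by
  have := S.cv t; have := S.cθ t; have := S.cvx t; have := S.cux t; have := S.cθx t
  have := S.cθxx t; have h0 := fun x => (S.v_pos x t).ne'
  have h2 := fun x => (pow_pos (S.v_pos x t) 2).ne'
  have := P.hcv.ne'
  unfold θt; fun_prop (disch := assumption)

lemma lv : LST T fun x t => S.v x t - 1 := memLp_of_slices (S.mv.sub_const 1) S.hB S.sv S.bv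
lemma lu : LST T S.u := memLp_of_slices S.mu S.hB S.su S.bu
lemma lθ : LST T fun x t => S.θ x t - 1 := memLp_of_slices (S.mθ.sub_const 1) S.hB S.sθ S.bθ
lemma lvx : LST T S.vx := memLp_of_slices S.mvx S.hB S.svx S.bvx
lemma lux : LST T S.ux := memLp_of_slices S.mux S.hB S.sux S.bux
lemma lθx : LST T S.θx := memLp_of_slices S.mθx S.hB S.sθx S.bθx

lemma lux_vx : LST T fun x t => S.ux x t * S.vx x t :=
  (product_bound S.hB S.dux S.mux S.muxx S.mvx S.lux S.luxx (fun t _ => S.svx t)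
    (fun t _ => S.bvx t) one_pos).1
lemma lθx_vx : LST T fun x t => S.θx x t * S.vx x t :=
  (product_bound S.hB S.dθx S.mθx S.mθxx S.mvx S.lθx S.lθxx (fun t _ => S.svx t)
    (fun t _ => S.bvx t) one_pos).1
lemma lux_ux : LST T fun x t => S.ux x t * S.ux x t :=
  (product_bound S.hB S.dux S.mux S.muxx S.mux S.lux S.luxx (fun t _ => S.sux t)
    (fun t _ => S.bux t) one_pos).1

lemma u_sq_le (x t : ℝ) : S.u x t ^ 2 ≤ 2 * S.B := by
  have := agmon (fun x => S.du x t) (S.su t) (S.sux t) one_pos x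
  linarith [S.bu t, S.bux t]

lemma u_bdd : ∃ N, 0 < N ∧ ∀ x t, |S.u x t| ≤ N := by
  refine ⟨2 * S.B + 1, by linarith [S.hB], fun x t => ?_⟩
  have := S.u_sq_le x t
  rw [← sq_abs] at this
  nlinarith [abs_nonneg (S.u x t), sq_nonneg (|S.u x t| - 1)]

lemma θ_sub_sq_le (x t : ℝ) : (S.θ x t - 1) ^ 2 ≤ 2 * S.B := by
  have := agmon (fun x => (S.dθ x t).sub_const 1) (S.sθ t) (S.sθx t) one_pos x
  linarith [S.bθ t, S.bθx t]

lemma θ_bdd : ∃ N, 1 ≤ N ∧ ∀ x t, S.θ x t ≤ N := by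
  refine ⟨2 * S.B + 2, by linarith [S.hB], fun x t => ?_⟩
  nlinarith [S.θ_sub_sq_le x t, sq_nonneg (S.θ x t - 2)]

lemma lmul {f g : ℝ → ℝ → ℝ} (hg : LST T g) (mf : Meas₂ f) (mg : Meas₂ g) {c : ℝ}
    (h : ∀ x t, |f x t| ≤ c) : LST T fun x t => f x t * g x t :=
  memLp_of_bound c hg (mf.mul mg).aestronglyMeasurable fun p => by
    rw [abs_mul]; exact mul_le_mul_of_nonneg_right (h _ _) (abs_nonneg _)

lemma abs_inv_v (x t : ℝ) : |(S.v x t)⁻¹| ≤ P.K := by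
  rw [abs_of_pos (S.inv_v_pos x t)]; exact S.inv_v_le x t

lemma abs_inv_v_sq (x t : ℝ) : |(S.v x t)⁻¹ ^ 2| ≤ P.K ^ 2 := by
  rw [abs_pow]; exact pow_le_pow_left₀ (abs_nonneg _) (S.abs_inv_v x t) 2

lemma miv : Meas₂ fun x t => (S.v x t)⁻¹ := S.mv.inv

lemma lvd {f : ℝ → ℝ → ℝ} (hf : LST T f) (mf : Meas₂ f) : LST T fun x t => f x t / S.v x t := by
  simpa [div_eq_inv_mul] using lmul hf S.miv mf S.abs_inv_v

lemma lvdd {f : ℝ → ℝ → ℝ} (hf : LST T f) (mf : Meas₂ f) :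
    LST T fun x t => f x t / S.v x t ^ 2 := by
  simpa [div_eq_inv_mul] using lmul hf (S.miv.pow_const 2) mf S.abs_inv_v_sq

lemma lmθ {f : ℝ → ℝ → ℝ} (hf : LST T f) (mf : Meas₂ f) : LST T fun x t => S.θ x t * f x t := by
  obtain ⟨N, _, hN⟩ := S.θ_bdd
  exact lmul hf S.mθ mf (c := N) fun x t => by rw [abs_of_pos (S.θ_pos x t)]; exact hN x t

lemma lgx : LST T fun x t => S.uxx x t / S.v x t - S.ux x t * S.vx x t / S.v x t ^ 2 :=
  (S.lvd S.luxx S.muxx).sub (S.lvdd S.lux_vx (S.mux.mul S.mvx))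

lemma lpx : LST T fun x t => S.θx x t / S.v x t - S.θ x t * S.vx x t / S.v x t ^ 2 :=
  (S.lvd S.lθx S.mθx).sub (S.lvdd (S.lmθ S.lvx S.mvx) (S.mθ.mul S.mvx))

lemma lqx : LST T fun x t => S.θxx x t / S.v x t - S.θx x t * S.vx x t / S.v x t ^ 2 :=
  (S.lvd S.lθxx S.mθxx).sub (S.lvdd S.lθx_vx (S.mθx.mul S.mvx))

lemma lut : LST T S.ut := (S.lgx.const_mul P.μ).sub (S.lpx.const_mul P.R)

lemma lθt : LST T S.θt := by
  have h := (((S.lqx.const_mul P.κ).add ((S.lvd S.lux_ux (S.mux.mul S.mux)).const_mul P.μ)).sub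
    ((S.lvd (S.lmθ S.lux S.mux) (S.mθ.mul S.mux)).const_mul P.R)).const_mul P.cv⁻¹
  convert h using 2 with p
  simp only [θt, Pi.sub_apply, Pi.add_apply]
  ring

end PreFlow

/-! ### A positive lower bound for the temperature -/

/-- `‖f(t) - f(s)‖² ≤ (t - s) ∫∫ f_t²`. -/
lemma time_holder {f g : ℝ → ℝ → ℝ} {T : ℝ} (hc : ∀ x, Continuous (f x))
    (hd : ∀ x, ∀ t ∈ Ioo 0 T, HasDerivAt (f x) (g x t) t) (mg : Meas₂ g) (lg : LST T g)
    {s t : ℝ} (h0 : 0 ≤ s) (hst : s ≤ t) (htT : t ≤ T)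
    (hi : Integrable fun x => (f x t - f x s) ^ 2) :
    ∫ x, (f x t - f x s) ^ 2 ≤ (t - s) * ∫ p, g p.1 p.2 ^ 2 ∂(stMeas T) := by
  have hg2 := int_sq lg
  unfold stMeas at *
  rw [integral_prod _ hg2, ← integral_const_mul]
  refine integral_mono_ae hi (hg2.integral_prod_left.const_mul _) ?_
  filter_upwards [hg2.prod_right_ae] with x hx
  have hsub : Ioc s t ⊆ Icc 0 T := fun r hr => ⟨h0.trans hr.1.le, hr.2.trans htT⟩
  have mx : Measurable (g x) := mg.comp (measurable_const.prodMk measurable_id)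
  have hx' : Integrable (fun r => g x r ^ 2) (volume.restrict (Ioc s t)) :=
    hx.mono_measure (Measure.restrict_mono hsub le_rfl)
  have l1 : MemLp (g x) 2 (volume.restrict (Ioc s t)) :=
    (memLp_two_iff_integrable_sq mx.aestronglyMeasurable).2 hx'
  have l2 : MemLp (fun _ : ℝ => (1 : ℝ)) 2 (volume.restrict (Ioc s t)) := memLp_const 1
  have cs := sq_integral_mul_le l1 l2
  have e := intervalIntegral.integral_eq_sub_of_hasDerivAt_of_le hst (hc x).continuousOn
    (fun r hr => hd x r ⟨h0.trans_lt hr.1, hr.2.trans_le htT⟩)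
    ((intervalIntegrable_iff_integrableOn_Ioc_of_le hst).2
      (by simpa [IntegrableOn] using int_mul l1 l2))
  rw [intervalIntegral.integral_of_le hst] at e
  simp only [mul_one, one_pow, e, integral_const, measureReal_restrict_apply_univ,
    Real.volume_real_Ioc_of_le hst, smul_eq_mul] at cs
  refine cs.trans ?_
  rw [mul_comm]
  refine mul_le_mul_of_nonneg_left ?_ (by linarith)
  exact integral_mono_measure (Measure.restrict_mono hsub le_rfl)
    (Eventually.of_forall fun r => sq_nonneg _) hx

namespace PreFlow

variable {P : Par} {T : ℝ} (S : PreFlow P T)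

lemma slice_low (t : ℝ) : ∃ c, 0 < c ∧ ∀ x, c ≤ S.θ x t := by
  have h1 : ∀ᶠ x in cocompact ℝ, 1 / 2 < S.θ x t :=
    (S.far t).eventually (lt_mem_nhds (by norm_num))
  obtain ⟨k, hk, hk'⟩ := Filter.mem_cocompact.1 h1
  rcases k.eq_empty_or_nonempty with he | hne
  · refine ⟨1 / 2, by norm_num, fun x => ?_⟩
    have := hk' (show x ∈ kᶜ by simp [he])
    exact le_of_lt this
  · obtain ⟨y, _, hy⟩ := hk.exists_isMinOn hne (S.cθ t).continuousOn
    refine ⟨min (1 / 2) (S.θ y t), lt_min (by norm_num) (S.θ_pos y t), fun x => ?_⟩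
    by_cases hx : x ∈ k
    · exact (min_le_right _ _).trans (hy hx)
    · exact (min_le_left _ _).trans (le_of_lt (hk' hx))

lemma diff_bound {s t : ℝ} (hs : s ∈ Icc 0 T) (ht : t ∈ Icc 0 T) {ε : ℝ} (hε : 0 < ε) (x : ℝ) :
    (S.θ x t - S.θ x s) ^ 2 ≤
      ε⁻¹ * (|t - s| * ∫ p, S.θt p.1 p.2 ^ 2 ∂(stMeas T)) + ε * (4 * S.B) := by
  have l : MemLp (fun x => S.θ x t - S.θ x s) 2 volume := by
    have := (S.sθ t).sub (S.sθ s)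
    convert this using 2 with x
    simp
  have l' : MemLp (fun x => S.θx x t - S.θx x s) 2 volume := (S.sθx t).sub (S.sθx s)
  have h := agmon (fun x => (S.dθ x t).fun_sub (S.dθ x s)) l l' hε x
  have b1 : ∫ x, (S.θ x t - S.θ x s) ^ 2 ≤ |t - s| * ∫ p, S.θt p.1 p.2 ^ 2 ∂(stMeas T) := by
    rcases le_total s t with hst | hst
    · rw [abs_of_nonneg (by linarith)]
      exact time_holder S.tθ S.dtθ S.meas_θt S.lθt hs.1 hst ht.2 (int_sq l)
    · rw [abs_of_nonpos (by linarith)]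
      have := time_holder (g := S.θt) S.tθ S.dtθ S.meas_θt S.lθt ht.1 hst hs.2
        (by simpa [sub_sq_comm] using int_sq l)
      simp only [sub_sq_comm (S.θ _ s)] at this
      simpa using this
  have b2 : ∫ x, (S.θx x t - S.θx x s) ^ 2 ≤ 4 * S.B := by
    have := integral_le_comb 2 2 0 0 (int_sq l') (int_sq (S.sθx t)) (int_sq (S.sθx s))
      (int_sq (S.sθx s)) (int_sq (S.sθx s))
      (fun x => by nlinarith [sq_nonneg (S.θx x t + S.θx x s)])
    linarith [S.bθx t, S.bθx s]
  have := mul_le_mul_of_nonneg_left b1 (inv_pos.2 hε).le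
  have := mul_le_mul_of_nonneg_left b2 hε.le
  linarith

lemma exists_low : ∃ c, 0 < c ∧ ∀ t ∈ Icc 0 T, ∀ x, c ≤ S.θ x t := by
  refine isCompact_Icc.induction_on
    (p := fun A : Set ℝ => ∃ c, 0 < c ∧ ∀ t ∈ A, ∀ x, c ≤ S.θ x t)
    ⟨1, one_pos, by simp⟩ (fun A A' h ⟨c, hc, hA⟩ => ⟨c, hc, fun t ht => hA t (h ht)⟩)
    (fun A A' ⟨c, hc, hA⟩ ⟨c', hc', hA'⟩ => ⟨min c c', lt_min hc hc', fun t ht x => ?_⟩) ?_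
  · rcases ht with ht | ht
    · exact (min_le_left _ _).trans (hA t ht x)
    · exact (min_le_right _ _).trans (hA' t ht x)
  · intro s hs
    obtain ⟨c, hc, hcs⟩ := S.slice_low s
    set N := ∫ p, S.θt p.1 p.2 ^ 2 ∂(stMeas T) with hN
    have hN0 : 0 ≤ N := integral_nonneg fun p => sq_nonneg _
    have hB := S.hB
    set ε := c ^ 2 / (32 * (S.B + 1)) with hε
    have hε0 : 0 < ε := by positivity
    set δ := ε * c ^ 2 / (8 * (N + 1)) with hδ
    have hδ0 : 0 < δ := by positivity
    refine ⟨Icc 0 T ∩ Metric.ball s δ,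
      inter_mem_nhdsWithin _ (Metric.ball_mem_nhds s hδ0), c / 2, by positivity, ?_⟩
    rintro t ⟨ht, hts⟩ x
    rw [Metric.mem_ball, Real.dist_eq] at hts
    have h := S.diff_bound hs ht hε0 x
    rw [← hN] at h
    have h1 : ε⁻¹ * (|t - s| * N) ≤ c ^ 2 / 8 := by
      have : |t - s| * N ≤ δ * (N + 1) := by
        nlinarith [abs_nonneg (t - s)]
      have e : ε⁻¹ * (δ * (N + 1)) = c ^ 2 / 8 := by
        rw [hδ]; field_simp
      rw [← e]
      exact mul_le_mul_of_nonneg_left this (inv_pos.2 hε0).le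
    have h2 : ε * (4 * S.B) ≤ c ^ 2 / 8 := by
      have e : ε * (4 * (S.B + 1)) = c ^ 2 / 8 := by rw [hε]; field_simp; norm_num
      nlinarith
    have h3 : (S.θ x t - S.θ x s) ^ 2 ≤ (c / 2) ^ 2 := by linarith
    have h4 := abs_le_of_sq_le_sq h3 (by positivity)
    linarith [hcs x, (abs_le.1 h4).1]

end PreFlow

/-- A `PreFlow` whose temperature is bounded away from zero. -/
structure NSFlow (P : Par) (T : ℝ) extends PreFlow P T where
  low : ∃ c, 0 < c ∧ ∀ x t, c ≤ θ x t

namespace NSFlow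

variable {P : Par} {T : ℝ}

lemma stMeas_mono {t : ℝ} (htT : t ≤ T) : stMeas t ≤ stMeas T :=
  Measure.prod_mono le_rfl (Measure.restrict_mono (Icc_subset_Icc_right htT) le_rfl)

/-- The same flow, considered on a shorter time interval. -/
def restrict (S : NSFlow P T) {t : ℝ} (h0 : 0 < t) (htT : t ≤ T) : NSFlow P t :=
  { S with
    hT := h0
    dtv := fun x r hr => S.dtv x r ⟨hr.1, hr.2.trans_le htT⟩
    dtu := fun x r hr => S.dtu x r ⟨hr.1, hr.2.trans_le htT⟩
    dtθ := fun x r hr => S.dtθ x r ⟨hr.1, hr.2.trans_le htT⟩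
    luxx := S.luxx.mono_measure (stMeas_mono htT)
    lθxx := S.lθxx.mono_measure (stMeas_mono htT) }

end NSFlow

/-! ### Testing the energy equation with functions of the temperature -/

/-- On an interval containing `1`, a function vanishing to first order at `1` is bounded by a
multiple of `(s - 1)²`, its derivative by a multiple of `|s - 1|`. -/
lemma taylor_bounds {Φ φ φ' : ℝ → ℝ} (hΦ : ∀ s, 0 < s → HasDerivAt Φ (φ s) s)
    (hφ : ∀ s, 0 < s → HasDerivAt φ (φ' s) s) (hc : ContinuousOn φ' (Ioi 0)) (h1 : Φ 1 = 0)
    (h1' : φ 1 = 0) {c N : ℝ} (hc0 : 0 < c) (hN : 1 ≤ N) (hc1 : c ≤ 1) :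
    ∃ L, 0 ≤ L ∧ ∀ s ∈ Icc c N, |φ' s| ≤ L ∧ |φ s| ≤ L * |s - 1| ∧ |Φ s| ≤ L * |s - 1| ^ 2 := by
  have hsub : Icc c N ⊆ Ioi 0 := fun s hs => hc0.trans_le hs.1
  obtain ⟨L, hL⟩ := isCompact_Icc.exists_bound_of_continuousOn (hc.mono hsub)
  simp only [Real.norm_eq_abs] at hL
  have m1 : (1 : ℝ) ∈ Icc c N := ⟨hc1, hN⟩
  have hL0 : 0 ≤ L := (abs_nonneg _).trans (hL 1 m1)
  have b1 : ∀ s ∈ Icc c N, |φ s| ≤ L * |s - 1| := fun s hs => by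
    have := (convex_Icc c N).norm_image_sub_le_of_norm_hasDerivWithin_le
      (fun r hr => (hφ r (hsub hr)).hasDerivWithinAt) hL m1 hs
    simpa [h1'] using this
  refine ⟨L, hL0, fun s hs => ⟨hL s hs, b1 s hs, ?_⟩⟩
  have huI : uIcc 1 s ⊆ Icc c N := (ordConnected_Icc).uIcc_subset m1 hs
  have := (convex_uIcc 1 s).norm_image_sub_le_of_norm_hasDerivWithin_le (C := L * |s - 1|)
      (fun r hr => (hΦ r (hsub (huI hr))).hasDerivWithinAt)
      (fun r hr => (b1 r (huI hr)).trans
        (mul_le_mul_of_nonneg_left (abs_sub_left_of_mem_uIcc hr) hL0))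
      left_mem_uIcc right_mem_uIcc
  simp only [h1, sub_zero, Real.norm_eq_abs] at this
  linarith

namespace NSFlow

variable {P : Par} {T : ℝ} (S : NSFlow P T)

lemma range : ∃ c N, 0 < c ∧ c ≤ 1 ∧ 1 ≤ N ∧ ∀ x t, S.θ x t ∈ Icc c N := by
  obtain ⟨c, hc, h⟩ := S.low
  obtain ⟨N, hN, hle⟩ := S.θ_bdd
  exact ⟨min c 1, N, lt_min hc one_pos, min_le_right _ _, hN,
    fun x t => ⟨(min_le_left _ _).trans (h x t), hle x t⟩⟩

/-- The integrability facts behind `NSFlow.test`. -/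
lemma test_memLp {Φ φ φ' : ℝ → ℝ} (hΦ : ∀ s, 0 < s → HasDerivAt Φ (φ s) s)
    (hφ : ∀ s, 0 < s → HasDerivAt φ (φ' s) s) (hc : ContinuousOn φ' (Ioi 0)) (h1 : Φ 1 = 0)
    (h1' : φ 1 = 0) (mΦ : Measurable Φ) (mφ : Measurable φ) (mφ' : Measurable φ') :
    LST T (fun x t => φ (S.θ x t)) ∧ LST T (fun x t => φ' (S.θ x t) * S.θx x t) ∧
    ∀ t, Integrable fun x => Φ (S.θ x t) := by
  obtain ⟨c, N, hc0, hc1, hN, hr⟩ := S.range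
  obtain ⟨L, hL, hb⟩ := taylor_bounds hΦ hφ hc h1 h1' hc0 hN hc1
  refine ⟨?_, ?_, fun t => ?_⟩
  · exact memLp_of_bound L S.lθ (mφ.comp S.mθ).aestronglyMeasurable fun p => (hb _ (hr _ _)).2.1
  · exact PreFlow.lmul S.lθx (mφ'.comp S.mθ) S.mθx fun x t => (hb _ (hr _ _)).1
  · refine ((int_sq (S.sθ t)).const_mul L).mono'
      (mΦ.comp (S.cθ t).measurable).aestronglyMeasurable (Eventually.of_forall fun x => ?_)
    have := (hb _ (hr x t)).2.2
    rwa [sq_abs] at this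

/-- The energy equation multiplied by `φ(θ)` and integrated over `ℝ × [0, T]`. -/
lemma test {Φ φ φ' : ℝ → ℝ} (hΦ : ∀ s, 0 < s → HasDerivAt Φ (φ s) s)
    (hφ : ∀ s, 0 < s → HasDerivAt φ (φ' s) s) (hc : ContinuousOn φ' (Ioi 0)) (h1 : Φ 1 = 0)
    (h1' : φ 1 = 0) (mΦ : Measurable Φ) (mφ : Measurable φ) (mφ' : Measurable φ') :
    Integrable (fun p : ℝ × ℝ => φ' (S.θ p.1 p.2) * S.θx p.1 p.2 * (S.θx p.1 p.2 / S.v p.1 p.2))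
      (stMeas T) ∧
    Integrable (fun p : ℝ × ℝ => φ (S.θ p.1 p.2) * (S.ux p.1 p.2 * S.ux p.1 p.2 / S.v p.1 p.2))
      (stMeas T) ∧
    Integrable (fun p : ℝ × ℝ => φ (S.θ p.1 p.2) * (S.θ p.1 p.2 * S.ux p.1 p.2 / S.v p.1 p.2))
      (stMeas T) ∧
    P.cv * ∫ x, Φ (S.θ x T) = P.cv * (∫ x, Φ (S.θ x 0))
      - P.κ * (∫ p, φ' (S.θ p.1 p.2) * S.θx p.1 p.2 * (S.θx p.1 p.2 / S.v p.1 p.2) ∂(stMeas T))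
      + P.μ * (∫ p, φ (S.θ p.1 p.2) * (S.ux p.1 p.2 * S.ux p.1 p.2 / S.v p.1 p.2) ∂(stMeas T))
      - P.R * ∫ p, φ (S.θ p.1 p.2) * (S.θ p.1 p.2 * S.ux p.1 p.2 / S.v p.1 p.2) ∂(stMeas T) := by
  obtain ⟨l1, l2, l3⟩ := S.test_memLp hΦ hφ hc h1 h1' mΦ mφ mφ'
  have lq := S.lvd S.lθx S.mθx
  have j1 := int_mul l2 lq
  have j2 := int_mul l1 (S.lvd S.lux_ux (S.mux.mul S.mux))
  have j3 := int_mul l1 (S.lvd (S.lmθ S.lux S.mux) (S.mθ.mul S.mux))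
  refine ⟨j1, j2, j3, ?_⟩
  have ht := integral_time_deriv (F := fun x t => Φ (S.θ x t))
    (G := fun x t => φ (S.θ x t) * S.θt x t) S.hT.le
    (fun x => Continuous.continuousOn (continuous_iff_continuousAt.2 fun t =>
      ((hΦ _ (S.θ_pos x t)).continuousAt.comp (S.tθ x).continuousAt :)))
    (fun x t h => (hΦ _ (S.θ_pos x t)).comp t (S.dtθ x t h)) (int_mul l1 S.lθt) (l3 0) (l3 T)
  have hparts := integral_parts (a := fun x t => φ (S.θ x t))
    (a' := fun x t => φ' (S.θ x t) * S.θx x t) (b := fun x t => S.θx x t / S.v x t)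
    (b' := fun x t => S.θxx x t / S.v x t - S.θx x t * S.vx x t / S.v x t ^ 2)
    (fun x t => (hφ _ (S.θ_pos x t)).comp x (S.dθ x t))
    (fun x t => ((S.dθx x t).fun_div (S.dv x t) (S.v_pos x t).ne').congr_deriv (by
      have := (S.v_pos x t).ne'
      field_simp))
    (mφ.comp S.mθ) ((mφ'.comp S.mθ).mul S.mθx) (S.mθx.div S.mv)
    ((S.mθxx.div S.mv).sub ((S.mθx.mul S.mvx).div (S.mv.pow_const 2))) l1 l2 lq S.lqx
  have e := integral_eq_comb (F := fun p : ℝ × ℝ => φ (S.θ p.1 p.2) * S.θt p.1 p.2)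
    (P.κ / P.cv) (P.μ / P.cv) (-P.R / P.cv) 0 (int_mul l1 S.lqx) j2 j3 j3 (fun p => by
      simp only [PreFlow.θt]; ring)
  rw [hparts] at e
  rw [ht, e]
  have := P.hcv.ne'
  field_simp
  ring

end NSFlow

/-! ### The basic energy estimate -/

lemma log_defect_le {s : ℝ} (hs : 0 < s) : s - Real.log s - 1 ≤ s⁻¹ * (s - 1) ^ 2 := by
  have h := Real.log_le_sub_one_of_pos (inv_pos.2 hs)
  rw [Real.log_inv] at h
  have : s⁻¹ * (s - 1) ^ 2 = s - 2 + s⁻¹ := by field_simp; ring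
  linarith

lemma log_defect_nonneg {s : ℝ} (hs : 0 < s) : 0 ≤ s - Real.log s - 1 := by
  linarith [Real.log_le_sub_one_of_pos hs]

lemma hasDerivAt_log_defect {s : ℝ} (hs : 0 < s) :
    HasDerivAt (fun s => s - Real.log s - 1) (1 - s⁻¹) s :=
  ((hasDerivAt_id s).fun_sub (Real.hasDerivAt_log hs.ne')).sub_const 1

lemma hasDerivAt_one_sub_inv {s : ℝ} (hs : 0 < s) :
    HasDerivAt (fun s : ℝ => 1 - s⁻¹) ((s ^ 2)⁻¹) s :=
  ((hasDerivAt_const s (1 : ℝ)).fun_sub (hasDerivAt_inv hs.ne')).congr_deriv (by simp)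

namespace NSFlow

variable {P : Par} {T : ℝ} (S : NSFlow P T)

lemma lθd {f : ℝ → ℝ → ℝ} (hf : LST T f) (mf : Meas₂ f) : LST T fun x t => f x t / S.θ x t := by
  obtain ⟨c, hc, h⟩ := S.low
  have : ∀ x t, |(S.θ x t)⁻¹| ≤ c⁻¹ := fun x t => by
    rw [abs_of_pos (inv_pos.2 (S.θ_pos x t))]; exact inv_anti₀ hc (h x t)
  simpa [div_eq_inv_mul] using PreFlow.lmul hf S.mθ.inv mf this

/-- `½ ∫ u²` evolves by `∫∫ u u_t`. -/
lemma u_energy : ∫ x, S.u x T ^ 2 = (∫ x, S.u x 0 ^ 2)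
    + 2 * ∫ p, S.u p.1 p.2 * S.ut p.1 p.2 ∂(stMeas T) := by
  rw [← integral_const_mul]
  refine integral_time_deriv (F := fun x t => S.u x t ^ 2)
    (G := fun x t => 2 * (S.u x t * S.ut x t)) S.hT.le
    (fun x => ((S.tu x).pow 2).continuousOn)
    (fun x t h => ((S.dtu x t h).fun_pow 2).congr_deriv ?_)
    ((int_mul S.lu S.lut).const_mul 2) (int_sq (S.su 0)) (int_sq (S.su T))
  simp only [PreFlow.ut]
  push_cast
  ring

lemma lp : LST T fun x t => S.θ x t / S.v x t - 1 := by
  have h := (S.lvd S.lθ (S.mθ.sub_const 1)).sub (S.lvd S.lv (S.mv.sub_const 1))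
  convert h using 2 with p
  have := (S.v_pos p.1 p.2).ne'
  simp only [Pi.sub_apply]
  field_simp
  ring

lemma dg (x t : ℝ) : HasDerivAt (fun y => S.ux y t / S.v y t)
    (S.uxx x t / S.v x t - S.ux x t * S.vx x t / S.v x t ^ 2) x :=
  ((S.dux x t).fun_div (S.dv x t) (S.v_pos x t).ne').congr_deriv (by
    have := (S.v_pos x t).ne'
    field_simp)

lemma dp (x t : ℝ) : HasDerivAt (fun y => S.θ y t / S.v y t - 1)
    (S.θx x t / S.v x t - S.θ x t * S.vx x t / S.v x t ^ 2) x :=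
  (((S.dθ x t).fun_div (S.dv x t) (S.v_pos x t).ne').sub_const 1).congr_deriv (by
    have := (S.v_pos x t).ne'
    field_simp)

lemma mgx : Meas₂ fun x t => S.uxx x t / S.v x t - S.ux x t * S.vx x t / S.v x t ^ 2 :=
  (S.muxx.div S.mv).sub ((S.mux.mul S.mvx).div (S.mv.pow_const 2))

lemma mpx : Meas₂ fun x t => S.θx x t / S.v x t - S.θ x t * S.vx x t / S.v x t ^ 2 :=
  (S.mθx.div S.mv).sub ((S.mθ.mul S.mvx).div (S.mv.pow_const 2))

lemma parts_g : ∫ p, S.u p.1 p.2 * (S.uxx p.1 p.2 / S.v p.1 p.2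
      - S.ux p.1 p.2 * S.vx p.1 p.2 / S.v p.1 p.2 ^ 2) ∂(stMeas T)
    = -∫ p, S.ux p.1 p.2 * (S.ux p.1 p.2 / S.v p.1 p.2) ∂(stMeas T) :=
  integral_parts S.du S.dg S.mu S.mux (S.mux.div S.mv) S.mgx S.lu S.lux (S.lvd S.lux S.mux) S.lgx

lemma parts_p : ∫ p, S.u p.1 p.2 * (S.θx p.1 p.2 / S.v p.1 p.2
      - S.θ p.1 p.2 * S.vx p.1 p.2 / S.v p.1 p.2 ^ 2) ∂(stMeas T)
    = -∫ p, S.ux p.1 p.2 * (S.θ p.1 p.2 / S.v p.1 p.2 - 1) ∂(stMeas T) :=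
  integral_parts S.du S.dp S.mu S.mux ((S.mθ.div S.mv).sub_const 1) S.mpx S.lu S.lux S.lp S.lpx

lemma u_ut : ∫ p, S.u p.1 p.2 * S.ut p.1 p.2 ∂(stMeas T)
    = -P.μ * (∫ p, S.ux p.1 p.2 * (S.ux p.1 p.2 / S.v p.1 p.2) ∂(stMeas T))
      + P.R * ∫ p, S.ux p.1 p.2 * (S.θ p.1 p.2 / S.v p.1 p.2 - 1) ∂(stMeas T) := by
  have i1 := int_mul S.lu S.lgx
  have i2 := int_mul S.lu S.lpx
  have e := integral_eq_comb (F := fun p : ℝ × ℝ => S.u p.1 p.2 * S.ut p.1 p.2)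
    P.μ (-P.R) 0 0 i1 i2 i2 i2 (fun p => by simp only [PreFlow.ut]; ring)
  rw [e, S.parts_g, S.parts_p]
  ring

lemma lviv : LST T fun x t => 1 - (S.v x t)⁻¹ := by
  have h := S.lvd S.lv (S.mv.sub_const 1)
  convert h using 3 with x t
  have := (S.v_pos x t).ne'
  field_simp

lemma iψ (t : ℝ) : Integrable fun x => S.v x t - Real.log (S.v x t) - 1 := by
  refine ((int_sq (S.sv t)).const_mul P.K).mono'
    (((S.cv t).measurable.sub (Real.measurable_log.comp (S.cv t).measurable)).sub_const
      1).aestronglyMeasurable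
    (Eventually.of_forall fun x => ?_)
  rw [Real.norm_of_nonneg (log_defect_nonneg (S.v_pos x t))]
  exact (log_defect_le (S.v_pos x t)).trans
    (mul_le_mul_of_nonneg_right (S.inv_v_le x t) (sq_nonneg _))

lemma v_energy : ∫ x, (S.v x T - Real.log (S.v x T) - 1)
    = (∫ x, (S.v x 0 - Real.log (S.v x 0) - 1))
      + ∫ p, (1 - (S.v p.1 p.2)⁻¹) * S.ux p.1 p.2 ∂(stMeas T) :=
  integral_time_deriv (F := fun x t => S.v x t - Real.log (S.v x t) - 1)
    (G := fun x t => (1 - (S.v x t)⁻¹) * S.ux x t) S.hT.le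
    (fun x => Continuous.continuousOn (by
      have := S.tv x
      have h0 := fun t => (S.v_pos x t).ne'
      fun_prop (disch := assumption)))
    (fun x t h => ((hasDerivAt_log_defect (S.v_pos x t)).comp t (S.dtv x t h) :))
    (int_mul S.lviv S.lux) (S.iψ 0) (S.iψ T)

lemma iφ (t : ℝ) : Integrable fun x => S.θ x t - Real.log (S.θ x t) - 1 :=
  (S.test_memLp (Φ := fun s => s - Real.log s - 1) (φ := fun s => 1 - s⁻¹)
    (φ' := fun s => (s ^ 2)⁻¹) (fun _ h => hasDerivAt_log_defect h)
    (fun _ h => hasDerivAt_one_sub_inv h)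
    (ContinuousOn.inv₀ (by fun_prop) fun s hs => (pow_pos hs 2).ne') (by simp) (by simp)
    (by fun_prop) (by fun_prop) (by fun_prop)).2.2 t

/-- Conservation of energy and production of entropy combined. -/
lemma energy_identity :
    (∫ x, S.u x T ^ 2) / 2 + P.cv * (∫ x, (S.θ x T - Real.log (S.θ x T) - 1))
      + P.R * (∫ x, (S.v x T - Real.log (S.v x T) - 1))
      + P.κ * (∫ p, (S.θx p.1 p.2 / S.θ p.1 p.2) ^ 2 / S.v p.1 p.2 ∂(stMeas T))
      + P.μ * (∫ p, S.ux p.1 p.2 ^ 2 / S.θ p.1 p.2 / S.v p.1 p.2 ∂(stMeas T))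
    = (∫ x, S.u x 0 ^ 2) / 2 + P.cv * (∫ x, (S.θ x 0 - Real.log (S.θ x 0) - 1))
      + P.R * (∫ x, (S.v x 0 - Real.log (S.v x 0) - 1)) := by
  obtain ⟨j1, j2, j3, e⟩ := S.test (Φ := fun s => s - Real.log s - 1) (φ := fun s => 1 - s⁻¹)
    (φ' := fun s => (s ^ 2)⁻¹) (fun _ h => hasDerivAt_log_defect h)
    (fun _ h => hasDerivAt_one_sub_inv h)
    (ContinuousOn.inv₀ (by fun_prop) fun s hs => (pow_pos hs 2).ne') (by simp) (by simp)
    (by fun_prop) (by fun_prop) (by fun_prop)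
  have e1 := S.u_energy
  have e2 := S.u_ut
  have e3 := S.v_energy
  have i1 := int_mul S.lux (S.lvd S.lux S.mux)
  have i2 := int_mul S.lux S.lp
  have i3 := int_mul S.lviv S.lux
  have a1 := integral_eq_comb (F := fun p : ℝ × ℝ => S.ux p.1 p.2 * (S.θ p.1 p.2 / S.v p.1 p.2 - 1))
    1 (-1) 0 0 j3 i3 i3 i3 (fun p => by
      have := (S.v_pos p.1 p.2).ne'
      have := (S.θ_pos p.1 p.2).ne'
      field_simp
      ring)
  have a2 := integral_eq_comb
    (F := fun p : ℝ × ℝ => S.ux p.1 p.2 ^ 2 / S.θ p.1 p.2 / S.v p.1 p.2)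
    1 (-1) 0 0 i1 j2 j2 j2 (fun p => by
      have := (S.v_pos p.1 p.2).ne'
      have := (S.θ_pos p.1 p.2).ne'
      field_simp
      ring)
  have a3 := integral_eq_comb
    (F := fun p : ℝ × ℝ => (S.θx p.1 p.2 / S.θ p.1 p.2) ^ 2 / S.v p.1 p.2)
    1 0 0 0 j1 j1 j1 j1 (fun p => by
      have := (S.v_pos p.1 p.2).ne'
      have := (S.θ_pos p.1 p.2).ne'
      field_simp
      ring)
  rw [a1] at e2
  rw [a2, a3]
  linear_combination e + (1 / 2) * e1 + e2 + P.R * e3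

end NSFlow

/-- A bound for the initial energy. -/
noncomputable def Par.E₀ (P : Par) : ℝ :=
  P.M ^ 2 / 2 + P.cv * (P.m⁻¹ * P.M ^ 2) + P.R * (P.K * P.M ^ 2)

namespace NSFlow

variable {P : Par} {T : ℝ} (S : NSFlow P T)

lemma init_defect : ∫ x, (S.θ x 0 - Real.log (S.θ x 0) - 1) ≤ P.m⁻¹ * P.M ^ 2 := by
  have i := int_sq (S.sθ 0)
  have := integral_le_comb P.m⁻¹ 0 0 0 (S.iφ 0) i i i i (fun x => by
    have := (log_defect_le (S.θ_pos x 0)).trans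
      (mul_le_mul_of_nonneg_right (inv_anti₀ P.hm (S.imθ x)) (sq_nonneg _))
    linarith)
  nlinarith [S.iθ, inv_pos.2 P.hm]

lemma energy_bound :
    (∫ x, S.u x T ^ 2) / 2 + P.cv * (∫ x, (S.θ x T - Real.log (S.θ x T) - 1))
      + P.κ * (P.K⁻¹ * ∫ p, (S.θx p.1 p.2 / S.θ p.1 p.2) ^ 2 ∂(stMeas T))
      + P.μ * (P.K⁻¹ * ∫ p, S.ux p.1 p.2 * (S.ux p.1 p.2 / S.θ p.1 p.2) ∂(stMeas T)) ≤ P.E₀ := by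
  have e := S.energy_identity
  have hv : 0 ≤ ∫ x, (S.v x T - Real.log (S.v x T) - 1) :=
    integral_nonneg fun x => log_defect_nonneg (S.v_pos x T)
  have b1 : ∫ x, (S.v x 0 - Real.log (S.v x 0) - 1) ≤ P.K * P.M ^ 2 := by
    have i := int_sq (S.sv 0)
    have := integral_le_comb P.K 0 0 0 (S.iψ 0) i i i i (fun x => by
      have := (log_defect_le (S.v_pos x 0)).trans
        (mul_le_mul_of_nonneg_right (S.inv_v_le x 0) (sq_nonneg _))
      linarith)
    nlinarith [S.iv, P.Kpos]
  have b2 := S.init_defect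
  have l1 := S.lθd S.lθx S.mθx
  have i1 := int_sq l1
  have i1' := int_mul l1 (S.lvd l1 (S.mθx.div S.mθ))
  have c1 := integral_le_comb
    (F := fun p : ℝ × ℝ => P.K⁻¹ * (S.θx p.1 p.2 / S.θ p.1 p.2) ^ 2) 1 0 0 0
    (i1.const_mul _) i1' i1' i1' i1' (fun p => by
      have := mul_le_mul_of_nonneg_right (S.le_inv_v p.1 p.2)
        (sq_nonneg (S.θx p.1 p.2 / S.θ p.1 p.2))
      refine this.trans (le_of_eq ?_)
      ring)
  have c1' := integral_eq_comb
    (F := fun p : ℝ × ℝ => (S.θx p.1 p.2 / S.θ p.1 p.2) ^ 2 / S.v p.1 p.2) 1 0 0 0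
    i1' i1' i1' i1' (fun p => by ring)
  have i2 := int_mul S.lux (S.lθd S.lux S.mux)
  have i2' := int_mul S.lux (S.lvd (S.lθd S.lux S.mux) (S.mux.div S.mθ))
  have c2 := integral_le_comb
    (F := fun p : ℝ × ℝ => P.K⁻¹ * (S.ux p.1 p.2 * (S.ux p.1 p.2 / S.θ p.1 p.2))) 1 0 0 0
    (i2.const_mul _) i2' i2' i2' i2' (fun p => by
      have := mul_le_mul_of_nonneg_right (S.le_inv_v p.1 p.2)
        (div_nonneg (sq_nonneg (S.ux p.1 p.2)) (S.θ_pos p.1 p.2).le)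
      have e : S.ux p.1 p.2 * (S.ux p.1 p.2 / S.θ p.1 p.2) = S.ux p.1 p.2 ^ 2 / S.θ p.1 p.2 := by
        ring
      rw [e]
      refine this.trans (le_of_eq ?_)
      ring)
  have c2' := integral_eq_comb
    (F := fun p : ℝ × ℝ => S.ux p.1 p.2 ^ 2 / S.θ p.1 p.2 / S.v p.1 p.2) 1 0 0 0
    i2' i2' i2' i2' (fun p => by ring)
  rw [integral_const_mul] at c1 c2
  have d1 := mul_le_mul_of_nonneg_left (c1.trans_eq c1'.symm) P.hκ.le
  have d2 := mul_le_mul_of_nonneg_left (c2.trans_eq c2'.symm) P.hμ.le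
  have d3 := mul_le_mul_of_nonneg_left b1 P.hR.le
  have d4 := mul_le_mul_of_nonneg_left b2 P.hcv.le
  have d5 := mul_nonneg P.hR.le hv
  unfold Par.E₀
  linarith [S.iu]

end NSFlow

lemma exists_energy_const (P : Par) : ∃ C, 0 < C ∧ ∀ T (S : NSFlow P T),
    ∫ x, S.u x T ^ 2 ≤ C ∧ ∫ x, (S.θ x T - Real.log (S.θ x T) - 1) ≤ C ∧
    ∫ p, (S.θx p.1 p.2 / S.θ p.1 p.2) ^ 2 ∂(stMeas T) ≤ C ∧
    ∫ p, S.ux p.1 p.2 * (S.ux p.1 p.2 / S.θ p.1 p.2) ∂(stMeas T) ≤ C := by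
  have hμ := P.hμ; have hκ := P.hκ; have hR := P.hR; have hcv := P.hcv; have hM := P.hM
  have hm := P.hm; have hK := P.Kpos
  have hE : 0 < P.E₀ := by unfold Par.E₀; positivity
  refine ⟨P.E₀ * (2 + P.cv⁻¹ + P.K / P.κ + P.K / P.μ), by positivity, fun T S => ?_⟩
  have e := S.energy_bound
  have n1 : 0 ≤ ∫ x, S.u x T ^ 2 := integral_nonneg fun x => sq_nonneg _
  have n2 : 0 ≤ ∫ x, (S.θ x T - Real.log (S.θ x T) - 1) :=
    integral_nonneg fun x => log_defect_nonneg (S.θ_pos x T)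
  have n3 : 0 ≤ ∫ p, (S.θx p.1 p.2 / S.θ p.1 p.2) ^ 2 ∂(stMeas T) :=
    integral_nonneg fun x => sq_nonneg _
  have n4 : 0 ≤ ∫ p, S.ux p.1 p.2 * (S.ux p.1 p.2 / S.θ p.1 p.2) ∂(stMeas T) :=
    integral_nonneg fun p => by
      have := div_nonneg (sq_nonneg (S.ux p.1 p.2)) (S.θ_pos p.1 p.2).le
      show 0 ≤ S.ux p.1 p.2 * (S.ux p.1 p.2 / S.θ p.1 p.2)
      rwa [mul_div_assoc', ← sq]
  generalize (∫ x, S.u x T ^ 2) = a at *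
  generalize (∫ x, (S.θ x T - Real.log (S.θ x T) - 1)) = b at *
  generalize (∫ p, (S.θx p.1 p.2 / S.θ p.1 p.2) ^ 2 ∂(stMeas T)) = c at *
  generalize (∫ p, S.ux p.1 p.2 * (S.ux p.1 p.2 / S.θ p.1 p.2) ∂(stMeas T)) = d at *
  generalize P.E₀ = E at *
  have m2 : 0 ≤ P.cv * b := by positivity
  have m3 : 0 ≤ P.κ * (P.K⁻¹ * c) := by positivity
  have m4 : 0 ≤ P.μ * (P.K⁻¹ * d) := by positivity
  have p1 : 0 ≤ E * P.cv⁻¹ := by positivity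
  have p2 : 0 ≤ E * (P.K / P.κ) := by positivity
  have p3 : 0 ≤ E * (P.K / P.μ) := by positivity
  have q2 : b ≤ E * P.cv⁻¹ := by
    rw [← div_eq_mul_inv, le_div_iff₀ hcv]; linarith
  have q3 : c ≤ E * (P.K / P.κ) := by
    have h : P.κ * (P.K⁻¹ * c) ≤ E := by linarith
    calc c = (P.K / P.κ) * (P.κ * (P.K⁻¹ * c)) := by field_simp
      _ ≤ (P.K / P.κ) * E := mul_le_mul_of_nonneg_left h (by positivity)
      _ = _ := by ring
  have q4 : d ≤ E * (P.K / P.μ) := by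
    have h : P.μ * (P.K⁻¹ * d) ≤ E := by linarith
    calc d = (P.K / P.μ) * (P.μ * (P.K⁻¹ * d)) := by field_simp
      _ ≤ (P.K / P.μ) * E := mul_le_mul_of_nonneg_left h (by positivity)
      _ = _ := by ring
  refine ⟨?_, ?_, ?_, ?_⟩ <;> linarith

/-! ### A cut-off for high temperatures -/

/-- The positive part of `s - 2`. -/
noncomputable def cut (s : ℝ) : ℝ := max (s - 2) 0

/-- A cut-off function of the temperature: it vanishes for `s ≤ 2`, and equals `1 - 2 / s`
for `s ≥ 2`. -/
noncomputable def rr (s : ℝ) : ℝ := cut s / s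

lemma cut_nonneg (s : ℝ) : 0 ≤ cut s := le_max_right _ _

lemma cut_continuous : Continuous cut := by unfold cut; fun_prop

lemma rr_measurable : Measurable rr := cut_continuous.measurable.div measurable_id

lemma hasDerivAt_cut_pow (k : ℕ) (s : ℝ) :
    HasDerivAt (fun s => cut s ^ (k + 2)) ((k + 2) * cut s ^ (k + 1)) s := by
  have key : ∀ y ≠ (2 : ℝ),
      HasDerivAt (fun s => cut s ^ (k + 2)) ((k + 2) * cut y ^ (k + 1)) y := by
    intro y hy
    rcases lt_or_gt_of_ne hy with h | h
    · have e : (fun s => cut s ^ (k + 2)) =ᶠ[nhds y] fun _ => 0 := by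
        filter_upwards [gt_mem_nhds h] with z hz
        rw [cut, max_eq_right (by linarith)]; simp
      refine ((hasDerivAt_const y (0 : ℝ)).congr_of_eventuallyEq e).congr_deriv ?_
      rw [cut, max_eq_right (by linarith)]; simp
    · have e : (fun s => cut s ^ (k + 2)) =ᶠ[nhds y] fun s => (s - 2) ^ (k + 2) := by
        filter_upwards [lt_mem_nhds h] with z hz
        rw [cut, max_eq_left (by linarith)]
      refine ((((hasDerivAt_id y).sub_const 2).fun_pow (k + 2)).congr_of_eventuallyEq
        e).congr_deriv ?_
      rw [cut, max_eq_left (by linarith)]; simp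
  have hc := cut_continuous
  exact hasDerivAt_of_hasDerivAt_of_ne' (x := 2) key (by fun_prop) (by fun_prop) s

lemma rr_cases {s : ℝ} (hs : 0 < s) : (s ≤ 2 ∧ rr s = 0 ∧ cut s = 0) ∨
    (2 < s ∧ cut s = s - 2 ∧ s * rr s = s - 2) := by
  rcases le_or_gt s 2 with h | h
  · have : cut s = 0 := by rw [cut, max_eq_right (by linarith)]
    exact Or.inl ⟨h, by simp [rr, this], this⟩
  · have : cut s = s - 2 := by rw [cut, max_eq_left (by linarith)]
    exact Or.inr ⟨h, this, by rw [rr, this]; field_simp⟩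

lemma s_mul_rr {s : ℝ} (hs : 0 < s) : s * rr s = cut s := by unfold rr; field_simp

lemma rr_nonneg {s : ℝ} (hs : 0 < s) : 0 ≤ rr s := div_nonneg (cut_nonneg s) hs.le

lemma rr_le_one {s : ℝ} (hs : 0 < s) : rr s ≤ 1 := by
  rw [rr, div_le_one hs, cut]; exact max_le (by linarith) hs.le

lemma cut_le_abs {s : ℝ} : cut s ≤ |s - 1| :=
  max_le (by linarith [le_abs_self (s - 1)]) (abs_nonneg _)

lemma cut_le_sq {s : ℝ} : cut s ≤ (s - 1) ^ 2 :=
  max_le (by nlinarith [sq_nonneg (s - 1 - 1)]) (sq_nonneg _)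

lemma rr_continuousOn : ContinuousOn rr (Ioi 0) :=
  cut_continuous.continuousOn.div continuousOn_id fun _ hs => (ne_of_gt hs)

lemma hasDerivAt_rr_pow (k : ℕ) {s : ℝ} (hs : 0 < s) :
    HasDerivAt (fun s => rr s ^ (k + 2)) ((k + 2) * rr s ^ (k + 1) * ((1 - rr s) / s)) s := by
  have h := (hasDerivAt_cut_pow k s).fun_div (hasDerivAt_pow (k + 2) s) (pow_pos hs _).ne'
  simp only [rr, div_pow]
  refine h.congr_deriv ?_
  push_cast
  field_simp
  ring

/-- High temperatures are controlled by the entropy density. -/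
lemma cut_le_defect {s : ℝ} (hs : 0 < s) : cut s ≤ 2 * (s - Real.log s - 1) := by
  refine max_le ?_ (by linarith [log_defect_nonneg hs])
  have h1 : Real.log s = Real.log (s / 2) + Real.log 2 := by
    rw [Real.log_div hs.ne' (by norm_num)]; ring
  have h2 := Real.log_le_sub_one_of_pos (show 0 < s / 2 by positivity)
  have h3 := Real.log_two_lt_d9
  linarith

/-- Derivative of `s rr(s)³`, the function whose supremum is estimated in `aux_slice`. -/
lemma hasDerivAt_f1 {s : ℝ} (hs : 0 < s) :
    HasDerivAt (fun s => s * rr s ^ 3) (3 * rr s ^ 2 - 2 * rr s ^ 3) s := by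
  refine ((hasDerivAt_id s).fun_mul (hasDerivAt_rr_pow 1 hs)).congr_deriv ?_
  simp only [id]
  push_cast
  field_simp
  ring

/-- `s rr(s)⁵` is the primitive of the test function used to bound `∫∫ u_x²`; its derivative,
the test function itself, is bounded below at high temperatures (`f2_lower`). -/
lemma hasDerivAt_f2 {s : ℝ} (hs : 0 < s) :
    HasDerivAt (fun s => s * rr s ^ 5) (5 * rr s ^ 4 - 4 * rr s ^ 5) s := by
  refine ((hasDerivAt_id s).fun_mul (hasDerivAt_rr_pow 3 hs)).congr_deriv ?_
  simp only [id]
  push_cast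
  field_simp
  ring

lemma hasDerivAt_f2' {s : ℝ} (hs : 0 < s) :
    HasDerivAt (fun s => 5 * rr s ^ 4 - 4 * rr s ^ 5) (20 * rr s ^ 3 * ((1 - rr s) ^ 2 / s)) s := by
  refine (((hasDerivAt_rr_pow 2 hs).const_mul 5).fun_sub
    ((hasDerivAt_rr_pow 3 hs).const_mul 4)).congr_deriv ?_
  push_cast
  field_simp
  ring

/-- `s² rr(s)⁵` is the primitive of the test function used to bound `∫∫ θ_x²`; its second
derivative is bounded below at high temperatures. -/
lemma hasDerivAt_f3 {s : ℝ} (hs : 0 < s) :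
    HasDerivAt (fun s => s ^ 2 * rr s ^ 5) (s * (5 * rr s ^ 4 - 3 * rr s ^ 5)) s := by
  refine ((hasDerivAt_pow 2 s).fun_mul (hasDerivAt_rr_pow 3 hs)).congr_deriv ?_
  push_cast
  field_simp
  ring

lemma hasDerivAt_f3' {s : ℝ} (hs : 0 < s) :
    HasDerivAt (fun s => s * (5 * rr s ^ 4 - 3 * rr s ^ 5))
      (20 * rr s ^ 3 - 30 * rr s ^ 4 + 12 * rr s ^ 5) s := by
  refine ((hasDerivAt_id s).fun_mul (((hasDerivAt_rr_pow 2 hs).const_mul 5).fun_sub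
    ((hasDerivAt_rr_pow 3 hs).const_mul 3))).congr_deriv ?_
  simp only [id]
  push_cast
  field_simp
  ring

lemma rr_one : rr 1 = 0 := by simp [rr, cut]

/-- For temperatures above `4` the cut-off is at least `1 / 2`. -/
lemma half_le_rr {s : ℝ} (hs : 4 ≤ s) : 1 / 2 ≤ rr s := by
  rcases rr_cases (show 0 < s by linarith) with h | h
  · linarith [h.1]
  · nlinarith [h.2.2]

lemma f2_lower {s : ℝ} (hs : 0 < s) : 1 ≤ 4 / s + 16 * (5 * rr s ^ 4 - 4 * rr s ^ 5) := by
  have h0 := rr_nonneg hs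
  have h1 := rr_le_one hs
  have e : 5 * rr s ^ 4 - 4 * rr s ^ 5 = rr s ^ 4 * (1 + 4 * (1 - rr s)) := by ring
  have h3 : rr s ^ 4 ≤ rr s ^ 4 * (1 + 4 * (1 - rr s)) :=
    le_mul_of_one_le_right (by positivity) (by linarith)
  have h4 : 0 ≤ rr s ^ 4 := by positivity
  rw [e]
  rcases le_or_gt s 4 with h | h
  · have : 1 ≤ 4 / s := by rw [le_div_iff₀ hs]; linarith
    linarith
  · have := pow_le_pow_left₀ (by norm_num) (half_le_rr h.le) 4
    have : 0 < 4 / s := by positivity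
    linarith

lemma f2_nonneg {s : ℝ} (hs : 0 < s) : 0 ≤ 5 * rr s ^ 4 - 4 * rr s ^ 5 := by
  have h0 := rr_nonneg hs
  have h1 := rr_le_one hs
  have e : 5 * rr s ^ 4 - 4 * rr s ^ 5 = rr s ^ 4 * (1 + 4 * (1 - rr s)) := by ring
  have : 0 ≤ 1 - rr s := by linarith
  rw [e]; positivity

lemma f2_le {s : ℝ} (hs : 0 < s) : 5 * rr s ^ 4 - 4 * rr s ^ 5 ≤ 5 * rr s ^ 4 := by
  have := pow_nonneg (rr_nonneg hs) 5
  linarith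

lemma f2'_le {s : ℝ} (hs : 0 < s) : 20 * rr s ^ 3 * ((1 - rr s) ^ 2 / s) ≤ 40 * (s ^ 2)⁻¹ := by
  rcases rr_cases hs with h | h
  · rw [h.2.1]; simp; positivity
  · have h0 := rr_nonneg hs
    have h1 := rr_le_one hs
    have e : 1 - rr s = 2 / s := by field_simp; linarith [h.2.2]
    have h3 : rr s ^ 3 ≤ 1 := pow_le_one₀ h0 h1
    rw [e]
    have : (2 / s) ^ 2 / s ≤ 2 * (s ^ 2)⁻¹ := by
      have e2 : (2 / s) ^ 2 / s = 2 * (s ^ 2)⁻¹ * (2 / s) := by field_simp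
      rw [e2]
      refine mul_le_of_le_one_right (by positivity) ?_
      rw [div_le_one hs]; linarith [h.1]
    have n : 0 ≤ (2 / s) ^ 2 / s := by positivity
    calc 20 * rr s ^ 3 * ((2 / s) ^ 2 / s) ≤ 20 * ((2 / s) ^ 2 / s) :=
          mul_le_mul_of_nonneg_right (by linarith) n
      _ ≤ _ := by linarith

lemma f3'_nonneg {s : ℝ} (hs : 0 < s) :
    2 * rr s ^ 3 ≤ 20 * rr s ^ 3 - 30 * rr s ^ 4 + 12 * rr s ^ 5 := by
  have h0 := rr_nonneg hs
  have h1 := rr_le_one hs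
  have e : 20 * rr s ^ 3 - 30 * rr s ^ 4 + 12 * rr s ^ 5 - 2 * rr s ^ 3
      = rr s ^ 3 * ((1 - rr s) * (18 - 12 * rr s)) := by ring
  have n1 : 0 ≤ 1 - rr s := by linarith
  have n2 : 0 ≤ 18 - 12 * rr s := by linarith
  have : 0 ≤ rr s ^ 3 * ((1 - rr s) * (18 - 12 * rr s)) := by positivity
  linarith

lemma f3'_lower {s : ℝ} (hs : 0 < s) :
    1 ≤ 16 * (s ^ 2)⁻¹ + 4 * (20 * rr s ^ 3 - 30 * rr s ^ 4 + 12 * rr s ^ 5) := by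
  have h0 := rr_nonneg hs
  have h3 := f3'_nonneg hs
  have h4 : 0 ≤ rr s ^ 3 := by positivity
  rcases le_or_gt s 4 with h | h
  · have : 1 ≤ 16 * (s ^ 2)⁻¹ := by
      rw [← div_eq_mul_inv, le_div_iff₀ (by positivity)]; nlinarith
    linarith
  · have := pow_le_pow_left₀ (by norm_num) (half_le_rr h.le) 3
    have : 0 < (s ^ 2)⁻¹ := by positivity
    linarith

/-- Control of high temperatures by the entropy production, at a fixed time. -/
lemma aux_slice {θ θx : ℝ → ℝ} {c D : ℝ} (hd : ∀ x, HasDerivAt θ (θx x) x) (hc : 0 < c)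
    (hcθ : ∀ x, c ≤ θ x) (l : MemLp (fun x => θ x - 1) 2 volume) (l' : MemLp θx 2 volume)
    (mx : Measurable θx) (hD : ∫ x, cut (θ x) ≤ D) :
    ∫ x, (θ x * rr (θ x) ^ 2) ^ 2 ≤ 9 * D ^ 2 * ∫ x, (θx x / θ x) ^ 2 := by
  have hpos : ∀ x, 0 < θ x := fun x => hc.trans_le (hcθ x)
  have cθ : Continuous θ := continuous_iff_continuousAt.2 fun x => (hd x).continuousAt
  have mθ := cθ.measurable
  have mr : Measurable fun x => rr (θ x) := rr_measurable.comp mθ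
  have mc : Measurable fun x => cut (θ x) := cut_continuous.measurable.comp mθ
  have lz : MemLp (fun x => θ x * rr (θ x) ^ 2) 2 volume := by
    refine memLp_of_bound 1 l (by fun_prop) fun x => ?_
    have h0 := rr_nonneg (hpos x)
    rw [one_mul, sq, ← mul_assoc, s_mul_rr (hpos x), abs_of_nonneg
      (mul_nonneg (cut_nonneg _) h0)]
    exact (mul_le_of_le_one_right (cut_nonneg _) (rr_le_one (hpos x))).trans cut_le_abs
  have lq : MemLp (fun x => θx x / θ x) 2 volume := by
    refine memLp_of_bound c⁻¹ l' (mx.div mθ).aestronglyMeasurable fun x => ?_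
    rw [abs_div, abs_of_pos (hpos x), div_eq_inv_mul]
    exact mul_le_mul_of_nonneg_right (inv_anti₀ hc (hcθ x)) (abs_nonneg _)
  have i2 := int_sq l
  have icut : Integrable fun x => cut (θ x) := by
    refine i2.mono' mc.aestronglyMeasurable (Eventually.of_forall fun x => ?_)
    rw [Real.norm_of_nonneg (cut_nonneg _)]; exact cut_le_sq
  have if1 : Integrable fun x => θ x * rr (θ x) ^ 3 := by
    refine icut.mono' (by fun_prop) (Eventually.of_forall fun x => ?_)
    have h0 := rr_nonneg (hpos x)
    have e : θ x * rr (θ x) ^ 3 = cut (θ x) * rr (θ x) ^ 2 := by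
      rw [← s_mul_rr (hpos x)]; ring
    rw [e, Real.norm_of_nonneg (mul_nonneg (cut_nonneg _) (by positivity))]
    exact mul_le_of_le_one_right (cut_nonneg _) (pow_le_one₀ h0 (rr_le_one (hpos x)))
  have lqa : MemLp (fun x => |θx x / θ x|) 2 volume := lq.abs
  have izq := int_mul lz lqa
  have hb : ∀ x, |(3 * rr (θ x) ^ 2 - 2 * rr (θ x) ^ 3) * θx x|
      ≤ 3 * (θ x * rr (θ x) ^ 2 * |θx x / θ x|) := fun x => by
    have h0 := rr_nonneg (hpos x)
    have h1 := rr_le_one (hpos x)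
    have e : (3 : ℝ) * (θ x * rr (θ x) ^ 2 * |θx x / θ x|) = 3 * rr (θ x) ^ 2 * |θx x| := by
      rw [abs_div, abs_of_pos (hpos x)]
      have := (hpos x).ne'
      field_simp
    rw [e, abs_mul]
    refine mul_le_mul_of_nonneg_right ?_ (abs_nonneg _)
    have e2 : 3 * rr (θ x) ^ 2 - 2 * rr (θ x) ^ 3 = rr (θ x) ^ 2 * (1 + 2 * (1 - rr (θ x))) := by
      ring
    have n : 0 ≤ 1 - rr (θ x) := by linarith
    rw [abs_of_nonneg (by rw [e2]; positivity)]
    have : 0 ≤ rr (θ x) ^ 3 := by positivity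
    linarith
  have if1' : Integrable fun x => (3 * rr (θ x) ^ 2 - 2 * rr (θ x) ^ 3) * θx x :=
    (izq.const_mul 3).mono' (by fun_prop) (Eventually.of_forall hb)
  set A := ∫ x, θ x * rr (θ x) ^ 2 * |θx x / θ x| with hA
  set Y := ∫ x, (θ x * rr (θ x) ^ 2) ^ 2 with hY
  set X := ∫ x, (θx x / θ x) ^ 2 with hX
  have hY0 : 0 ≤ Y := integral_nonneg fun x => sq_nonneg _
  have hX0 : 0 ≤ X := integral_nonneg fun x => sq_nonneg _
  have cs : A ^ 2 ≤ Y * X := by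
    have := sq_integral_mul_le lz lqa
    simpa only [sq_abs] using this
  have hA0 : 0 ≤ A := integral_nonneg fun x => by
    have := hpos x
    show 0 ≤ θ x * rr (θ x) ^ 2 * |θx x / θ x|
    positivity
  have hsup : ∀ x, θ x * rr (θ x) ^ 3 ≤ 3 * A := fun x => by
    have h := abs_le_integral_abs_deriv (f := fun x => θ x * rr (θ x) ^ 3)
      (fun y => (hasDerivAt_f1 (hpos y)).comp y (hd y)) if1 if1' x
    have h2 : ∫ y, |(3 * rr (θ y) ^ 2 - 2 * rr (θ y) ^ 3) * θx y| ≤ 3 * A := by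
      rw [hA, ← integral_const_mul]
      exact integral_mono if1'.abs (izq.const_mul 3) hb
    exact (le_abs_self _).trans (h.trans h2)
  have hYD : Y ≤ 3 * A * D := by
    have := integral_le_comb (3 * A) 0 0 0 (int_sq lz) icut icut icut icut (fun x => by
      have e : (θ x * rr (θ x) ^ 2) ^ 2 = θ x * rr (θ x) ^ 3 * cut (θ x) := by
        rw [← s_mul_rr (hpos x)]; ring
      rw [e]
      have := mul_le_mul_of_nonneg_right (hsup x) (cut_nonneg (θ x))
      linarith)
    have := mul_le_mul_of_nonneg_left hD (mul_nonneg zero_le_three hA0)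
    linarith
  rcases hY0.eq_or_lt with h | h
  · rw [← h]; positivity
  · have h1 : Y * Y ≤ (3 * A * D) ^ 2 := by
      rw [← sq]; exact pow_le_pow_left₀ hY0 hYD 2
    have h2 : (3 * A * D) ^ 2 ≤ 9 * D ^ 2 * (Y * X) := by
      nlinarith [mul_le_mul_of_nonneg_left cs (sq_nonneg D)]
    nlinarith

/-! ### Space-time bounds for `u_x` and `θ_x` -/

namespace NSFlow

variable {P : Par} {T : ℝ} (S : NSFlow P T)

lemma mrr : Meas₂ fun x t => rr (S.θ x t) := rr_measurable.comp S.mθ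

lemma icut (t : ℝ) : Integrable fun x => cut (S.θ x t) := by
  refine (int_sq (S.sθ t)).mono'
    (cut_continuous.comp (S.cθ t)).measurable.aestronglyMeasurable
    (Eventually.of_forall fun x => ?_)
  rw [Real.norm_of_nonneg (cut_nonneg _)]; exact cut_le_sq

lemma int_cut_le (t : ℝ) :
    ∫ x, cut (S.θ x t) ≤ 2 * ∫ x, (S.θ x t - Real.log (S.θ x t) - 1) := by
  rw [← integral_const_mul]
  exact integral_mono (S.icut t) ((S.iφ t).const_mul 2) fun x => cut_le_defect (S.θ_pos x t)

lemma lz : LST T fun x t => S.θ x t * rr (S.θ x t) ^ 2 := by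
  refine memLp_of_bound 1 S.lθ (S.mθ.mul (S.mrr.pow_const 2)).aestronglyMeasurable fun p => ?_
  have hp := S.θ_pos p.1 p.2
  have h0 := rr_nonneg hp
  show |S.θ p.1 p.2 * rr (S.θ p.1 p.2) ^ 2| ≤ 1 * |S.θ p.1 p.2 - 1|
  rw [one_mul, sq, ← mul_assoc, s_mul_rr hp, abs_of_nonneg (mul_nonneg (cut_nonneg _) h0)]
  exact (mul_le_of_le_one_right (cut_nonneg _) (rr_le_one hp)).trans cut_le_abs

lemma aux_st {D : ℝ} (hD : ∀ t ∈ Icc 0 T, ∫ x, cut (S.θ x t) ≤ D) :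
    ∫ p, (S.θ p.1 p.2 * rr (S.θ p.1 p.2) ^ 2) ^ 2 ∂(stMeas T)
      ≤ 9 * D ^ 2 * ∫ p, (S.θx p.1 p.2 / S.θ p.1 p.2) ^ 2 ∂(stMeas T) := by
  obtain ⟨c, hc, hcθ⟩ := S.low
  have i1 := int_sq S.lz
  have i2 := int_sq (S.lθd S.lθx S.mθx)
  unfold stMeas at *
  rw [integral_prod_symm _ i1, integral_prod_symm _ i2, ← integral_const_mul]
  refine integral_mono_ae i1.integral_prod_right (i2.integral_prod_right.const_mul _) ?_
  filter_upwards [ae_restrict_mem measurableSet_Icc] with t ht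
  exact aux_slice (fun x => S.dθ x t) hc (fun x => hcθ x t) (S.sθ t) (S.sθx t)
    (S.cθx t).measurable (hD t ht)

end NSFlow

/-- High temperatures are controlled by the entropy and the entropy production. -/
lemma exists_aux_const (P : Par) : ∃ C, 0 < C ∧ ∀ T (S : NSFlow P T),
    ∫ x, cut (S.θ x T) ≤ C ∧
    ∫ p, (S.θ p.1 p.2 * rr (S.θ p.1 p.2) ^ 2) ^ 2 ∂(stMeas T) ≤ C := by
  obtain ⟨C, hC, h⟩ := exists_energy_const P
  have hM := P.hM
  have hm := P.hm
  set D := 2 * (C + P.m⁻¹ * P.M ^ 2) with hD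
  have hD0 : 0 < D := by positivity
  refine ⟨D + 9 * D ^ 2 * C, by positivity, fun T S => ?_⟩
  have hmM : 0 < P.m⁻¹ * P.M ^ 2 := by positivity
  have hcut : ∀ t ∈ Icc 0 T, ∫ x, cut (S.θ x t) ≤ D := fun t ht => by
    have h1 := S.int_cut_le t
    rcases ht.1.eq_or_lt with h0 | h0
    · have := S.init_defect
      rw [← h0] at h1 ⊢
      linarith
    · have := (h t (S.restrict h0 ht.2)).2.1
      change ∫ x, (S.θ x t - Real.log (S.θ x t) - 1) ≤ C at this
      linarith
  have h1 := hcut T ⟨S.hT.le, le_rfl⟩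
  have h2 := S.aux_st hcut
  have h3 := mul_le_mul_of_nonneg_left (h T S).2.2.1 (show 0 ≤ 9 * D ^ 2 by positivity)
  have : 0 < 9 * D ^ 2 * C := by positivity
  exact ⟨by linarith, by linarith⟩

/-- The energy equation tested with the derivative of `s rr(s)⁵`; low temperatures are covered by
the entropy production `∫∫ u_x²/θ`. -/
lemma exists_ux_const (P : Par) : ∃ C, 0 < C ∧ ∀ T (S : NSFlow P T),
    ∫ p, S.ux p.1 p.2 ^ 2 ∂(stMeas T) ≤ C := by
  obtain ⟨C₀, hC₀, h₀⟩ := exists_energy_const P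
  obtain ⟨C₁, hC₁, h₁⟩ := exists_aux_const P
  have hμ := P.hμ; have hκ := P.hκ; have hR := P.hR; have hcv := P.hcv; have hK := P.Kpos
  set A := P.cv * C₁ + P.κ * (40 * P.K * C₀) + P.R ^ 2 / (2 * P.μ) * (5 * P.K * C₁) with hA
  have hA0 : 0 < A := by positivity
  refine ⟨4 * C₀ + 16 * (P.K * (2 / P.μ * A)), by positivity, fun T S => ?_⟩
  have crr := rr_continuousOn
  have mrr := rr_measurable
  obtain ⟨j1, j2, j3, e⟩ := S.test (fun _ h => hasDerivAt_f2 h) (fun _ h => hasDerivAt_f2' h)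
    (((crr.pow 3).const_mul 20).mul
      (((continuousOn_const.sub crr).pow 2).div continuousOn_id fun _ hs => (ne_of_gt hs)))
    (by simp [rr_one]) (by simp [rr_one]) (by fun_prop) (by fun_prop) (by fun_prop)
  obtain ⟨-, -, d1, d2⟩ := h₀ T S
  obtain ⟨d3, d4⟩ := h₁ T S
  have lq := S.lθd S.lθx S.mθx
  have iz := int_sq S.lz
  have iq := int_sq lq
  -- the three terms on the right of the tested equation
  have iΦ : ∀ t, Integrable fun x => S.θ x t * rr (S.θ x t) ^ 5 :=
    (S.test_memLp (fun _ h => hasDerivAt_f2 h) (fun _ h => hasDerivAt_f2' h)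
      (((crr.pow 3).const_mul 20).mul
        (((continuousOn_const.sub crr).pow 2).div continuousOn_id fun _ hs => (ne_of_gt hs)))
      (by simp [rr_one]) (by simp [rr_one]) (by fun_prop) (by fun_prop) (by fun_prop)).2.2
  have t1 : ∫ x, S.θ x T * rr (S.θ x T) ^ 5 ≤ C₁ := by
    refine (integral_mono (iΦ T) (S.icut T) fun x => ?_).trans d3
    have hp := S.θ_pos x T
    show S.θ x T * rr (S.θ x T) ^ 5 ≤ cut (S.θ x T)
    rw [← s_mul_rr hp, show S.θ x T * rr (S.θ x T) ^ 5
      = S.θ x T * rr (S.θ x T) * rr (S.θ x T) ^ 4 by ring, s_mul_rr hp]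
    exact mul_le_of_le_one_right (cut_nonneg _) (pow_le_one₀ (rr_nonneg hp) (rr_le_one hp))
  have t1' : 0 ≤ ∫ x, S.θ x 0 * rr (S.θ x 0) ^ 5 := integral_nonneg fun x =>
    mul_nonneg (S.θ_pos x 0).le (pow_nonneg (rr_nonneg (S.θ_pos x 0)) 5)
  have t2 := integral_le_comb (40 * P.K) 0 0 0 j1 iq iq iq iq (fun p => by
    have hp := S.θ_pos p.1 p.2
    have a := f2'_le hp
    have b := S.inv_v_le p.1 p.2
    have b' := S.inv_v_pos p.1 p.2
    have e1 : 20 * rr (S.θ p.1 p.2) ^ 3 * ((1 - rr (S.θ p.1 p.2)) ^ 2 / S.θ p.1 p.2)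
        * S.θx p.1 p.2 * (S.θx p.1 p.2 / S.v p.1 p.2)
      = 20 * rr (S.θ p.1 p.2) ^ 3 * ((1 - rr (S.θ p.1 p.2)) ^ 2 / S.θ p.1 p.2)
        * (S.θx p.1 p.2 ^ 2 * (S.v p.1 p.2)⁻¹) := by ring
    have e2 : 40 * P.K * (S.θx p.1 p.2 / S.θ p.1 p.2) ^ 2
      = 40 * (S.θ p.1 p.2 ^ 2)⁻¹ * (S.θx p.1 p.2 ^ 2 * P.K) := by ring
    rw [e1]
    have := mul_le_mul a (mul_le_mul_of_nonneg_left b (sq_nonneg (S.θx p.1 p.2)))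
      (by positivity) (by positivity)
    linarith)
  have t3 := integral_le_comb (P.μ / (2 * P.R)) (P.R / (2 * P.μ) * (5 * P.K)) 0 0 j3 j2 iz iz iz
    (fun p => by
      have hp := S.θ_pos p.1 p.2
      have b := S.inv_v_le p.1 p.2
      have b' := S.inv_v_pos p.1 p.2
      have f0 := f2_nonneg hp
      have f1 := f2_le hp
      generalize 5 * rr (S.θ p.1 p.2) ^ 4 - 4 * rr (S.θ p.1 p.2) ^ 5 = φ at *
      -- Young's inequality
      have y : S.θ p.1 p.2 * S.ux p.1 p.2 ≤ P.μ / (2 * P.R) * S.ux p.1 p.2 ^ 2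
          + P.R / (2 * P.μ) * S.θ p.1 p.2 ^ 2 := by
        have : 0 ≤ (P.μ * S.ux p.1 p.2 - P.R * S.θ p.1 p.2) ^ 2 / (2 * P.μ * P.R) := by positivity
        have e : (P.μ * S.ux p.1 p.2 - P.R * S.θ p.1 p.2) ^ 2 / (2 * P.μ * P.R)
          = P.μ / (2 * P.R) * S.ux p.1 p.2 ^ 2
          + P.R / (2 * P.μ) * S.θ p.1 p.2 ^ 2 - S.θ p.1 p.2 * S.ux p.1 p.2 := by
          field_simp; ring
        linarith
      have y1 := mul_le_mul_of_nonneg_left y (mul_nonneg f0 b'.le)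
      have y2 : φ * (S.v p.1 p.2)⁻¹ * S.θ p.1 p.2 ^ 2
          ≤ 5 * P.K * (S.θ p.1 p.2 * rr (S.θ p.1 p.2) ^ 2) ^ 2 := by
        have := mul_le_mul f1 b b'.le (by positivity)
        have := mul_le_mul_of_nonneg_right this (sq_nonneg (S.θ p.1 p.2))
        calc _ ≤ _ := this
          _ = _ := by ring
      have y3 := mul_le_mul_of_nonneg_left y2 (show 0 ≤ P.R / (2 * P.μ) by positivity)
      calc φ * (S.θ p.1 p.2 * S.ux p.1 p.2 / S.v p.1 p.2)
          = φ * (S.v p.1 p.2)⁻¹ * (S.θ p.1 p.2 * S.ux p.1 p.2) := by ring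
        _ ≤ _ := y1
        _ = P.μ / (2 * P.R) * (φ * (S.ux p.1 p.2 * S.ux p.1 p.2 / S.v p.1 p.2))
            + P.R / (2 * P.μ) * (φ * (S.v p.1 p.2)⁻¹ * S.θ p.1 p.2 ^ 2) := by ring
        _ ≤ _ := by linarith)
  have t4 := integral_le_comb 4 (16 * P.K) 0 0 (int_sq S.lux)
    (int_mul S.lux (S.lθd S.lux S.mux)) j2 j2 j2 (fun p => by
      have hp := S.θ_pos p.1 p.2
      have b := S.le_inv_v p.1 p.2
      have f0 := f2_nonneg hp
      have a := f2_lower hp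
      generalize 5 * rr (S.θ p.1 p.2) ^ 4 - 4 * rr (S.θ p.1 p.2) ^ 5 = φ at *
      have h1 := mul_le_mul_of_nonneg_right a (sq_nonneg (S.ux p.1 p.2))
      have h2 : 1 ≤ P.K * (S.v p.1 p.2)⁻¹ := by
        have := mul_le_mul_of_nonneg_left b hK.le
        rwa [mul_inv_cancel₀ hK.ne'] at this
      have h3 := mul_le_mul_of_nonneg_left h2 (mul_nonneg f0 (sq_nonneg (S.ux p.1 p.2)))
      calc S.ux p.1 p.2 ^ 2 ≤ 4 / S.θ p.1 p.2 * S.ux p.1 p.2 ^ 2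
            + 16 * (φ * S.ux p.1 p.2 ^ 2 * 1) := by linarith
        _ ≤ 4 / S.θ p.1 p.2 * S.ux p.1 p.2 ^ 2
            + 16 * (φ * S.ux p.1 p.2 ^ 2 * (P.K * (S.v p.1 p.2)⁻¹)) := by linarith
        _ = _ := by ring)
  generalize (∫ x, S.θ x T * rr (S.θ x T) ^ 5) = Φ1 at *
  generalize (∫ x, S.θ x 0 * rr (S.θ x 0) ^ 5) = Φ0 at *
  generalize (∫ p, 20 * rr (S.θ p.1 p.2) ^ 3 * ((1 - rr (S.θ p.1 p.2)) ^ 2 / S.θ p.1 p.2)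
        * S.θx p.1 p.2 * (S.θx p.1 p.2 / S.v p.1 p.2) ∂(stMeas T)) = I1 at *
  generalize (∫ p, (5 * rr (S.θ p.1 p.2) ^ 4 - 4 * rr (S.θ p.1 p.2) ^ 5)
    * (S.ux p.1 p.2 * S.ux p.1 p.2 / S.v p.1 p.2) ∂(stMeas T)) = I2 at *
  generalize (∫ p, (5 * rr (S.θ p.1 p.2) ^ 4 - 4 * rr (S.θ p.1 p.2) ^ 5)
    * (S.θ p.1 p.2 * S.ux p.1 p.2 / S.v p.1 p.2) ∂(stMeas T)) = I3 at *
  generalize (∫ p, (S.θ p.1 p.2 * rr (S.θ p.1 p.2) ^ 2) ^ 2 ∂(stMeas T)) = Z at *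
  generalize (∫ p, (S.θx p.1 p.2 / S.θ p.1 p.2) ^ 2 ∂(stMeas T)) = Q at *
  have s3 : P.R * I3 ≤ P.μ / 2 * I2 + P.R ^ 2 / (2 * P.μ) * (5 * P.K * C₁) := by
    have h1 : I3 ≤ P.μ / (2 * P.R) * I2 + P.R / (2 * P.μ) * (5 * P.K) * C₁ := by
      have := mul_le_mul_of_nonneg_left d4 (show 0 ≤ P.R / (2 * P.μ) * (5 * P.K) by positivity)
      linarith
    calc P.R * I3 ≤ P.R * (P.μ / (2 * P.R) * I2 + P.R / (2 * P.μ) * (5 * P.K) * C₁) :=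
          mul_le_mul_of_nonneg_left h1 hR.le
      _ = _ := by field_simp
  have s2 : P.κ * I1 ≤ P.κ * (40 * P.K * C₀) := by
    refine mul_le_mul_of_nonneg_left ?_ hκ.le
    have := mul_le_mul_of_nonneg_left d1 (show 0 ≤ 40 * P.K by positivity)
    linarith
  have s1 := mul_le_mul_of_nonneg_left t1 hcv.le
  have s0 := mul_nonneg hcv.le t1'
  have s4 : P.μ / 2 * I2 ≤ A := by rw [hA]; linarith
  have s5 : I2 ≤ 2 / P.μ * A := by
    calc I2 = 2 / P.μ * (P.μ / 2 * I2) := by field_simp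
      _ ≤ _ := mul_le_mul_of_nonneg_left s4 (by positivity)
  have s6 := mul_le_mul_of_nonneg_left s5 hK.le
  linarith

/-- The energy equation tested with the derivative of `s² rr(s)⁵`; low temperatures are covered by
the entropy production `∫∫ (θ_x/θ)²`. -/
lemma exists_θx_const (P : Par) : ∃ C, 0 < C ∧ ∀ T (S : NSFlow P T) (Θ : ℝ), 1 ≤ Θ →
    (∀ x t, S.θ x t ≤ Θ) → ∫ p, S.θx p.1 p.2 ^ 2 ∂(stMeas T) ≤ C * Θ := by
  obtain ⟨C₀, hC₀, h₀⟩ := exists_energy_const P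
  obtain ⟨C₁, hC₁, h₁⟩ := exists_aux_const P
  obtain ⟨C₂, hC₂, h₂⟩ := exists_ux_const P
  have hμ := P.hμ; have hκ := P.hκ; have hR := P.hR; have hcv := P.hcv; have hK := P.Kpos
  have hM := P.hM
  set A := P.cv * P.M ^ 2 + P.μ * (5 * P.K * C₂) + P.R * (5 * P.K * (C₂ + C₁)) with hA
  have hA0 : 0 < A := by positivity
  refine ⟨16 * C₀ + 4 * (P.K * (P.κ⁻¹ * A)), by positivity, fun T S Θ hΘ1 hΘ => ?_⟩
  have crr := rr_continuousOn
  have mrr := rr_measurable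
  have hcφ : ContinuousOn (fun s => 20 * rr s ^ 3 - 30 * rr s ^ 4 + 12 * rr s ^ 5) (Ioi 0) :=
    (((crr.pow 3).const_mul 20).sub ((crr.pow 4).const_mul 30)).add ((crr.pow 5).const_mul 12)
  obtain ⟨j1, j2, j3, e⟩ := S.test (fun _ h => hasDerivAt_f3 h) (fun _ h => hasDerivAt_f3' h)
    hcφ (by simp [rr_one]) (by simp [rr_one]) (by fun_prop) (by fun_prop) (by fun_prop)
  have iΦ := (S.test_memLp (fun _ h => hasDerivAt_f3 h) (fun _ h => hasDerivAt_f3' h)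
    hcφ (by simp [rr_one]) (by simp [rr_one]) (by fun_prop) (by fun_prop) (by fun_prop)).2.2
  obtain ⟨-, -, d1, -⟩ := h₀ T S
  obtain ⟨-, d3⟩ := h₁ T S
  have d4 := h₂ T S
  have iz := int_sq S.lz
  have iu := int_sq S.lux
  have iq := int_sq (S.lθd S.lθx S.mθx)
  have t1 : 0 ≤ ∫ x, S.θ x T ^ 2 * rr (S.θ x T) ^ 5 := integral_nonneg fun x =>
    mul_nonneg (sq_nonneg _) (pow_nonneg (rr_nonneg (S.θ_pos x T)) 5)
  have t0 : ∫ x, S.θ x 0 ^ 2 * rr (S.θ x 0) ^ 5 ≤ P.M ^ 2 := by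
    refine (integral_mono (iΦ 0) (int_sq (S.sθ 0)) fun x => ?_).trans S.iθ
    have hp := S.θ_pos x 0
    show S.θ x 0 ^ 2 * rr (S.θ x 0) ^ 5 ≤ (S.θ x 0 - 1) ^ 2
    have e1 : S.θ x 0 ^ 2 * rr (S.θ x 0) ^ 5 = cut (S.θ x 0) ^ 2 * rr (S.θ x 0) ^ 3 := by
      rw [← s_mul_rr hp]; ring
    rw [e1, ← sq_abs (S.θ x 0 - 1)]
    exact (mul_le_of_le_one_right (sq_nonneg _)
      (pow_le_one₀ (rr_nonneg hp) (rr_le_one hp))).trans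
      (pow_le_pow_left₀ (cut_nonneg _) cut_le_abs 2)
  have hf : ∀ s, 0 < s → 0 ≤ s * (5 * rr s ^ 4 - 3 * rr s ^ 5) ∧
      s * (5 * rr s ^ 4 - 3 * rr s ^ 5) ≤ 5 * (s * rr s ^ 2) ∧
      s * (5 * rr s ^ 4 - 3 * rr s ^ 5) ≤ 5 * s := fun s hs => by
    have r0 := rr_nonneg hs
    have r1 := rr_le_one hs
    have p2 : rr s ^ 4 ≤ rr s ^ 2 := pow_le_pow_of_le_one r0 r1 (by norm_num)
    have p4 : rr s ^ 2 ≤ 1 := pow_le_one₀ r0 r1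
    have p5 : rr s ^ 5 ≤ rr s ^ 4 := pow_le_pow_of_le_one r0 r1 (by norm_num)
    have n5 : 0 ≤ rr s ^ 5 := by positivity
    refine ⟨mul_nonneg hs.le (by linarith), ?_, ?_⟩
    · have := mul_le_mul_of_nonneg_left (show 5 * rr s ^ 4 - 3 * rr s ^ 5 ≤ 5 * rr s ^ 2 by
        linarith) hs.le
      linarith
    · have := mul_le_mul_of_nonneg_left (show 5 * rr s ^ 4 - 3 * rr s ^ 5 ≤ 5 by linarith) hs.le
      linarith
  have t2 := integral_le_comb (5 * P.K * Θ) 0 0 0 j2 iu iu iu iu (fun p => by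
    obtain ⟨f0, -, f2⟩ := hf _ (S.θ_pos p.1 p.2)
    generalize S.θ p.1 p.2 * (5 * rr (S.θ p.1 p.2) ^ 4 - 3 * rr (S.θ p.1 p.2) ^ 5) = φ at *
    have h1 : φ ≤ 5 * Θ := f2.trans (by linarith [hΘ p.1 p.2])
    have h2 := mul_le_mul h1 (S.inv_v_le p.1 p.2) (S.inv_v_pos p.1 p.2).le (by linarith)
    have h3 := mul_le_mul_of_nonneg_right h2 (sq_nonneg (S.ux p.1 p.2))
    calc φ * (S.ux p.1 p.2 * S.ux p.1 p.2 / S.v p.1 p.2)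
        = φ * (S.v p.1 p.2)⁻¹ * S.ux p.1 p.2 ^ 2 := by ring
      _ ≤ _ := h3
      _ = _ := by ring)
  have t3 := integral_le_comb (F := fun p : ℝ × ℝ => -(S.θ p.1 p.2 * (5 * rr (S.θ p.1 p.2) ^ 4
      - 3 * rr (S.θ p.1 p.2) ^ 5) * (S.θ p.1 p.2 * S.ux p.1 p.2 / S.v p.1 p.2)))
    (5 * P.K * Θ) (5 * P.K * Θ) 0 0 j3.neg iu iz iz iz (fun p => by
    have hp := S.θ_pos p.1 p.2
    obtain ⟨f0, f1, -⟩ := hf _ hp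
    generalize S.θ p.1 p.2 * (5 * rr (S.θ p.1 p.2) ^ 4 - 3 * rr (S.θ p.1 p.2) ^ 5) = φ at *
    have b := S.inv_v_le p.1 p.2
    have b' := S.inv_v_pos p.1 p.2
    set z := S.θ p.1 p.2 * rr (S.θ p.1 p.2) ^ 2 with hz
    have hz0 : 0 ≤ z := mul_nonneg hp.le (sq_nonneg _)
    have h2 := mul_le_mul f1 b b'.le (by linarith)
    have h3 := mul_le_mul h2 (hΘ p.1 p.2) hp.le (by positivity)
    have h4 := mul_le_mul_of_nonneg_right h3 (abs_nonneg (S.ux p.1 p.2))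
    have h5 : z * |S.ux p.1 p.2| ≤ S.ux p.1 p.2 ^ 2 + z ^ 2 := by
      rw [← sq_abs (S.ux p.1 p.2)]
      nlinarith [sq_nonneg (z - |S.ux p.1 p.2|), sq_nonneg z, sq_nonneg |S.ux p.1 p.2|]
    have h6 := mul_le_mul_of_nonneg_left h5 (show 0 ≤ 5 * P.K * Θ by positivity)
    calc -(φ * (S.θ p.1 p.2 * S.ux p.1 p.2 / S.v p.1 p.2))
        = φ * (S.v p.1 p.2)⁻¹ * S.θ p.1 p.2 * (-S.ux p.1 p.2) := by ring
      _ ≤ φ * (S.v p.1 p.2)⁻¹ * S.θ p.1 p.2 * |S.ux p.1 p.2| :=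
          mul_le_mul_of_nonneg_left (neg_le_abs _) (by positivity)
      _ ≤ _ := h4
      _ = 5 * P.K * Θ * (z * |S.ux p.1 p.2|) := by ring
      _ ≤ _ := h6
      _ = _ := by ring)
  rw [integral_neg] at t3
  have t4 := integral_le_comb 16 (4 * P.K) 0 0 (int_sq S.lθx) iq j1 j1 j1 (fun p => by
      have hp := S.θ_pos p.1 p.2
      have b := S.le_inv_v p.1 p.2
      have f0 : 0 ≤ 20 * rr (S.θ p.1 p.2) ^ 3 - 30 * rr (S.θ p.1 p.2) ^ 4
          + 12 * rr (S.θ p.1 p.2) ^ 5 :=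
        le_trans (by have := rr_nonneg hp; positivity) (f3'_nonneg hp)
      have a := f3'_lower hp
      generalize 20 * rr (S.θ p.1 p.2) ^ 3 - 30 * rr (S.θ p.1 p.2) ^ 4
          + 12 * rr (S.θ p.1 p.2) ^ 5 = φ at *
      have h1 := mul_le_mul_of_nonneg_right a (sq_nonneg (S.θx p.1 p.2))
      have h2 : 1 ≤ P.K * (S.v p.1 p.2)⁻¹ := by
        have := mul_le_mul_of_nonneg_left b hK.le
        rwa [mul_inv_cancel₀ hK.ne'] at this
      have h3 := mul_le_mul_of_nonneg_left h2 (mul_nonneg f0 (sq_nonneg (S.θx p.1 p.2)))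
      calc S.θx p.1 p.2 ^ 2 ≤ 16 * (S.θ p.1 p.2 ^ 2)⁻¹ * S.θx p.1 p.2 ^ 2
            + 4 * (φ * S.θx p.1 p.2 ^ 2 * 1) := by linarith
        _ ≤ 16 * (S.θ p.1 p.2 ^ 2)⁻¹ * S.θx p.1 p.2 ^ 2
            + 4 * (φ * S.θx p.1 p.2 ^ 2 * (P.K * (S.v p.1 p.2)⁻¹)) := by linarith
        _ = _ := by ring)
  generalize (∫ x, S.θ x T ^ 2 * rr (S.θ x T) ^ 5) = Φ1 at *
  generalize (∫ x, S.θ x 0 ^ 2 * rr (S.θ x 0) ^ 5) = Φ0 at *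
  generalize (∫ p, (20 * rr (S.θ p.1 p.2) ^ 3 - 30 * rr (S.θ p.1 p.2) ^ 4
    + 12 * rr (S.θ p.1 p.2) ^ 5) * S.θx p.1 p.2 * (S.θx p.1 p.2 / S.v p.1 p.2) ∂(stMeas T))
    = I1 at *
  generalize (∫ p, S.θ p.1 p.2 * (5 * rr (S.θ p.1 p.2) ^ 4 - 3 * rr (S.θ p.1 p.2) ^ 5)
    * (S.ux p.1 p.2 * S.ux p.1 p.2 / S.v p.1 p.2) ∂(stMeas T)) = I2 at *
  generalize (∫ p, S.θ p.1 p.2 * (5 * rr (S.θ p.1 p.2) ^ 4 - 3 * rr (S.θ p.1 p.2) ^ 5)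
    * (S.θ p.1 p.2 * S.ux p.1 p.2 / S.v p.1 p.2) ∂(stMeas T)) = I3 at *
  generalize (∫ p, (S.θ p.1 p.2 * rr (S.θ p.1 p.2) ^ 2) ^ 2 ∂(stMeas T)) = Z at *
  generalize (∫ p, (S.θx p.1 p.2 / S.θ p.1 p.2) ^ 2 ∂(stMeas T)) = Q at *
  generalize (∫ p, S.ux p.1 p.2 ^ 2 ∂(stMeas T)) = U at *
  have hΘ0 : 0 < Θ := by linarith
  have k0 : 0 ≤ 5 * P.K * Θ := by positivity
  have s2 : P.μ * I2 ≤ P.μ * (5 * P.K * C₂) * Θ := by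
    have := mul_le_mul_of_nonneg_left d4 k0
    have h : I2 ≤ 5 * P.K * Θ * C₂ := by linarith
    have := mul_le_mul_of_nonneg_left h hμ.le
    linarith
  have s3 : P.R * (-I3) ≤ P.R * (5 * P.K * (C₂ + C₁)) * Θ := by
    have h1 := mul_le_mul_of_nonneg_left d4 k0
    have h2 := mul_le_mul_of_nonneg_left d3 k0
    have h : -I3 ≤ 5 * P.K * Θ * (C₂ + C₁) := by linarith
    have := mul_le_mul_of_nonneg_left h hR.le
    linarith
  have s1 : P.cv * Φ0 ≤ P.cv * P.M ^ 2 * Θ := by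
    have h1 := mul_le_mul_of_nonneg_left t0 hcv.le
    have h2 := le_mul_of_one_le_right (show 0 ≤ P.cv * P.M ^ 2 by positivity) hΘ1
    linarith
  have s0 := mul_nonneg hcv.le t1
  have s4 : P.κ * I1 ≤ A * Θ := by
    have : A * Θ = P.cv * P.M ^ 2 * Θ + P.μ * (5 * P.K * C₂) * Θ
      + P.R * (5 * P.K * (C₂ + C₁)) * Θ := by rw [hA]; ring
    linarith
  have s5 : I1 ≤ P.κ⁻¹ * (A * Θ) := by
    calc I1 = P.κ⁻¹ * (P.κ * I1) := by field_simp
      _ ≤ _ := mul_le_mul_of_nonneg_left s4 (by positivity)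
  have s6 := mul_le_mul_of_nonneg_left s5 hK.le
  have s7 := le_mul_of_one_le_right hC₀.le hΘ1
  linarith

/-! ### The gradient of the specific volume -/

namespace NSFlow

variable {P : Par} {T : ℝ} (S : NSFlow P T)

/-- The evolution of the effective momentum `μ (log v)_x - u`, whose time derivative is `R (θ/v)_x`:
here the term `- u R (θ/v)_x` is already rewritten by means of the momentum equation. -/
lemma effective_energy :
    ∫ x, (P.μ * (S.vx x T / S.v x T) - S.u x T) ^ 2
      = (∫ x, (P.μ * (S.vx x 0 / S.v x 0) - S.u x 0) ^ 2)
        + 2 * (P.μ * P.R * ∫ p, S.vx p.1 p.2 / S.v p.1 p.2 * (S.θx p.1 p.2 / S.v p.1 p.2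
          - S.θ p.1 p.2 * S.vx p.1 p.2 / S.v p.1 p.2 ^ 2) ∂(stMeas T))
        + ((∫ x, S.u x T ^ 2) - ∫ x, S.u x 0 ^ 2)
        + 2 * (P.μ * ∫ p, S.ux p.1 p.2 * (S.ux p.1 p.2 / S.v p.1 p.2) ∂(stMeas T)) := by
  have hs : ∀ t, MemLp (fun x => S.vx x t / S.v x t) 2 volume := fun t =>
    memLp_of_bound P.K (S.svx t) ((S.cvx t).div (S.cv t)
      fun x => (S.v_pos x t).ne').aestronglyMeasurable fun x => by
        rw [abs_div, div_eq_inv_mul, ← abs_inv]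
        exact mul_le_mul_of_nonneg_right (S.abs_inv_v x t) (abs_nonneg _)
  have e := effective_identity (l := fun x t => Real.log (S.v x t))
    (l' := fun x t => S.vx x t / S.v x t) (g := fun x t => S.ux x t / S.v x t)
    (g' := fun x t => S.uxx x t / S.v x t - S.ux x t * S.vx x t / S.v x t ^ 2)
    (u := S.u) (w := S.ut) (T := T) P.μ S.hT.le
    (fun x t => (S.dv x t).log (S.v_pos x t).ne') S.dg
    (fun t => (S.cvx t).div (S.cv t) fun x => (S.v_pos x t).ne')
    (fun t => by
      have := S.cv t; have := S.cvx t; have := S.cux t; have := S.cuxx t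
      have h0 := fun x => (S.v_pos x t).ne'
      have h2 := fun x => (pow_pos (S.v_pos x t) 2).ne'
      fun_prop (disch := assumption))
    (Real.measurable_log.comp S.mv) (S.mvx.div S.mv) (S.mux.div S.mv) S.mgx
    (fun x => (S.tv x).log fun t => (S.v_pos x t).ne') S.tu
    (fun x t h => (S.dtv x t h).log (S.v_pos x t).ne') S.dtu hs S.su
    (S.lvd S.lvx S.mvx) S.lu S.lgx S.lut
  have i1 := int_mul (S.lvd S.lvx S.mvx) S.lpx
  have i2 := int_mul S.lu S.lut
  have i3 := int_mul S.lu S.lgx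
  have e' := integral_eq_comb (F := fun p : ℝ × ℝ =>
    (P.μ * (S.vx p.1 p.2 / S.v p.1 p.2) - S.u p.1 p.2) * (P.μ * (S.uxx p.1 p.2 / S.v p.1 p.2
      - S.ux p.1 p.2 * S.vx p.1 p.2 / S.v p.1 p.2 ^ 2) - S.ut p.1 p.2))
    (P.μ * P.R) 1 (-P.μ) 0 i1 i2 i3 i3 (fun p => by simp only [PreFlow.ut]; ring)
  rw [e, e', S.parts_g, S.u_energy]
  ring

set_option maxHeartbeats 1000000 in
/-- The `L²` balance of the effective momentum `μ v_x/v - u`. -/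
lemma exists_vx_const (P : Par) : ∃ C, 0 < C ∧ ∀ T (S : NSFlow P T) (Θ : ℝ), 1 ≤ Θ →
    (∀ x t, S.θ x t ≤ Θ) → ∫ x, S.vx x T ^ 2 ≤ C * Θ ∧
      ∫ p, S.vx p.1 p.2 * (S.θ p.1 p.2 * S.vx p.1 p.2) ∂(stMeas T) ≤ C * Θ := by
  obtain ⟨C₀, hC₀, h₀⟩ := exists_energy_const P
  obtain ⟨C₂, hC₂, h₂⟩ := exists_ux_const P
  have hμ := P.hμ; have hR := P.hR; have hK := P.Kpos
  set D := 2 * P.μ ^ 2 * (P.K ^ 2 * P.M ^ 2) + 2 * P.M ^ 2 + P.μ * P.R * P.K * C₀ + C₀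
    + 2 * (P.μ * (P.K * C₂)) with hD
  have hDp : 0 < D := by positivity
  refine ⟨P.K ^ 2 / P.μ ^ 2 * (2 * D + 2 * C₀) + P.K ^ 3 / (P.μ * P.R) * D, by positivity,
    fun T S Θ hΘ hS => ?_⟩
  have key := S.effective_energy
  obtain ⟨b1, -, b3, -⟩ := h₀ T S
  have b4 := h₂ T S
  have iI := int_mul S.lvx (S.lmθ S.lvx S.mvx)
  have iL := int_sq (S.lθd S.lθx S.mθx)
  have i1 := int_mul (S.lvd S.lvx S.mvx) S.lpx
  have s1 := integral_le_comb (-(1 / 2 * (P.K⁻¹) ^ 3)) (1 / 2 * P.K * Θ) 0 0 i1 iI iL iL iL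
    (fun p => by
      have hw := S.inv_v_pos p.1 p.2
      have hw1 := S.inv_v_le p.1 p.2
      have hw2 := S.le_inv_v p.1 p.2
      have ht := S.θ_pos p.1 p.2
      have ht' := hS p.1 p.2
      simp only [div_eq_mul_inv, ← inv_pow]
      generalize (S.v p.1 p.2)⁻¹ = w at *
      generalize S.vx p.1 p.2 = a at *
      generalize S.θ p.1 p.2 = θ at *
      have hb : S.θx p.1 p.2 = θ * (S.θx p.1 p.2 * θ⁻¹) := by field_simp
      generalize S.θx p.1 p.2 * θ⁻¹ = b at *
      rw [hb]
      have k1 : (P.K⁻¹) ^ 3 ≤ w ^ 3 := pow_le_pow_left₀ (inv_pos.2 hK).le hw2 3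
      have k2 : (P.K⁻¹) ^ 3 * (a * (θ * a)) ≤ w ^ 3 * (a * (θ * a)) :=
        mul_le_mul_of_nonneg_right k1 (by nlinarith [sq_nonneg a])
      have k3 : w * θ * b ^ 2 ≤ P.K * Θ * b ^ 2 :=
        mul_le_mul_of_nonneg_right (mul_le_mul hw1 ht' ht.le hK.le) (sq_nonneg b)
      have k4 : 0 ≤ w * θ * (w * a - b) ^ 2 := by positivity
      nlinarith)
  have i2 := int_mul S.lux (S.lvd S.lux S.mux)
  have i3 := int_sq S.lux
  have s2 := integral_le_comb P.K 0 0 0 i2 i3 i3 i3 i3 (fun p => by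
    have := mul_le_mul_of_nonneg_right (S.inv_v_le p.1 p.2) (sq_nonneg (S.ux p.1 p.2))
    simp only [div_eq_mul_inv]; nlinarith)
  have hs : ∀ t, MemLp (fun x => S.vx x t / S.v x t) 2 volume := fun t =>
    memLp_of_bound P.K (S.svx t) ((S.cvx t).div (S.cv t)
      fun x => (S.v_pos x t).ne').aestronglyMeasurable fun x => by
        rw [abs_div, div_eq_inv_mul, ← abs_inv]
        exact mul_le_mul_of_nonneg_right (S.abs_inv_v x t) (abs_nonneg _)
  have jE := fun t => int_sq (((hs t).const_mul P.μ).sub (S.su t))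
  have jv := fun t => int_sq (S.svx t)
  have ju := fun t => int_sq (S.su t)
  have s3 := integral_le_comb (2 * P.μ ^ 2 * P.K ^ 2) 2 0 0 (jE 0) (jv 0) (ju 0) (ju 0) (ju 0)
    (fun x => by
      have k : (S.vx x 0 / S.v x 0) ^ 2 ≤ P.K ^ 2 * S.vx x 0 ^ 2 := by
        rw [div_eq_inv_mul, mul_pow]
        exact mul_le_mul_of_nonneg_right
          (pow_le_pow_left₀ (S.inv_v_pos x 0).le (S.inv_v_le x 0) 2) (sq_nonneg _)
      simp only [Pi.sub_apply]
      nlinarith [sq_nonneg (P.μ * (S.vx x 0 / S.v x 0) + S.u x 0),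
        mul_le_mul_of_nonneg_left k (sq_nonneg P.μ)])
  have s4 := integral_le_comb (P.K ^ 2 / P.μ ^ 2 * 2) (P.K ^ 2 / P.μ ^ 2 * 2) 0 0 (jv T) (jE T)
    (ju T) (ju T) (ju T) (fun x => by
      have hv := S.v_pos x T
      have k : S.vx x T ^ 2 ≤ P.K ^ 2 * (S.vx x T / S.v x T) ^ 2 := by
        have : S.vx x T = S.v x T * (S.vx x T / S.v x T) := by field_simp
        conv_lhs => rw [this, mul_pow]
        exact mul_le_mul_of_nonneg_right (pow_le_pow_left₀ hv.le (S.v_up x T) 2) (sq_nonneg _)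
      refine k.trans ?_
      simp only [Pi.sub_apply]
      have : (S.vx x T / S.v x T) ^ 2 ≤ (2 * (P.μ * (S.vx x T / S.v x T) - S.u x T) ^ 2
          + 2 * S.u x T ^ 2) / P.μ ^ 2 := by
        rw [le_div_iff₀ (by positivity)]
        nlinarith [sq_nonneg (P.μ * (S.vx x T / S.v x T) - 2 * S.u x T)]
      calc _ ≤ _ := mul_le_mul_of_nonneg_left this (sq_nonneg P.K)
        _ = _ := by ring)
  have nI : 0 ≤ ∫ p, S.vx p.1 p.2 * (S.θ p.1 p.2 * S.vx p.1 p.2) ∂(stMeas T) :=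
    integral_nonneg fun p => by
      have := mul_nonneg (S.θ_pos p.1 p.2).le (sq_nonneg (S.vx p.1 p.2))
      show 0 ≤ S.vx p.1 p.2 * (S.θ p.1 p.2 * S.vx p.1 p.2)
      nlinarith
  have nE : 0 ≤ ∫ x, (P.μ * (S.vx x T / S.v x T) - S.u x T) ^ 2 :=
    integral_nonneg fun x => sq_nonneg _
  have nu : 0 ≤ ∫ x, S.u x 0 ^ 2 := integral_nonneg fun x => sq_nonneg _
  have a1 := S.ivx
  have a2 := S.iu
  simp only [Pi.sub_apply] at s1 s2 s3 s4
  generalize (∫ p, S.vx p.1 p.2 * (S.θ p.1 p.2 * S.vx p.1 p.2) ∂(stMeas T)) = I at *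
  generalize (∫ x, (P.μ * (S.vx x T / S.v x T) - S.u x T) ^ 2) = E at *
  generalize (∫ x, (P.μ * (S.vx x 0 / S.v x 0) - S.u x 0) ^ 2) = E0 at *
  generalize (∫ x, S.u x 0 ^ 2) = u0 at *
  generalize (∫ x, S.u x T ^ 2) = uT at *
  generalize (∫ x, S.vx x 0 ^ 2) = v0 at *
  generalize (∫ x, S.vx x T ^ 2) = vT at *
  generalize (∫ p, S.ux p.1 p.2 * (S.ux p.1 p.2 / S.v p.1 p.2) ∂(stMeas T)) = X at *
  generalize (∫ p, S.ux p.1 p.2 ^ 2 ∂(stMeas T)) = Y at *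
  generalize (∫ p, (S.θx p.1 p.2 / S.θ p.1 p.2) ^ 2 ∂(stMeas T)) = L at *
  generalize (∫ p, S.vx p.1 p.2 / S.v p.1 p.2 * (S.θx p.1 p.2 / S.v p.1 p.2
          - S.θ p.1 p.2 * S.vx p.1 p.2 / S.v p.1 p.2 ^ 2) ∂(stMeas T)) = J at *
  have hE : E + P.μ * P.R * (P.K⁻¹ ^ 3 * I) ≤ D * Θ := by
    have c1 : P.μ * P.R * J ≤ P.μ * P.R * (-(1 / 2 * (P.K⁻¹) ^ 3) * I + 1 / 2 * P.K * Θ * L) :=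
      mul_le_mul_of_nonneg_left (by linarith) (by positivity)
    have c2 : P.μ * X ≤ P.μ * (P.K * C₂) :=
      mul_le_mul_of_nonneg_left (by nlinarith) hμ.le
    have c3 : 2 * P.μ ^ 2 * P.K ^ 2 * v0 ≤ 2 * P.μ ^ 2 * P.K ^ 2 * P.M ^ 2 :=
      mul_le_mul_of_nonneg_left a1 (by positivity)
    have c4 : P.μ * P.R * P.K * Θ * L ≤ P.μ * P.R * P.K * Θ * C₀ :=
      mul_le_mul_of_nonneg_left b3 (by positivity)
    have c5 : 0 ≤ (2 * P.μ ^ 2 * (P.K ^ 2 * P.M ^ 2) + 2 * P.M ^ 2 + C₀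
      + 2 * (P.μ * (P.K * C₂))) * (Θ - 1) := mul_nonneg (by positivity) (by linarith)
    rw [hD]
    nlinarith
  have nT : 0 ≤ P.μ * P.R * (P.K⁻¹ ^ 3 * I) := by positivity
  constructor
  · have : vT ≤ P.K ^ 2 / P.μ ^ 2 * (2 * (D * Θ) + 2 * C₀ * Θ) := by
      have : P.K ^ 2 / P.μ ^ 2 * (2 * E + 2 * uT) ≤ P.K ^ 2 / P.μ ^ 2 * (2 * (D * Θ) + 2 * C₀ * Θ) :=
        mul_le_mul_of_nonneg_left (by nlinarith) (by positivity)
      linarith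
    have : 0 ≤ P.K ^ 3 / (P.μ * P.R) * D * Θ := by positivity
    linarith
  · have : I = P.K ^ 3 / (P.μ * P.R) * (P.μ * P.R * (P.K⁻¹ ^ 3 * I)) := by field_simp
    have h : P.K ^ 3 / (P.μ * P.R) * (P.μ * P.R * (P.K⁻¹ ^ 3 * I))
        ≤ P.K ^ 3 / (P.μ * P.R) * (D * Θ) :=
      mul_le_mul_of_nonneg_left (by linarith) (by positivity)
    have : 0 ≤ P.K ^ 2 / P.μ ^ 2 * (2 * D + 2 * C₀) * Θ := by positivity
    linarith

end NSFlow

/-! ### The gradient of the velocity -/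

namespace NSFlow

/-- `exists_vx_const` at all intermediate times. -/
lemma exists_vx_unif (P : Par) : ∃ C, 0 < C ∧ ∀ T (S : NSFlow P T) (Θ : ℝ), 1 ≤ Θ →
    (∀ x t, S.θ x t ≤ Θ) → (∀ t ∈ Icc 0 T, ∫ x, S.vx x t ^ 2 ≤ C * Θ) ∧
      ∫ p, S.vx p.1 p.2 * (S.θ p.1 p.2 * S.vx p.1 p.2) ∂(stMeas T) ≤ C * Θ := by
  obtain ⟨C, hC, h⟩ := exists_vx_const P
  refine ⟨C + P.M ^ 2, by positivity, fun T S Θ hΘ hS => ⟨fun t ht => ?_, ?_⟩⟩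
  · rcases ht.1.eq_or_lt with h0 | h0
    · rw [← h0]
      nlinarith [S.ivx, sq_nonneg P.M]
    · have := (h t (S.restrict h0 ht.2) Θ hΘ hS).1
      change ∫ x, S.vx x t ^ 2 ≤ C * Θ at this
      nlinarith [sq_nonneg P.M]
  · nlinarith [(h T S Θ hΘ hS).2, sq_nonneg P.M]

set_option maxHeartbeats 1000000 in
/-- The momentum equation tested with `u_xx`. -/
lemma exists_uxx_const (P : Par) : ∃ C, 0 < C ∧ ∀ T (S : NSFlow P T) (Θ : ℝ), 1 ≤ Θ →
    (∀ x t, S.θ x t ≤ Θ) → ∫ x, S.ux x T ^ 2 ≤ C * Θ ^ 2 ∧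
      ∫ p, S.uxx p.1 p.2 ^ 2 ∂(stMeas T) ≤ C * Θ ^ 2 := by
  obtain ⟨C₁, hC₁, h₁⟩ := exists_vx_unif P
  obtain ⟨C₂, hC₂, h₂⟩ := exists_ux_const P
  obtain ⟨C₃, hC₃, h₃⟩ := exists_θx_const P
  have hμ := P.hμ; have hR := P.hR; have hK := P.Kpos; have hM := P.hM
  obtain ⟨c, hc⟩ : ∃ c, c = P.μ * P.K⁻¹ := ⟨_, rfl⟩
  have hcp : 0 < c := by rw [hc]; positivity
  obtain ⟨a₁, ha₁⟩ : ∃ a, a = 3 * P.μ * P.K ^ 3 := ⟨_, rfl⟩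
  have hp₁ : 0 < a₁ := by rw [ha₁]; positivity
  obtain ⟨a₂, ha₂⟩ : ∃ a, a = 3 * P.R ^ 2 * P.K / P.μ := ⟨_, rfl⟩
  have hp₂ : 0 < a₂ := by rw [ha₂]; positivity
  obtain ⟨a₃, ha₃⟩ : ∃ a, a = 3 * P.R ^ 2 * P.K ^ 3 / P.μ := ⟨_, rfl⟩
  have hp₃ : 0 < a₃ := by rw [ha₃]; positivity
  set D := P.M ^ 2 + a₂ * C₃ + a₃ * C₁ + 2 * a₁ ^ 2 * C₁ ^ 2 * C₂ / c with hD
  have hDp : 0 < D := by positivity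
  refine ⟨D + 2 / c * D, by positivity, fun T S Θ hΘ hS => ?_⟩
  have hΘp : 0 < Θ := by linarith
  have key := gradient_identity (f := S.u) (f' := S.ux) (f'' := S.uxx) (g := S.ut) S.hT.le
    S.du S.dux S.cuxx S.cut S.mu S.mux S.muxx S.meas_ut S.tu S.dtu S.sux S.lux S.luxx S.lut
  have b2 := h₂ T S
  have b3 := h₃ T S Θ hΘ hS
  obtain ⟨b1, b4⟩ := h₁ T S Θ hΘ hS
  have pb := (product_bound (f := S.ux) (f' := S.uxx) (g := S.vx) (T := T) (A := C₁ * Θ)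
    (by positivity) S.dux S.mux S.muxx S.mvx S.lux S.luxx (fun t _ => S.svx t) b1
    (ε := c / (2 * a₁ * C₁ * Θ)) (by positivity)).2
  have iG := (int_mul S.lut S.luxx).neg
  have iU := int_sq S.luxx
  have iP := int_sq S.lux_vx
  have iQ := int_sq S.lθx
  have iI := int_mul S.lvx (S.lmθ S.lvx S.mvx)
  have s1 := integral_le_comb (-(c / 2)) (a₁ / 2) (a₂ / 2) (a₃ / 2 * Θ) iG iU iP iQ iI
    (fun p => by
      have hw := S.inv_v_pos p.1 p.2
      have hw1 := S.inv_v_le p.1 p.2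
      have hw2 := S.le_inv_v p.1 p.2
      have ht := S.θ_pos p.1 p.2
      have ht' := hS p.1 p.2
      simp only [Pi.neg_apply, PreFlow.ut, div_eq_mul_inv, ← inv_pow]
      generalize (S.v p.1 p.2)⁻¹ = w at *
      generalize S.vx p.1 p.2 = a at *
      generalize S.ux p.1 p.2 = b at *
      generalize S.uxx p.1 p.2 = d at *
      generalize S.θx p.1 p.2 = e at *
      generalize S.θ p.1 p.2 = θ at *
      have hw3 : w ^ 3 ≤ P.K ^ 3 := pow_le_pow_left₀ hw.le hw1 3
      have k1 : c * d ^ 2 ≤ P.μ * w * d ^ 2 := by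
        rw [hc]; gcongr
      have k2 : 3 * P.μ * w ^ 3 * (b * a) ^ 2 ≤ a₁ * (b * a) ^ 2 := by
        rw [ha₁]; gcongr
      have k3 : 3 * P.R ^ 2 * w / P.μ * e ^ 2 ≤ a₂ * e ^ 2 := by
        rw [ha₂]; gcongr
      have k4 : 3 * P.R ^ 2 * w ^ 3 / P.μ * (θ * a) ^ 2 ≤ a₃ * Θ * (a * (θ * a)) := by
        rw [ha₃]
        calc 3 * P.R ^ 2 * w ^ 3 / P.μ * (θ * a) ^ 2
            = 3 * P.R ^ 2 * w ^ 3 / P.μ * θ * (θ * a ^ 2) := by ring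
          _ ≤ 3 * P.R ^ 2 * P.K ^ 3 / P.μ * Θ * (θ * a ^ 2) := by gcongr
          _ = _ := by ring
      -- Young's inequality for the product of `u_xx` and the lower order terms of `u_t`
      have y : -2 * ((P.μ * (d * w - b * a * w ^ 2) - P.R * (e * w - θ * a * w ^ 2)) * d)
          ≤ -(P.μ * w * d ^ 2) + (3 * P.μ * w ^ 3 * (b * a) ^ 2 + 3 * P.R ^ 2 * w / P.μ * e ^ 2
            + 3 * P.R ^ 2 * w ^ 3 / P.μ * (θ * a) ^ 2) := by
        have z1 : 0 ≤ w / P.μ * (P.μ * d - (P.μ * w * b * a + P.R * e - P.R * w * θ * a)) ^ 2 := by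
          positivity
        have z2 : 0 ≤ w / P.μ * ((P.μ * w * b * a - P.R * e) ^ 2
          + (P.μ * w * b * a + P.R * w * θ * a) ^ 2 + (P.R * e + P.R * w * θ * a) ^ 2) := by
          positivity
        have z3 := add_nonneg z1 z2
        have : w / P.μ * (P.μ * d - (P.μ * w * b * a + P.R * e - P.R * w * θ * a)) ^ 2
          + w / P.μ * ((P.μ * w * b * a - P.R * e) ^ 2
          + (P.μ * w * b * a + P.R * w * θ * a) ^ 2 + (P.R * e + P.R * w * θ * a) ^ 2)
          = -(P.μ * w * d ^ 2) + (3 * P.μ * w ^ 3 * (b * a) ^ 2 + 3 * P.R ^ 2 * w / P.μ * e ^ 2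
            + 3 * P.R ^ 2 * w ^ 3 / P.μ * (θ * a) ^ 2)
            + 2 * ((P.μ * (d * w - b * a * w ^ 2) - P.R * (e * w - θ * a * w ^ 2)) * d) := by
          field_simp
          ring
        linarith
      linarith)
  simp only [Pi.neg_apply, integral_neg] at s1
  have nE : 0 ≤ ∫ x, S.ux x T ^ 2 := integral_nonneg fun x => sq_nonneg _
  have nU : 0 ≤ ∫ p, S.uxx p.1 p.2 ^ 2 ∂(stMeas T) := integral_nonneg fun x => sq_nonneg _
  have a0 := S.iux
  generalize (∫ x, S.ux x T ^ 2) = E at *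
  generalize (∫ x, S.ux x 0 ^ 2) = E0 at *
  generalize (∫ p, S.uxx p.1 p.2 ^ 2 ∂(stMeas T)) = U at *
  generalize (∫ p, S.ux p.1 p.2 ^ 2 ∂(stMeas T)) = Y at *
  generalize (∫ p, S.θx p.1 p.2 ^ 2 ∂(stMeas T)) = Q at *
  generalize (∫ p, (S.ux p.1 p.2 * S.vx p.1 p.2) ^ 2 ∂(stMeas T)) = W at *
  generalize (∫ p, S.vx p.1 p.2 * (S.θ p.1 p.2 * S.vx p.1 p.2) ∂(stMeas T)) = I at *
  generalize (∫ p, S.ut p.1 p.2 * S.uxx p.1 p.2 ∂(stMeas T)) = G at *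
  have t1 : a₁ * W ≤ 2 * a₁ ^ 2 * C₁ ^ 2 * C₂ / c * Θ ^ 2 + c / 2 * U := by
    calc a₁ * W ≤ a₁ * (C₁ * Θ * ((c / (2 * a₁ * C₁ * Θ))⁻¹ * Y + c / (2 * a₁ * C₁ * Θ) * U)) := by
          gcongr
      _ = 2 * a₁ ^ 2 * C₁ ^ 2 * Y / c * Θ ^ 2 + c / 2 * U := by field_simp
      _ ≤ _ := by gcongr
  have hΘ2 : Θ ≤ Θ ^ 2 := by nlinarith
  have t2 : a₂ * Q ≤ a₂ * C₃ * Θ ^ 2 := by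
    calc a₂ * Q ≤ a₂ * (C₃ * Θ) := by gcongr
      _ ≤ a₂ * (C₃ * Θ ^ 2) := by gcongr
      _ = _ := by ring
  have t3 : a₃ * Θ * I ≤ a₃ * C₁ * Θ ^ 2 := by
    calc a₃ * Θ * I ≤ a₃ * Θ * (C₁ * Θ) := by gcongr
      _ = _ := by ring
  have t4 : E0 ≤ P.M ^ 2 * Θ ^ 2 := by nlinarith [sq_nonneg P.M]
  have tot : E + c / 2 * U ≤ D * Θ ^ 2 := by rw [hD]; linarith
  have n1 : 0 ≤ c / 2 * U := by positivity
  have n2 : 0 ≤ D * Θ ^ 2 := by positivity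
  have n3 : 0 ≤ 2 / c * D * Θ ^ 2 := by positivity
  refine ⟨by linarith, ?_⟩
  calc U = 2 / c * (c / 2 * U) := by field_simp
    _ ≤ 2 / c * (D * Θ ^ 2) :=
      mul_le_mul_of_nonneg_left (by linarith) (by positivity)
    _ ≤ _ := by linarith

/-- `exists_uxx_const` at all intermediate times. -/
lemma exists_uxx_unif (P : Par) : ∃ C, 0 < C ∧ ∀ T (S : NSFlow P T) (Θ : ℝ), 1 ≤ Θ →
    (∀ x t, S.θ x t ≤ Θ) → (∀ t ∈ Icc 0 T, ∫ x, S.ux x t ^ 2 ≤ C * Θ ^ 2) ∧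
      ∫ p, S.uxx p.1 p.2 ^ 2 ∂(stMeas T) ≤ C * Θ ^ 2 := by
  obtain ⟨C, hC, h⟩ := exists_uxx_const P
  refine ⟨C + P.M ^ 2, by positivity, fun T S Θ hΘ hS => ?_⟩
  have hΘ2 : 1 ≤ Θ ^ 2 := by nlinarith
  refine ⟨fun t ht => ?_, ?_⟩
  · rcases ht.1.eq_or_lt with h0 | h0
    · rw [← h0]
      nlinarith [S.iux, sq_nonneg P.M]
    · have := (h t (S.restrict h0 ht.2) Θ hΘ hS).1
      change ∫ x, S.ux x t ^ 2 ≤ C * Θ ^ 2 at this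
      nlinarith [sq_nonneg P.M]
  · nlinarith [(h T S Θ hΘ hS).2, sq_nonneg P.M]

end NSFlow

/-! ### The gradient of the temperature -/

namespace NSFlow

set_option maxHeartbeats 1000000 in
/-- The energy equation tested with `θ_xx`. -/
lemma exists_θxx_const (P : Par) : ∃ C, 0 < C ∧ ∀ T (S : NSFlow P T) (Θ : ℝ), 1 ≤ Θ →
    (∀ x t, S.θ x t ≤ Θ) → ∫ x, S.θx x T ^ 2 ≤ C * Θ ^ 3 ∧
      ∫ p, S.θxx p.1 p.2 ^ 2 ∂(stMeas T) ≤ C * Θ ^ 3 := by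
  obtain ⟨C₁, hC₁, h₁⟩ := exists_vx_unif P
  obtain ⟨C₂, hC₂, h₂⟩ := exists_ux_const P
  obtain ⟨C₃, hC₃, h₃⟩ := exists_θx_const P
  obtain ⟨C₄, hC₄, h₄⟩ := exists_uxx_unif P
  have hμ := P.hμ; have hR := P.hR; have hK := P.Kpos; have hM := P.hM; have hκ := P.hκ
  have hcv := P.hcv
  obtain ⟨c, hc⟩ : ∃ c, c = P.κ * P.K⁻¹ := ⟨_, rfl⟩
  have hcp : 0 < c := by rw [hc]; positivity
  obtain ⟨a₁, ha₁⟩ : ∃ a, a = 3 * P.κ * P.K ^ 3 := ⟨_, rfl⟩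
  have hp₁ : 0 < a₁ := by rw [ha₁]; positivity
  obtain ⟨a₂, ha₂⟩ : ∃ a, a = 3 * P.μ ^ 2 * P.K / P.κ := ⟨_, rfl⟩
  have hp₂ : 0 < a₂ := by rw [ha₂]; positivity
  obtain ⟨a₃, ha₃⟩ : ∃ a, a = 3 * P.R ^ 2 * P.K / P.κ := ⟨_, rfl⟩
  have hp₃ : 0 < a₃ := by rw [ha₃]; positivity
  set D := P.cv * P.M ^ 2 + 2 * a₁ ^ 2 * C₁ ^ 2 * C₃ / c + a₂ * (C₄ * (C₂ + C₄)) + a₃ * C₂ with hD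
  have hDp : 0 < D := by positivity
  refine ⟨D / P.cv + 2 / c * D, by positivity, fun T S Θ hΘ hS => ?_⟩
  have hΘp : 0 < Θ := by linarith
  have key := gradient_identity (f := S.θ) (f' := S.θx) (f'' := S.θxx) (g := S.θt) S.hT.le
    S.dθ S.dθx S.cθxx S.cθt S.mθ S.mθx S.mθxx S.meas_θt S.tθ S.dtθ S.sθx S.lθx S.lθxx S.lθt
  have b2 := h₂ T S
  have b3 := h₃ T S Θ hΘ hS
  obtain ⟨b1, -⟩ := h₁ T S Θ hΘ hS
  obtain ⟨b4, b5⟩ := h₄ T S Θ hΘ hS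
  have pb := (product_bound (f := S.θx) (f' := S.θxx) (g := S.vx) (T := T) (A := C₁ * Θ)
    (by positivity) S.dθx S.mθx S.mθxx S.mvx S.lθx S.lθxx (fun t _ => S.svx t) b1
    (ε := c / (2 * a₁ * C₁ * Θ)) (by positivity)).2
  have pb' := (product_bound (f := S.ux) (f' := S.uxx) (g := S.ux) (T := T) (A := C₄ * Θ ^ 2)
    (by positivity) S.dux S.mux S.muxx S.mux S.lux S.luxx (fun t _ => S.sux t) b4
    (ε := Θ⁻¹) (by positivity)).2
  have iG := ((int_mul S.lθt S.lθxx).const_mul P.cv).neg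
  have iU := int_sq S.lθxx
  have iP := int_sq S.lθx_vx
  have iZ := int_sq S.lux_ux
  have iY := int_sq S.lux
  have s1 := integral_le_comb (-(c / 2)) (a₁ / 2) (a₂ / 2) (a₃ / 2 * Θ ^ 2) iG iU iP iZ iY
    (fun p => by
      have hw := S.inv_v_pos p.1 p.2
      have hw1 := S.inv_v_le p.1 p.2
      have hw2 := S.le_inv_v p.1 p.2
      have ht := S.θ_pos p.1 p.2
      have ht' := hS p.1 p.2
      have eq : P.cv * S.θt p.1 p.2 = P.κ * (S.θxx p.1 p.2 * (S.v p.1 p.2)⁻¹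
          - S.θx p.1 p.2 * S.vx p.1 p.2 * (S.v p.1 p.2)⁻¹ ^ 2)
          + P.μ * S.ux p.1 p.2 ^ 2 * (S.v p.1 p.2)⁻¹
          - P.R * S.θ p.1 p.2 * S.ux p.1 p.2 * (S.v p.1 p.2)⁻¹ := by
        unfold PreFlow.θt
        field_simp
      simp only [Pi.neg_apply, ← mul_assoc]
      rw [eq]
      generalize (S.v p.1 p.2)⁻¹ = w at *
      generalize S.vx p.1 p.2 = a at *
      generalize S.ux p.1 p.2 = b at *
      generalize S.θxx p.1 p.2 = d at *
      generalize S.θx p.1 p.2 = e at *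
      generalize S.θ p.1 p.2 = θ at *
      clear eq
      have hw3 : w ^ 3 ≤ P.K ^ 3 := pow_le_pow_left₀ hw.le hw1 3
      have k1 : c * d ^ 2 ≤ P.κ * w * d ^ 2 := by
        rw [hc]; gcongr
      have k2 : 3 * P.κ * w ^ 3 * (e * a) ^ 2 ≤ a₁ * (e * a) ^ 2 := by
        rw [ha₁]; gcongr
      have k3 : 3 * P.μ ^ 2 * w / P.κ * (b * b) ^ 2 ≤ a₂ * (b * b) ^ 2 := by
        rw [ha₂]; gcongr
      have k4 : 3 * P.R ^ 2 * w / P.κ * (θ * b) ^ 2 ≤ a₃ * Θ ^ 2 * b ^ 2 := by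
        rw [ha₃]
        calc 3 * P.R ^ 2 * w / P.κ * (θ * b) ^ 2
            = 3 * P.R ^ 2 * w / P.κ * θ ^ 2 * b ^ 2 := by ring
          _ ≤ 3 * P.R ^ 2 * P.K / P.κ * Θ ^ 2 * b ^ 2 := by gcongr
      -- Young's inequality for the product of `θ_xx` and the lower order terms of `θ_t`
      have y : -2 * ((P.κ * (d * w - e * a * w ^ 2) + P.μ * b ^ 2 * w - P.R * θ * b * w) * d)
          ≤ -(P.κ * w * d ^ 2) + (3 * P.κ * w ^ 3 * (e * a) ^ 2
            + 3 * P.μ ^ 2 * w / P.κ * (b * b) ^ 2 + 3 * P.R ^ 2 * w / P.κ * (θ * b) ^ 2) := by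
        have z1 : 0 ≤ w / P.κ * (P.κ * d - (P.κ * w * e * a - P.μ * b ^ 2 + P.R * θ * b)) ^ 2 := by
          positivity
        have z2 : 0 ≤ w / P.κ * ((P.κ * w * e * a + P.μ * b ^ 2) ^ 2
          + (P.κ * w * e * a - P.R * θ * b) ^ 2 + (P.μ * b ^ 2 + P.R * θ * b) ^ 2) := by
          positivity
        have z3 := add_nonneg z1 z2
        have : w / P.κ * (P.κ * d - (P.κ * w * e * a - P.μ * b ^ 2 + P.R * θ * b)) ^ 2
          + w / P.κ * ((P.κ * w * e * a + P.μ * b ^ 2) ^ 2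
          + (P.κ * w * e * a - P.R * θ * b) ^ 2 + (P.μ * b ^ 2 + P.R * θ * b) ^ 2)
          = -(P.κ * w * d ^ 2) + (3 * P.κ * w ^ 3 * (e * a) ^ 2
            + 3 * P.μ ^ 2 * w / P.κ * (b * b) ^ 2 + 3 * P.R ^ 2 * w / P.κ * (θ * b) ^ 2)
            + 2 * ((P.κ * (d * w - e * a * w ^ 2) + P.μ * b ^ 2 * w - P.R * θ * b * w) * d) := by
          field_simp
          ring
        linarith
      linarith)
  simp only [Pi.neg_apply, integral_neg, integral_const_mul] at s1
  have nE : 0 ≤ ∫ x, S.θx x T ^ 2 := integral_nonneg fun x => sq_nonneg _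
  have nU : 0 ≤ ∫ p, S.θxx p.1 p.2 ^ 2 ∂(stMeas T) := integral_nonneg fun x => sq_nonneg _
  have nY : 0 ≤ ∫ p, S.ux p.1 p.2 ^ 2 ∂(stMeas T) := integral_nonneg fun x => sq_nonneg _
  have a0 := S.iθx
  generalize (∫ x, S.θx x T ^ 2) = E at *
  generalize (∫ x, S.θx x 0 ^ 2) = E0 at *
  generalize (∫ p, S.θxx p.1 p.2 ^ 2 ∂(stMeas T)) = U at *
  generalize (∫ p, S.uxx p.1 p.2 ^ 2 ∂(stMeas T)) = V at *
  generalize (∫ p, S.ux p.1 p.2 ^ 2 ∂(stMeas T)) = Y at *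
  generalize (∫ p, S.θx p.1 p.2 ^ 2 ∂(stMeas T)) = Q at *
  generalize (∫ p, (S.θx p.1 p.2 * S.vx p.1 p.2) ^ 2 ∂(stMeas T)) = W at *
  generalize (∫ p, (S.ux p.1 p.2 * S.ux p.1 p.2) ^ 2 ∂(stMeas T)) = Z at *
  generalize (∫ p, S.θt p.1 p.2 * S.θxx p.1 p.2 ∂(stMeas T)) = G at *
  have hΘ2 : Θ ^ 2 ≤ Θ ^ 3 := pow_le_pow_right₀ hΘ (by norm_num)
  have hΘ3 : 1 ≤ Θ ^ 3 := one_le_pow₀ hΘ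
  have t1 : a₁ * W ≤ 2 * a₁ ^ 2 * C₁ ^ 2 * C₃ / c * Θ ^ 3 + c / 2 * U := by
    calc a₁ * W ≤ a₁ * (C₁ * Θ * ((c / (2 * a₁ * C₁ * Θ))⁻¹ * Q + c / (2 * a₁ * C₁ * Θ) * U)) := by
          gcongr
      _ = 2 * a₁ ^ 2 * C₁ ^ 2 * Q / c * Θ ^ 2 + c / 2 * U := by field_simp
      _ ≤ 2 * a₁ ^ 2 * C₁ ^ 2 * (C₃ * Θ) / c * Θ ^ 2 + c / 2 * U := by gcongr
      _ = _ := by ring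
  have t2 : a₂ * Z ≤ a₂ * (C₄ * (C₂ + C₄)) * Θ ^ 3 := by
    calc a₂ * Z ≤ a₂ * (C₄ * Θ ^ 2 * (Θ⁻¹⁻¹ * Y + Θ⁻¹ * V)) := by gcongr
      _ ≤ a₂ * (C₄ * Θ ^ 2 * (Θ⁻¹⁻¹ * C₂ + Θ⁻¹ * (C₄ * Θ ^ 2))) := by gcongr
      _ = _ := by field_simp
  have t3 : a₃ * Θ ^ 2 * Y ≤ a₃ * C₂ * Θ ^ 3 := by
    calc a₃ * Θ ^ 2 * Y ≤ a₃ * Θ ^ 3 * C₂ := by gcongr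
      _ = _ := by ring
  have t4 : P.cv * E0 ≤ P.cv * P.M ^ 2 * Θ ^ 3 := by
    calc P.cv * E0 ≤ P.cv * P.M ^ 2 := by gcongr
      _ ≤ _ := le_mul_of_one_le_right (by positivity) hΘ3
  have t5 : P.cv * E = P.cv * E0 - 2 * (P.cv * G) := by rw [key]; ring
  have tot : P.cv * E + c / 2 * U ≤ D * Θ ^ 3 := by rw [hD]; linarith
  have n1 : 0 ≤ c / 2 * U := by positivity
  have n2 : 0 ≤ D / P.cv * Θ ^ 3 := by positivity
  have n3 : 0 ≤ 2 / c * D * Θ ^ 3 := by positivity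
  have n4 : 0 ≤ P.cv * E := by positivity
  constructor
  · calc E = P.cv⁻¹ * (P.cv * E) := by field_simp
      _ ≤ P.cv⁻¹ * (D * Θ ^ 3) := mul_le_mul_of_nonneg_left (by linarith) (by positivity)
      _ = D / P.cv * Θ ^ 3 := by ring
      _ ≤ _ := by linarith
  · calc U = 2 / c * (c / 2 * U) := by field_simp
      _ ≤ 2 / c * (D * Θ ^ 3) := mul_le_mul_of_nonneg_left (by linarith) (by positivity)
      _ ≤ _ := by linarith

/-- `exists_θxx_const` at all intermediate times. -/
lemma exists_θxx_unif (P : Par) : ∃ C, 0 < C ∧ ∀ T (S : NSFlow P T) (Θ : ℝ), 1 ≤ Θ →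
    (∀ x t, S.θ x t ≤ Θ) → (∀ t ∈ Icc 0 T, ∫ x, S.θx x t ^ 2 ≤ C * Θ ^ 3) ∧
      ∫ p, S.θxx p.1 p.2 ^ 2 ∂(stMeas T) ≤ C * Θ ^ 3 := by
  obtain ⟨C, hC, h⟩ := exists_θxx_const P
  refine ⟨C + P.M ^ 2, by positivity, fun T S Θ hΘ hS => ?_⟩
  have hΘ2 : 1 ≤ Θ ^ 3 := one_le_pow₀ hΘ
  refine ⟨fun t ht => ?_, ?_⟩
  · rcases ht.1.eq_or_lt with h0 | h0
    · rw [← h0]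
      nlinarith [S.iθx, sq_nonneg P.M]
    · have := (h t (S.restrict h0 ht.2) Θ hΘ hS).1
      change ∫ x, S.θx x t ^ 2 ≤ C * Θ ^ 3 at this
      nlinarith [sq_nonneg P.M]
  · nlinarith [(h T S Θ hΘ hS).2, sq_nonneg P.M]

end NSFlow

/-! ### From classical solutions to flows -/

/-- The projection of `ℝ` onto `[0, T]`, used to freeze a solution outside `[0, T]`. -/
noncomputable def clamp (T t : ℝ) : ℝ := max 0 (min t T)

lemma clamp_nonneg (T t : ℝ) : 0 ≤ clamp T t := le_max_left _ _

lemma clamp_mem {T : ℝ} (hT : 0 ≤ T) (t : ℝ) : clamp T t ∈ Icc 0 T :=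
  ⟨le_max_left _ _, max_le hT (min_le_right _ _)⟩

lemma clamp_eq {T t : ℝ} (ht : t ∈ Icc 0 T) : clamp T t = t := by
  rw [clamp, min_eq_left ht.2, max_eq_right ht.1]

lemma continuous_clamp (T : ℝ) : Continuous (clamp T) :=
  continuous_const.max (continuous_id.min continuous_const)

lemma lintegral_sq_eq {α : Type*} [MeasurableSpace α] {ν : Measure α} (f : α → ℝ) :
    ∫⁻ p, ENNReal.ofReal (f p ^ 2) ∂ν = eLpNorm f 2 ν ^ 2 := by
  have h := eLpNorm_nnreal_pow_eq_lintegral (f := f) (μ := ν) (p := 2) (by norm_num)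
  have e : ((2 : NNReal) : ℝ) = ((2 : ℕ) : ℝ) := by norm_num
  rw [e] at h
  simp only [ENNReal.rpow_natCast] at h
  rw [ENNReal.coe_ofNat] at h
  rw [h]
  refine lintegral_congr fun p => ?_
  rw [← sq_abs, ← Real.norm_eq_abs, ENNReal.ofReal_pow (norm_nonneg _), ofReal_norm]

lemma memLp_of_L2_le {f : ℝ → ℝ} {B : ℝ} (hf : Continuous f) (hB : 0 ≤ B)
    (h : L2 f ≤ ENNReal.ofReal B) : MemLp f 2 volume ∧ ∫ x, f x ^ 2 ≤ B ^ 2 :=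
  memLp_two_of_lintegral_le hf.aestronglyMeasurable (sq_nonneg B) (by
    rw [lintegral_sq_eq, ENNReal.ofReal_pow hB]
    exact pow_le_pow_left' h 2)

lemma meas_of_continuous {f : ℝ → ℝ → ℝ} (hx : ∀ t, Continuous fun x => f x t)
    (ht : ∀ x, Continuous (f x)) : Meas₂ f :=
  measurable_uncurry_of_continuous_of_measurable (u := f) hx fun x => (ht x).measurable

lemma meas_of_hasDerivAt {f f' : ℝ → ℝ → ℝ} (mf : Meas₂ f)
    (hd : ∀ x t, HasDerivAt (fun y => f y t) (f' x t) x)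
    (hc : ∀ t, Continuous fun x => f' x t) : Meas₂ f' := by
  refine measurable_of_tendsto_metrizable
    (f := fun n (p : ℝ × ℝ) => (f (p.1 + stp n) p.2 - f p.1 p.2) / stp n) (fun n => ?_)
    (tendsto_pi_nhds.2 fun p => tendsto_slope (fun y => hd y p.2) (hc p.2) p.1)
  exact ((mf.comp ((measurable_fst.add_const (stp n)).prodMk measurable_snd)).sub mf).div_const _

/-- Consequences of being `C²` in space and differentiable in time for the function frozen outside
`[0, T]`. -/
lemma frozen_regularity {f : ℝ → ℝ → ℝ} {T : ℝ}
    (hx : ∀ t : ℝ, 0 ≤ t → ContDiff ℝ 2 (fun x => f x t))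
    (ht : ∀ x t : ℝ, 0 ≤ t → DifferentiableAt ℝ (fun s => f x s) t) :
    (∀ x t, HasDerivAt (fun y => f y (clamp T t)) (pdx f x (clamp T t)) x) ∧
    (∀ x t, HasDerivAt (fun y => pdx f y (clamp T t))
      (pdx (fun y s => pdx f y s) x (clamp T t)) x) ∧
    (∀ t, Continuous fun x => pdx (fun y s => pdx f y s) x (clamp T t)) ∧
    (∀ x, Continuous fun t => f x (clamp T t)) ∧
    (∀ x, ∀ t ∈ Ioo 0 T, HasDerivAt (fun t => f x (clamp T t)) (pdt f x t) t) ∧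
    (Meas₂ fun x t => f x (clamp T t)) ∧ (Meas₂ fun x t => pdx f x (clamp T t)) ∧
    (Meas₂ fun x t => pdx (fun y s => pdx f y s) x (clamp T t)) := by
  have c2 := fun t => hx (clamp T t) (clamp_nonneg T t)
  have c1 : ∀ t, ContDiff ℝ 1 fun x => pdx f x (clamp T t) := fun t =>
    ((contDiff_succ_iff_deriv (n := 1)).1 (c2 t)).2.2
  have d1 : ∀ x t, HasDerivAt (fun y => f y (clamp T t)) (pdx f x (clamp T t)) x := fun x t =>
    ((c2 t).differentiable (by norm_num) x).hasDerivAt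
  have d2 : ∀ x t, HasDerivAt (fun y => pdx f y (clamp T t))
      (pdx (fun y s => pdx f y s) x (clamp T t)) x := fun x t =>
    ((c1 t).differentiable (by norm_num) x).hasDerivAt
  have k2 : ∀ t, Continuous fun x => pdx (fun y s => pdx f y s) x (clamp T t) := fun t =>
    (c1 t).continuous_deriv le_rfl
  have kt : ∀ x, Continuous fun t => f x (clamp T t) := fun x =>
    continuous_iff_continuousAt.2 fun t =>
      ContinuousAt.comp (g := f x) (ht x (clamp T t) (clamp_nonneg T t)).continuousAt
        (continuous_clamp T).continuousAt
  have m0 := meas_of_continuous (f := fun x t => f x (clamp T t)) (fun t => (c2 t).continuous) kt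
  have m1 := meas_of_hasDerivAt m0 d1 fun t => (c1 t).continuous
  refine ⟨d1, d2, k2, kt, fun x t htt => ?_, m0, m1, meas_of_hasDerivAt m1 d2 k2⟩
  refine (ht x t htt.1.le).hasDerivAt.congr_of_eventuallyEq ?_
  filter_upwards [Ioo_mem_nhds htt.1 htt.2] with s hs
  rw [clamp_eq (Ioo_subset_Icc_self hs)]

lemma pdx_div {f v : ℝ → ℝ → ℝ} {f' v' x t : ℝ} (hf : HasDerivAt (fun y => f y t) f' x)
    (hv : HasDerivAt (fun y => v y t) v' x) (h0 : v x t ≠ 0) :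
    pdx (fun y s => f y s / v y s) x t = f' / v x t - f x t * v' / v x t ^ 2 := by
  unfold pdx
  rw [(hf.fun_div hv h0).deriv]
  field_simp

lemma memLp_frozen {F : ℝ → ℝ → ℝ} {T : ℝ} (hF : Meas₂ fun x t => F x (clamp T t))
    (h : ∫⁻ t in Icc (0 : ℝ) T, L2 (fun x => F x t) ^ 2 < ⊤) :
    LST T fun x t => F x (clamp T t) := by
  have e : ∫⁻ p, ENNReal.ofReal (F p.1 (clamp T p.2) ^ 2) ∂(stMeas T)
      = ∫⁻ t in Icc (0 : ℝ) T, L2 (fun x => F x t) ^ 2 := by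
    rw [stMeas, lintegral_prod_symm _ (hF.pow_const 2).ennreal_ofReal.aemeasurable]
    refine setLIntegral_congr_fun measurableSet_Icc fun t ht => ?_
    simp only [clamp_eq ht]
    exact lintegral_sq_eq _
  exact (memLp_two_of_lintegral_le hF.aestronglyMeasurable ENNReal.toReal_nonneg
    (by rw [e, ENNReal.ofReal_toReal h.ne])).1

/-- The `L²` bounds contained in a bound on the `H¹` norms of the data. -/
lemma bounds_of_H1 {μ κ R cv : ℝ} {v u θ : ℝ → ℝ → ℝ} (h : IsClassicalSolution μ κ R cv v u θ)
    {t B : ℝ} (ht : 0 ≤ t) (hB : 0 ≤ B)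
    (hb : H1 (fun x => v x t - 1) + H1 (fun x => u x t) + H1 (fun x => θ x t - 1)
      ≤ ENNReal.ofReal B) :
    ((MemLp (fun x => v x t - 1) 2 volume ∧ ∫ x, (v x t - 1) ^ 2 ≤ B ^ 2) ∧
      (MemLp (fun x => pdx v x t) 2 volume ∧ ∫ x, pdx v x t ^ 2 ≤ B ^ 2)) ∧
    ((MemLp (fun x => u x t) 2 volume ∧ ∫ x, u x t ^ 2 ≤ B ^ 2) ∧
      (MemLp (fun x => pdx u x t) 2 volume ∧ ∫ x, pdx u x t ^ 2 ≤ B ^ 2)) ∧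
    ((MemLp (fun x => θ x t - 1) 2 volume ∧ ∫ x, (θ x t - 1) ^ 2 ≤ B ^ 2) ∧
      (MemLp (fun x => pdx θ x t) 2 volume ∧ ∫ x, pdx θ x t ^ 2 ≤ B ^ 2)) := by
  have gen : ∀ f : ℝ → ℝ, ContDiff ℝ 2 f → H1 f ≤ ENNReal.ofReal B →
      (MemLp f 2 volume ∧ ∫ x, f x ^ 2 ≤ B ^ 2) ∧
      (MemLp (deriv f) 2 volume ∧ ∫ x, deriv f x ^ 2 ≤ B ^ 2) := fun f hf hf' =>
    ⟨memLp_of_L2_le hf.continuous hB (le_self_add.trans hf'),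
      memLp_of_L2_le (hf.continuous_deriv (by norm_num)) hB (le_add_self.trans hf')⟩
  have e : ∀ f : ℝ → ℝ → ℝ, deriv (fun x => f x t - 1) = fun x => pdx f x t := fun f => by
    ext x; rw [deriv_sub_const]; rfl
  have gv := gen _ ((h.smooth_x_v t ht).sub contDiff_const)
    ((le_self_add.trans le_self_add).trans hb)
  have gu := gen _ (h.smooth_x_u t ht) ((le_add_self.trans le_self_add).trans hb)
  have gθ := gen _ ((h.smooth_x_θ t ht).sub contDiff_const) (le_add_self.trans hb)
  rw [e] at gv gθ
  exact ⟨gv, gu, gθ⟩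

/-- A classical solution, frozen in time outside `[0, T]`, is a flow on `[0, T]`. -/
lemma exists_flow (P : Par) {v u θ : ℝ → ℝ → ℝ}
    (h : IsClassicalSolution P.μ P.κ P.R P.cv v u θ) (hi : InitBounded P.M P.m v u θ)
    (hv : VolBounded P.K v) {T : ℝ} (hT : 0 < T) :
    ∃ S : NSFlow P T, S.θ = (fun x t => θ x (clamp T t)) ∧
      S.θx = (fun x t => pdx θ x (clamp T t)) ∧
      S.θxx = fun x t => pdx (fun y s => pdx θ y s) x (clamp T t) := by
  obtain ⟨dv, dvx, -, tv, dtv, mv, mvx, -⟩ :=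
    frozen_regularity (T := T) h.smooth_x_v h.smooth_t_v
  obtain ⟨du, dux, cuxx, tu, dtu, mu, mux, muxx⟩ :=
    frozen_regularity (T := T) h.smooth_x_u h.smooth_t_u
  obtain ⟨dθ, dθx, cθxx, tθ, dtθ, mθ, mθx, mθxx⟩ :=
    frozen_regularity (T := T) h.smooth_x_θ h.smooth_t_θ
  obtain ⟨B', hB'⟩ := h.reg_H1 T hT.le
  obtain ⟨B, hB, hbd⟩ : ∃ B : ℝ, 0 ≤ B ∧ ∀ t ∈ Icc (0 : ℝ) T,
      H1 (fun x => v x t - 1) + H1 (fun x => u x t) + H1 (fun x => θ x t - 1)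
      ≤ ENNReal.ofReal B := ⟨max B' 0, le_max_right _ _, fun t ht =>
    (hB' t ht).trans (ENNReal.ofReal_le_ofReal (le_max_left _ _))⟩
  have bd := fun t => bounds_of_H1 h (clamp_nonneg T t) hB (hbd _ (clamp_mem hT.le t))
  have bi := bounds_of_H1 h le_rfl P.hM.le hi.1
  have c0 : clamp T 0 = 0 := clamp_eq ⟨le_rfl, hT.le⟩
  have reg := h.reg_H2 T hT
  have luxx := memLp_frozen (T := T) muxx (lt_of_le_of_lt (lintegral_mono fun t =>
    (pow_le_pow_left' (le_add_self : _ ≤ H2 fun x => u x t) 2).trans le_self_add) reg)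
  have lθxx := memLp_frozen (T := T) mθxx (lt_of_le_of_lt (lintegral_mono fun t => by
    have e : deriv (deriv fun x => θ x t - 1) = fun x => pdx (fun y s => pdx θ y s) x t := by
      have : deriv (fun x => θ x t - 1) = fun x => pdx θ x t := by
        ext x; rw [deriv_sub_const]; rfl
      rw [this]; rfl
    refine (pow_le_pow_left' (?_ : _ ≤ H2 fun x => θ x t - 1) 2).trans le_add_self
    unfold H2
    rw [e]
    exact le_add_self) reg)
  have vp : ∀ x t, 0 ≤ t → v x t ≠ 0 := fun x t ht => (h.v_pos x t ht).ne'
  let Q : PreFlow P T :=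
    { v := fun x t => v x (clamp T t)
      u := fun x t => u x (clamp T t)
      θ := fun x t => θ x (clamp T t)
      vx := fun x t => pdx v x (clamp T t)
      ux := fun x t => pdx u x (clamp T t)
      θx := fun x t => pdx θ x (clamp T t)
      uxx := fun x t => pdx (fun y s => pdx u y s) x (clamp T t)
      θxx := fun x t => pdx (fun y s => pdx θ y s) x (clamp T t)
      hT := hT
      dv := dv
      du := du
      dux := dux
      dθ := dθ
      dθx := dθx
      cvx := fun t => continuous_iff_continuousAt.2 fun x => (dvx x t).continuousAt
      cuxx := cuxx
      cθxx := cθxx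
      mv := mv
      mu := mu
      mθ := mθ
      mvx := mvx
      mux := mux
      mθx := mθx
      muxx := muxx
      mθxx := mθxx
      tv := tv
      tu := tu
      tθ := tθ
      dtv := fun x t ht => (dtv x t ht).congr_deriv (by
        rw [clamp_eq (Ioo_subset_Icc_self ht)]; exact h.eq_mass x t ht.1.le)
      dtu := fun x t ht => (dtu x t ht).congr_deriv (by
        have hc := clamp_eq (Ioo_subset_Icc_self ht)
        have e1 := dux x t; have e2 := dv x t; have e3 := dθ x t
        rw [hc] at e1 e2 e3
        simp only [hc]
        have e := h.eq_momentum x t ht.1.le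
        rw [pdx_div e1 e2 (vp x t ht.1.le),
          pdx_div (f := fun y s => P.R * θ y s) (e3.const_mul P.R) e2 (vp x t ht.1.le)] at e
        linear_combination e)
      dtθ := fun x t ht => (dtθ x t ht).congr_deriv (by
        have hc := clamp_eq (Ioo_subset_Icc_self ht)
        have e1 := dθx x t; have e2 := dv x t
        rw [hc] at e1 e2
        simp only [hc]
        have e := h.eq_energy x t ht.1.le
        rw [pdx_div e1 e2 (vp x t ht.1.le)] at e
        rw [eq_div_iff P.hcv.ne']
        linear_combination e)
      v_low := fun x t => (hv x _ (clamp_nonneg T t)).1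
      v_up := fun x t => (hv x _ (clamp_nonneg T t)).2
      θ_pos := fun x t => h.θ_pos x _ (clamp_nonneg T t)
      far := fun t => h.farfield_θ _ (clamp_nonneg T t)
      sv := fun t => (bd t).1.1.1
      su := fun t => (bd t).2.1.1.1
      sθ := fun t => (bd t).2.2.1.1
      svx := fun t => (bd t).1.2.1
      sux := fun t => (bd t).2.1.2.1
      sθx := fun t => (bd t).2.2.2.1
      B := B ^ 2
      hB := sq_nonneg B
      bv := fun t => (bd t).1.1.2
      bu := fun t => (bd t).2.1.1.2
      bθ := fun t => (bd t).2.2.1.2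
      bvx := fun t => (bd t).1.2.2
      bux := fun t => (bd t).2.1.2.2
      bθx := fun t => (bd t).2.2.2.2
      luxx := luxx
      lθxx := lθxx
      iv := by rw [c0]; exact bi.1.1.2
      iu := by rw [c0]; exact bi.2.1.1.2
      iθ := by rw [c0]; exact bi.2.2.1.2
      ivx := by rw [c0]; exact bi.1.2.2
      iux := by rw [c0]; exact bi.2.1.2.2
      iθx := by rw [c0]; exact bi.2.2.2.2
      imθ := fun x => by rw [c0]; exact hi.2.2 x }
  obtain ⟨c, hc, hlow⟩ := Q.exists_low
  refine ⟨{ Q with low := ⟨c, hc, fun x t => ?_⟩ }, rfl, rfl, rfl⟩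
  have := hlow (clamp T t) (clamp_mem hT.le t) x
  change c ≤ θ x (clamp T (clamp T t)) at this
  rwa [clamp_eq (clamp_mem hT.le t)] at this

/-! ### The estimate -/

/-- estimate for `∫ θ_x²` and `∫∫ θ_xx²` in terms of `(sup θ)³`. -/
theorem thetax_thetaxx_estimate
    (μ κ R cv M m K : ℝ) (hμ : 0 < μ) (hκ : 0 < κ) (hR : 0 < R) (hcv : 0 < cv)
    (hM : 0 < M) (hm : 0 < m) (hK : 1 ≤ K) :
    ∃ C : ℝ, 0 < C ∧
      ∀ v u θ : ℝ → ℝ → ℝ,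
        IsClassicalSolution μ κ R cv v u θ →
        InitBounded M m v u θ →
        VolBounded K v →
        ∀ T : ℝ, 0 < T →
          (⨆ t ∈ Icc (0 : ℝ) T, ∫⁻ x : ℝ, ENNReal.ofReal (pdx θ x t ^ 2))
            + (∫⁻ t in Icc (0 : ℝ) T, ∫⁻ x : ℝ,
                ENNReal.ofReal (pdx (fun y s => pdx θ y s) x t ^ 2))
          ≤ ENNReal.ofReal C
            + ENNReal.ofReal C
              * (⨆ x : ℝ, ⨆ t ∈ Icc (0 : ℝ) T, ENNReal.ofReal (θ x t)) ^ 3 := by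
  obtain ⟨C, hC, hP⟩ := NSFlow.exists_θxx_unif
    ⟨μ, κ, R, cv, M, m, K, hμ, hκ, hR, hcv, hM, hm, hK⟩
  refine ⟨2 * C, by positivity, fun v u θ h hi hv T hT => ?_⟩
  obtain ⟨S, e0, e1, e2⟩ := exists_flow ⟨μ, κ, R, cv, M, m, K, hμ, hκ, hR, hcv, hM, hm, hK⟩
    h hi hv hT
  set σ := ⨆ x : ℝ, ⨆ t ∈ Icc (0 : ℝ) T, ENNReal.ofReal (θ x t) with hσ
  have le_σ : ∀ x, ∀ t ∈ Icc (0 : ℝ) T, ENNReal.ofReal (θ x t) ≤ σ := fun x t ht =>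
    (le_iSup₂ (f := fun t (_ : t ∈ Icc (0 : ℝ) T) => ENNReal.ofReal (θ x t)) t ht).trans
      (le_iSup (fun x => ⨆ t ∈ Icc (0 : ℝ) T, ENNReal.ofReal (θ x t)) x)
  by_cases top : σ = ⊤
  · rw [top]
    simp [ENNReal.mul_top, hC]
  have h1 : 1 ≤ σ := by
    have f := (ENNReal.continuous_ofReal.tendsto 1).comp (h.farfield_θ 0 le_rfl)
    rw [ENNReal.ofReal_one] at f
    exact le_of_tendsto f (Eventually.of_forall fun x => le_σ x 0 ⟨le_rfl, hT.le⟩)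
  have hΘ : 1 ≤ σ.toReal := by
    rw [← ENNReal.toReal_one]; exact ENNReal.toReal_mono top h1
  have hS : ∀ x t, S.θ x t ≤ σ.toReal := fun x t => by
    rw [e0]
    exact (ENNReal.ofReal_le_iff_le_toReal top).1 (le_σ x _ (clamp_mem hT.le t))
  obtain ⟨r1, r2⟩ := hP T S _ hΘ hS
  have conv : ENNReal.ofReal (C * σ.toReal ^ 3) = ENNReal.ofReal C * σ ^ 3 := by
    rw [ENNReal.ofReal_mul hC.le, ENNReal.ofReal_pow ENNReal.toReal_nonneg,
      ENNReal.ofReal_toReal top]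
  have q1 : (⨆ t ∈ Icc (0 : ℝ) T, ∫⁻ x : ℝ, ENNReal.ofReal (pdx θ x t ^ 2))
      ≤ ENNReal.ofReal C * σ ^ 3 := iSup₂_le fun t ht => by
    have i := int_sq (S.sθx t)
    have r := ENNReal.ofReal_le_ofReal (r1 t ht)
    rw [ofReal_integral_eq_lintegral_ofReal i (Eventually.of_forall fun x => sq_nonneg _), conv,
      e1] at r
    simpa only [clamp_eq ht] using r
  have q2 : (∫⁻ t in Icc (0 : ℝ) T, ∫⁻ x : ℝ,
      ENNReal.ofReal (pdx (fun y s => pdx θ y s) x t ^ 2)) ≤ ENNReal.ofReal C * σ ^ 3 := by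
    have i := int_sq S.lθxx
    have r := ENNReal.ofReal_le_ofReal r2
    rw [ofReal_integral_eq_lintegral_ofReal i (Eventually.of_forall fun x => sq_nonneg _), conv,
      stMeas, lintegral_prod_symm _ (S.mθxx.pow_const 2).ennreal_ofReal.aemeasurable, e2] at r
    refine le_trans (le_of_eq ?_) r
    refine setLIntegral_congr_fun measurableSet_Icc fun t ht => ?_
    simp only [clamp_eq ht]
  calc _ ≤ ENNReal.ofReal C * σ ^ 3 + ENNReal.ofReal C * σ ^ 3 := add_le_add q1 q2
    _ = ENNReal.ofReal (2 * C) * σ ^ 3 := by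
      rw [ENNReal.ofReal_mul (by norm_num), ENNReal.ofReal_ofNat]; ring
    _ ≤ _ := le_add_self
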